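/- Let m > 7, and let G be a finite group with a normal subgroup V such that V is an elementary abelian 2-group of rank t, V is of maximal rank in G, and W = G/V is an elementary abelian 2-group. If G acts freely and continuously on the product (S^m)^t of t copies of the m-sphere, then rank(W) ≤ (m+1)·t. -/

import Mathlib

noncomputable section

/-- The unit sphere `S^m` in `ℝ^{m+1}`. -/
abbrev Sph (m : ℕ) : Type := Metric.sphere (0 : EuclideanSpace ℝ (Fin (m + 1))) 1

/-- The antipodal relation on the sphere `S^m`. -/
def antipodal (m : ℕ) (x y : Sph m) : Prop :=
  (y : EuclideanSpace ℝ (Fin (m + 1))) = (x : EuclideanSpace ℝ (Fin (m + 1))) ∨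
    (y : EuclideanSpace ℝ (Fin (m + 1))) = -(x : EuclideanSpace ℝ (Fin (m + 1)))

/-- Real projective `m`-space: the quotient of `S^m` by the antipodal map,
with the quotient topology. -/
abbrev RP (m : ℕ) : Type := Quot (antipodal m)

/-- A subgroup is an elementary abelian 2-group: every element squares to the
identity (such a subgroup is automatically abelian). -/
def IsElemAbelian2 {G : Type*} [Group G] (A : Subgroup G) : Prop :=
  (∀ a ∈ A, a * a = 1) ∧ ∀ a ∈ A, ∀ b ∈ A, a * b = b * a

/-- A subgroup `V` of `G` has maximal rank if every elementary abelian
2-subgroup `A` of `G` satisfies `|A| ≤ |V|`. -/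
def IsMaximalRank2 {G : Type*} [Group G] (V : Subgroup G) : Prop :=
  ∀ A : Subgroup G, IsElemAbelian2 A → Nat.card A ≤ Nat.card V

namespace Coch

section Basic

variable {X Y L M : Type*} [AddCommGroup L] [AddCommGroup M]

/-- The simplicial coboundary on all tuples at once (the augmented complex); a cochain on
`n` points is a function of lists of length `n`. -/
def d : (List X → L) → List X → L
  | _, [] => 0
  | f, x :: r => f r - d (fun l => f (x :: l)) r

@[simp] theorem d_nil (f : List X → L) : d f [] = 0 := rfl

theorem d_cons (f : List X → L) (x : X) (r : List X) :
    d f (x :: r) = f r - d (fun l => f (x :: l)) r := rfl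

theorem d_add (f g : List X → L) : d (f + g) = d f + d g := by
  funext l
  induction l generalizing f g with
  | nil => simp
  | cons x r ih =>
    have := ih (fun l => f (x :: l)) (fun l => g (x :: l))
    simp only [d_cons, Pi.add_apply] at this ⊢
    have e : (fun l => f (x :: l) + g (x :: l)) =
      (fun l => f (x :: l)) + fun l => g (x :: l) := rfl
    rw [e, this]; abel

theorem d_hom (φ : L →+ M) (f : List X → L) (l : List X) :
    d (fun l => φ (f l)) l = φ (d f l) := by
  induction l generalizing f with
  | nil => simp
  | cons x r ih => simp only [d_cons, map_sub, ih]

/-- The coboundary as a homomorphism. -/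
def dHom : (List X → L) →+ (List X → L) where
  toFun := d
  map_zero' := by
    have := d_add (0 : List X → L) 0
    simpa using this
  map_add' := d_add

@[simp] theorem d_zero : d (0 : List X → L) = 0 := dHom.map_zero
theorem d_sub (f g : List X → L) : d (f - g) = d f - d g := dHom.map_sub f g
theorem d_zsmul (n : ℤ) (f : List X → L) : d (n • f) = n • d f := map_zsmul dHom n f
theorem d_sum {ι : Type*} (s : Finset ι) (f : ι → List X → L) :
    d (∑ i ∈ s, f i) = ∑ i ∈ s, d (f i) := map_sum dHom f s

@[simp] theorem d_d (f : List X → L) : d (d f) = 0 := by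
  funext l
  induction l generalizing f with
  | nil => rfl
  | cons x r ih =>
    have e : (fun l => d f (x :: l)) = f - d (fun l => f (x :: l)) := rfl
    rw [d_cons, e, d_sub]
    simp [ih]

theorem d_map (φ : X → Y) (f : List Y → L) (l : List X) :
    d (fun l => f (l.map φ)) l = d f (l.map φ) := by
  induction l generalizing f with
  | nil => rfl
  | cons x r ih => simp only [d_cons, List.map_cons, ih fun l => f (φ x :: l)]

/-- The value of `d f` on `l` only involves `f` on the sublists of `l` of length one less. -/
theorem d_eq_zero {f : List X → L} {l : List X}
    (h : ∀ l', l'.Sublist l → l'.length + 1 = l.length → f l' = 0) : d f l = 0 := by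
  induction l generalizing f with
  | nil => rfl
  | cons x r ih =>
    rw [d_cons, h r (List.sublist_cons_self x r) rfl, ih, sub_zero]
    intro l' h1 h2
    exact h _ (h1.cons_cons x) (by simpa using h2)

theorem d_congr {f g : List X → L} {l : List X}
    (h : ∀ l', l'.Sublist l → l'.length + 1 = l.length → f l' = g l') : d f l = d g l := by
  have : d (f - g) l = 0 := d_eq_zero fun l' h1 h2 => by simp [h l' h1 h2]
  rw [d_sub] at this
  exact sub_eq_zero.1 this

/-- The cone construction contracts the augmented complex. -/
theorem d_cone (f : List X → L) (x : X) (l : List X) (h : d f (x :: l) = 0) :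
    d (fun l => f (x :: l)) l = f l := by
  rw [d_cons] at h
  exact (sub_eq_zero.1 h).symm

/-- The prism operator between two maps `f` and `g`. -/
def prism (f g : X → Y) : (List Y → L) → List X → L
  | _, [] => 0
  | φ, x :: r => φ (f x :: g x :: r.map g) - prism f g (fun l => φ (f x :: l)) r

theorem prism_nil (f g : X → Y) (φ : List Y → L) : prism f g φ [] = 0 := rfl

theorem prism_cons (f g : X → Y) (φ : List Y → L) (x : X) (r : List X) :
    prism f g φ (x :: r) =
      φ (f x :: g x :: r.map g) - prism f g (fun l => φ (f x :: l)) r := rfl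

theorem prism_add (f g : X → Y) (φ ψ : List Y → L) :
    prism f g (φ + ψ) = prism f g φ + prism f g ψ := by
  funext l
  induction l generalizing φ ψ with
  | nil => simp [prism_nil]
  | cons x r ih =>
    have := ih (fun l => φ (f x :: l)) (fun l => ψ (f x :: l))
    simp only [prism_cons, Pi.add_apply] at this ⊢
    have e : (fun l => φ (f x :: l) + ψ (f x :: l)) =
      (fun l => φ (f x :: l)) + fun l => ψ (f x :: l) := rfl
    rw [e, this]; abel

theorem prism_sub (f g : X → Y) (φ ψ : List Y → L) :
    prism f g (φ - ψ) = prism f g φ - prism f g ψ := by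
  rw [eq_sub_iff_add_eq, ← prism_add, sub_add_cancel]

theorem d_prism (f g : X → Y) (φ : List Y → L) (l : List X) :
    d (prism f g φ) l + prism f g (d φ) l = φ (l.map g) - φ (l.map f) := by
  induction l generalizing φ with
  | nil => simp [prism_nil]
  | cons x r ih =>
    have e1 : (fun l => prism f g φ (x :: l)) =
        (fun l => φ (f x :: g x :: l.map g)) - prism f g (fun l => φ (f x :: l)) := rfl
    have e2 : (fun l => d φ (f x :: l)) = φ - d (fun l => φ (f x :: l)) := rfl
    have e3 := d_map g (fun l => φ (f x :: g x :: l)) r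
    have e4 := ih fun l => φ (f x :: l)
    rw [d_cons, prism_cons, e1, e2, d_sub, prism_sub, Pi.sub_apply, Pi.sub_apply, e3,
      eq_sub_iff_add_eq.2 e4, d_cons, d_cons]
    simp only [List.map_cons]
    abel

theorem prism_eq_zero {f g : X → Y} {φ : List Y → L} {l : List X}
    (h : ∀ l' : List Y, l'.length = l.length + 1 →
      (∀ y ∈ l', ∃ x ∈ l, y = f x ∨ y = g x) → φ l' = 0) : prism f g φ l = 0 := by
  induction l generalizing φ with
  | nil => rfl
  | cons x r ih =>
    rw [prism_cons, h _ (by simp), ih, sub_zero]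
    · intro l' h1 h2
      refine h _ (by simp [h1]) ?_
      intro y hy
      rcases List.mem_cons.1 hy with rfl | hy
      · exact ⟨x, by simp, Or.inl rfl⟩
      · obtain ⟨z, hz, h⟩ := h2 y hy
        exact ⟨z, by simp [hz], h⟩
    · intro y hy
      simp only [List.mem_cons, List.mem_map] at hy
      rcases hy with rfl | rfl | ⟨z, hz, rfl⟩
      · exact ⟨x, by simp, Or.inl rfl⟩
      · exact ⟨x, by simp, Or.inr rfl⟩
      · exact ⟨z, by simp [hz], Or.inr rfl⟩

theorem prism_map {X' Y' : Type*} (f g : X → Y) (f' g' : X' → Y') (a : X' → X) (b : Y' → Y)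
    (hf : ∀ x, f (a x) = b (f' x)) (hg : ∀ x, g (a x) = b (g' x))
    (φ : List Y → L) (l : List X') :
    prism f g φ (l.map a) = prism f' g' (fun l => φ (l.map b)) l := by
  induction l generalizing φ with
  | nil => rfl
  | cons x r ih =>
    have e : r.map (g ∘ a) = r.map (b ∘ g') :=
      List.map_congr_left fun x _ => hg x
    simp only [List.map_cons, prism_cons, hf, hg, ih, List.map_map, e]

/-- The cup product of a cochain `φ` of degree `p` (on `p + 1` points) with an integral one. -/
def cup (p : ℕ) (φ : List X → L) (ψ : List X → ℤ) : List X → L :=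
  fun l => ψ (l.drop p) • φ (l.take (p + 1))

theorem d_cup (p : ℕ) (φ : List X → L) (ψ : List X → ℤ) (l : List X) (hl : p + 2 ≤ l.length) :
    d (cup p φ ψ) l = cup (p + 1) (d φ) ψ l + (-1 : ℤ) ^ p • cup p φ (d ψ) l := by
  induction p generalizing φ l with
  | zero =>
    match l, hl with
    | x :: y :: r, _ =>
      have e := d_hom ((smulAddHom ℤ L).flip (φ [x])) (fun l => ψ (x :: l)) (y :: r)
      simp only [AddMonoidHom.flip_apply, smulAddHom_apply] at e
      simp only [cup, d_cons, List.drop_zero, List.take_succ_cons, List.take_zero, 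
        List.drop_succ_cons, d_nil, zero_add, pow_zero, one_smul, sub_zero] at e ⊢
      rw [e]
      module
  | succ p ih =>
    match l, hl with
    | x :: r, hl =>
      have e1 : (fun l => cup (p + 1) φ ψ (x :: l)) = cup p (fun l => φ (x :: l)) ψ := rfl
      have e2 : cup (p + 1 + 1) (d φ) ψ (x :: r) = cup (p + 1) φ ψ r
        - cup (p + 1) (d fun l => φ (x :: l)) ψ r := by
        simp [cup, d_cons, smul_sub]
      have e3 : cup (p + 1) φ (d ψ) (x :: r) = cup p (fun l => φ (x :: l)) (d ψ) r := rfl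
      rw [d_cons, e1, ih _ _ (by simpa using hl), e2, e3, pow_succ]
      module

theorem cup_add (p : ℕ) (φ φ' : List X → L) (ψ : List X → ℤ) :
    cup p (φ + φ') ψ = cup p φ ψ + cup p φ' ψ := by
  funext l; simp [cup]

theorem cup_sub (p : ℕ) (φ φ' : List X → L) (ψ : List X → ℤ) :
    cup p (φ - φ') ψ = cup p φ ψ - cup p φ' ψ := by
  funext l; simp [cup, smul_sub]

theorem cup_smul (p : ℕ) (a : ℤ) (φ : List X → L) (ψ : List X → ℤ) :
    cup p (a • φ) ψ = a • cup p φ ψ := by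
  funext l; simp [cup, smul_comm a]

theorem add_cup (p : ℕ) (φ : List X → L) (ψ ψ' : List X → ℤ) :
    cup p φ (ψ + ψ') = cup p φ ψ + cup p φ ψ' := by
  funext l; simp [cup, add_smul]

theorem sub_cup (p : ℕ) (φ : List X → L) (ψ ψ' : List X → ℤ) :
    cup p φ (ψ - ψ') = cup p φ ψ - cup p φ ψ' := by
  funext l; simp [cup, sub_smul]

theorem smul_cup (p : ℕ) (a : ℤ) (φ : List X → L) (ψ : List X → ℤ) :
    cup p φ (a • ψ) = a • cup p φ ψ := by
  funext l; simp [cup, mul_smul]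

theorem cup_map (p : ℕ) (φ : List Y → L) (ψ : List Y → ℤ) (a : X → Y) (l : List X) :
    cup p (fun l => φ (l.map a)) (fun l => ψ (l.map a)) l = cup p φ ψ (l.map a) := by
  simp [cup, List.map_take, List.map_drop]

theorem cup_assoc (p q : ℕ) (φ : List X → L) (ψ χ : List X → ℤ) :
    cup (p + q) (cup p φ ψ) χ = cup p φ (cup q ψ χ) := by
  funext l
  simp only [cup, smul_smul, smul_eq_mul, List.take_take, List.drop_take, List.drop_drop]
  congr 3
  · congr 1; omega
  · omega

end Basic

section Pull

variable {X Y Z L : Type*} [AddCommGroup L]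

/-- Pullback of cochains. -/
def pull (φ : X → Y) (f : List Y → L) : List X → L := fun l => f (l.map φ)

theorem pull_add (φ : X → Y) (f g : List Y → L) : pull φ (f + g) = pull φ f + pull φ g := rfl
theorem pull_sub (φ : X → Y) (f g : List Y → L) : pull φ (f - g) = pull φ f - pull φ g := rfl
theorem pull_neg (φ : X → Y) (f : List Y → L) : pull φ (-f) = -pull φ f := rfl
theorem pull_zero (φ : X → Y) : pull φ (0 : List Y → L) = 0 := rfl
theorem pull_smul (φ : X → Y) (a : ℤ) (f : List Y → L) : pull φ (a • f) = a • pull φ f := rfl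
theorem pull_sum {ι : Type*} (φ : X → Y) (s : Finset ι) (f : ι → List Y → L) :
    pull φ (∑ i ∈ s, f i) = ∑ i ∈ s, pull φ (f i) := by
  funext l; simp [pull]
theorem pull_pull (φ : X → Y) (ψ : Y → Z) (f : List Z → L) :
    pull φ (pull ψ f) = pull (fun x => ψ (φ x)) f := by
  funext l; simp only [pull, List.map_map]; rfl
theorem pull_id (f : List X → L) : pull (fun x => x) f = f := by
  funext l; simp [pull]
theorem d_pull (φ : X → Y) (f : List Y → L) : d (pull φ f) = pull φ (d f) :=
  funext fun l => d_map φ f l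
theorem pull_cup (φ : X → Y) (p : ℕ) (f : List Y → L) (g : List Y → ℤ) :
    pull φ (cup p f g) = cup p (pull φ f) (pull φ g) :=
  funext fun l => (cup_map p f g φ l).symm
theorem d_prism_eq (φ ψ : X → Y) (f : List Y → L) :
    d (prism φ ψ f) + prism φ ψ (d f) = pull ψ f - pull φ f :=
  funext fun l => d_prism φ ψ f l

end Pull

section Local

variable {X Y L : Type*} [PseudoMetricSpace X] [PseudoMetricSpace Y] [AddCommGroup L]

/-- A cochain on `n` points is locally zero on `A` if it vanishes on small tuples in `A`. -/
def LZ (A : Set X) (n : ℕ) (f : List X → L) : Prop :=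
  ∃ ε > 0, ∀ l : List X, l.length = n → (∀ x ∈ l, x ∈ A) →
    (∀ x ∈ l, ∀ y ∈ l, dist x y < ε) → f l = 0

/-- Alexander–Spanier cocycles on `n` points of `A`. -/
def Coc (A : Set X) (n : ℕ) (f : List X → L) : Prop := LZ A (n + 1) (d f)

/-- Alexander–Spanier coboundaries (of the unaugmented complex) on `n` points of `A`. -/
def Bd (A : Set X) (n : ℕ) (f : List X → L) : Prop := ∃ η, η [] = 0 ∧ LZ A n (f - d η)

variable {A B : Set X} {n : ℕ} {f g : List X → L}

theorem LZ.of_eq (h : ∀ l : List X, l.length = n → (∀ x ∈ l, x ∈ A) → f l = 0) : LZ A n f :=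
  ⟨1, one_pos, fun l h1 h2 _ => h l h1 h2⟩

theorem LZ.zero : LZ A n (0 : List X → L) := LZ.of_eq fun _ _ _ => rfl

theorem LZ.add (hf : LZ A n f) (hg : LZ A n g) : LZ A n (f + g) := by
  obtain ⟨ε, hε, h⟩ := hf
  obtain ⟨ε', hε', h'⟩ := hg
  refine ⟨min ε ε', lt_min hε hε', fun l h1 h2 h3 => ?_⟩
  have e1 := h l h1 h2 fun x hx y hy => (h3 x hx y hy).trans_le (min_le_left _ _)
  have e2 := h' l h1 h2 fun x hx y hy => (h3 x hx y hy).trans_le (min_le_right _ _)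
  simp [e1, e2]

theorem LZ.smul (a : ℤ) (hf : LZ A n f) : LZ A n (a • f) := by
  obtain ⟨ε, hε, h⟩ := hf
  exact ⟨ε, hε, fun l h1 h2 h3 => by simp [h l h1 h2 h3]⟩

theorem LZ.neg (hf : LZ A n f) : LZ A n (-f) := by simpa using hf.smul (-1)

theorem LZ.sub (hf : LZ A n f) (hg : LZ A n g) : LZ A n (f - g) := by
  simpa [sub_eq_add_neg] using hf.add hg.neg

theorem LZ.sum {ι : Type*} {s : Finset ι} {f : ι → List X → L} (h : ∀ i ∈ s, LZ A n (f i)) :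
    LZ A n (∑ i ∈ s, f i) :=
  Finset.sum_induction f (LZ A n) (fun _ _ => LZ.add) LZ.zero h

theorem LZ.mono (hf : LZ B n f) (h : A ⊆ B) : LZ A n f := by
  obtain ⟨ε, hε, h'⟩ := hf
  exact ⟨ε, hε, fun l h1 h2 h3 => h' l h1 (fun x hx => h (h2 x hx)) h3⟩

theorem LZ.congr (hf : LZ A n f)
    (h : ∀ l : List X, l.length = n → (∀ x ∈ l, x ∈ A) → f l = g l) : LZ A n g := by
  have := hf.sub (LZ.of_eq (f := f - g) fun l h1 h2 => by simp [h l h1 h2])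
  simpa using this

theorem LZ.d (hf : LZ A n f) : LZ A (n + 1) (d f) := by
  obtain ⟨ε, hε, h⟩ := hf
  refine ⟨ε, hε, fun l h1 h2 h3 => d_eq_zero fun l' h4 h5 => ?_⟩
  exact h l' (by omega) (fun x hx => h2 x (h4.subset hx))
    fun x hx y hy => h3 x (h4.subset hx) y (h4.subset hy)

theorem LZ.pull {B : Set Y} {f : List Y → L} {φ : X → Y} (hf : LZ B n f)
    (hφ : UniformContinuousOn φ A) (hm : Set.MapsTo φ A B) : LZ A n (pull φ f) := by
  obtain ⟨ε, hε, h⟩ := hf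
  obtain ⟨δ, hδ, h'⟩ := Metric.uniformContinuousOn_iff.1 hφ ε hε
  refine ⟨δ, hδ, fun l h1 h2 h3 => h _ (by simpa using h1) ?_ ?_⟩
  · intro y hy
    obtain ⟨x, hx, rfl⟩ := List.mem_map.1 hy
    exact hm (h2 x hx)
  · intro y hy y' hy'
    obtain ⟨x, hx, rfl⟩ := List.mem_map.1 hy
    obtain ⟨x', hx', rfl⟩ := List.mem_map.1 hy'
    exact h' x (h2 x hx) x' (h2 x' hx') (h3 x hx x' hx')

theorem LZ.cup_left {p : ℕ} {ψ : List X → ℤ} (hf : LZ A (p + 1) f) (hn : p + 1 ≤ n) :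
    LZ A n (cup p f ψ) := by
  obtain ⟨ε, hε, h⟩ := hf
  refine ⟨ε, hε, fun l h1 h2 h3 => ?_⟩
  have hs := List.take_subset (p + 1) l
  rw [cup, h _ (by rw [List.length_take]; omega) (fun x hx => h2 x (hs hx))
    (fun x hx y hy => h3 x (hs hx) y (hs hy)), smul_zero]

theorem LZ.cup_right {p q : ℕ} {ψ : List X → ℤ} (hf : LZ A q ψ) :
    LZ A (p + q) (cup p f ψ) := by
  obtain ⟨ε, hε, h⟩ := hf
  refine ⟨ε, hε, fun l h1 h2 h3 => ?_⟩
  have hs := List.drop_subset p l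
  rw [cup, h _ (by rw [List.length_drop]; omega) (fun x hx => h2 x (hs hx))
    (fun x hx y hy => h3 x (hs hx) y (hs hy)), zero_smul]

theorem Coc.add (hf : Coc A n f) (hg : Coc A n g) : Coc A n (f + g) := by
  rw [Coc, d_add]; exact LZ.add hf hg
theorem Coc.sub (hf : Coc A n f) (hg : Coc A n g) : Coc A n (f - g) := by
  rw [Coc, d_sub]; exact LZ.sub hf hg
theorem Coc.smul (a : ℤ) (hf : Coc A n f) : Coc A n (a • f) := by
  rw [Coc, d_zsmul]; exact LZ.smul a hf
theorem Coc.zero : Coc A n (0 : List X → L) := by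
  rw [Coc, d_zero]; exact LZ.zero
theorem Coc.sum {ι : Type*} {s : Finset ι} {f : ι → List X → L} (h : ∀ i ∈ s, Coc A n (f i)) :
    Coc A n (∑ i ∈ s, f i) :=
  Finset.sum_induction f (Coc A n) (fun _ _ => Coc.add) Coc.zero h
theorem Coc.mono (hf : Coc B n f) (h : A ⊆ B) : Coc A n f := LZ.mono hf h
theorem Coc.pull {B : Set Y} {f : List Y → L} {φ : X → Y} (hf : Coc B n f)
    (hφ : UniformContinuousOn φ A) (hm : Set.MapsTo φ A B) : Coc A n (pull φ f) := by
  rw [Coc, d_pull]; exact LZ.pull hf hφ hm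
theorem LZ.coc (hf : LZ A n f) : Coc A n f := hf.d
theorem Coc.d : Coc A n (d f) := by rw [Coc, d_d]; exact LZ.zero

theorem LZ.bd (hf : LZ A n f) : Bd A n f := ⟨0, rfl, by simpa using hf⟩
theorem Bd.zero : Bd A n (0 : List X → L) := LZ.zero.bd
theorem Bd.add (hf : Bd A n f) (hg : Bd A n g) : Bd A n (f + g) := by
  obtain ⟨η, h1, h2⟩ := hf
  obtain ⟨η', h1', h2'⟩ := hg
  refine ⟨η + η', by simp [h1, h1'], ?_⟩
  rw [d_add, add_sub_add_comm]
  exact h2.add h2'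
theorem Bd.smul (a : ℤ) (hf : Bd A n f) : Bd A n (a • f) := by
  obtain ⟨η, h1, h2⟩ := hf
  refine ⟨a • η, by simp [h1], ?_⟩
  rw [d_zsmul, ← smul_sub]
  exact h2.smul a
theorem Bd.neg (hf : Bd A n f) : Bd A n (-f) := by simpa using hf.smul (-1)
theorem Bd.sub (hf : Bd A n f) (hg : Bd A n g) : Bd A n (f - g) := by
  simpa [sub_eq_add_neg] using hf.add hg.neg
theorem Bd.sum {ι : Type*} {s : Finset ι} {f : ι → List X → L} (h : ∀ i ∈ s, Bd A n (f i)) :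
    Bd A n (∑ i ∈ s, f i) :=
  Finset.sum_induction f (Bd A n) (fun _ _ => Bd.add) Bd.zero h
theorem Bd.mono (hf : Bd B n f) (h : A ⊆ B) : Bd A n f := by
  obtain ⟨η, h1, h2⟩ := hf
  exact ⟨η, h1, h2.mono h⟩
theorem Bd.pull {B : Set Y} {f : List Y → L} {φ : X → Y} (hf : Bd B n f)
    (hφ : UniformContinuousOn φ A) (hm : Set.MapsTo φ A B) : Bd A n (pull φ f) := by
  obtain ⟨η, h1, h2⟩ := hf
  refine ⟨Coch.pull φ η, h1, ?_⟩
  rw [d_pull, ← pull_sub]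
  exact h2.pull hφ hm
theorem Bd.coc (hf : Bd A n f) : Coc A n f := by
  obtain ⟨η, -, h2⟩ := hf
  simpa using h2.coc.add (Coc.d (A := A) (n := n) (f := η))

theorem Bd.of_two_le (hn : 2 ≤ n) (η : List X → L) (h : LZ A n (f - Coch.d η)) : Bd A n f := by
  classical
  refine ⟨fun l => if l = [] then 0 else η l, by simp, h.congr fun l hl _ => ?_⟩
  simp only [Pi.sub_apply]
  congr 1
  refine d_congr fun l' _ h2 => ?_
  rw [if_neg]
  rintro rfl
  simp at h2
  omega

theorem Coc.cup {p q : ℕ} {ψ : List X → ℤ} (hf : Coc A (p + 1) f) (hψ : Coc A (q + 1) ψ) :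
    Coc A (p + q + 1) (cup p f ψ) := by
  have h1 : LZ A (p + q + 2) (Coch.cup (p + 1) (Coch.d f) ψ) := LZ.cup_left hf (by omega)
  have h2 : LZ A (p + q + 2) (Coch.cup p f (Coch.d ψ)) := LZ.cup_right (q := q + 2) hψ
  exact (h1.add (h2.smul ((-1) ^ p))).congr fun l hl _ => (d_cup p f ψ l (by omega)).symm

theorem Bd.cup_left {p q : ℕ} {ψ : List X → ℤ} (hf : Bd A (p + 1) f) (hψ : Coc A (q + 1) ψ) :
    Bd A (p + q + 1) (cup p f ψ) := by
  obtain ⟨η, h1, h2⟩ := hf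
  have h3 : LZ A (p + q + 1) (Coch.cup p (f - Coch.d η) ψ) := h2.cup_left (by omega)
  rw [cup_sub] at h3
  cases p with
  | zero =>
    refine (h3.congr fun l hl _ => ?_).bd
    have : Coch.cup 0 (Coch.d η) ψ l = 0 := by
      match l, hl with
      | x :: r, _ => simp [Coch.cup, d_cons, h1]
    simp [this]
  | succ p =>
    have h4 : LZ A (p + (q + 2)) (Coch.cup p η (Coch.d ψ)) := LZ.cup_right hψ
    refine Bd.of_two_le (by omega) (Coch.cup p η ψ) ?_
    rw [show p + (q + 2) = p + 1 + q + 1 by omega] at h4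
    refine (h3.sub (h4.smul ((-1) ^ p))).congr fun l hl _ => ?_
    simp only [Pi.sub_apply]
    rw [d_cup p η ψ l (by omega), sub_sub]
    rfl

theorem Bd.cup_right {p q : ℕ} {ψ : List X → ℤ} (hf : Coc A (p + 1) f) (hψ : Bd A (q + 1) ψ) :
    Bd A (p + q + 1) (cup p f ψ) := by
  obtain ⟨η, h1, h2⟩ := hψ
  have h3 : LZ A (p + (q + 1)) (Coch.cup p f (ψ - Coch.d η)) := h2.cup_right
  rw [sub_cup] at h3
  cases q with
  | zero =>
    refine (h3.congr fun l hl _ => ?_).bd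
    have : Coch.cup p f (Coch.d η) l = 0 := by
      have : ∃ x, l.drop p = [x] := List.length_eq_one_iff.1 (by simp [hl])
      obtain ⟨x, hx⟩ := this
      simp [Coch.cup, hx, d_cons, h1]
    simp [this]
  | succ q =>
    have h4 : LZ A (p + (q + 1) + 1) (Coch.cup (p + 1) (Coch.d f) η) :=
      LZ.cup_left hf (by omega)
    refine Bd.of_two_le (by omega) ((-1 : ℤ) ^ p • Coch.cup p f η) ?_
    refine (h3.sub (h4.smul ((-1) ^ p))).congr fun l hl _ => ?_
    have hs : ((-1 : ℤ) ^ p) * (-1) ^ p = 1 := by rw [← mul_pow]; simp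
    simp only [Pi.sub_apply, d_zsmul, Pi.smul_apply]
    rw [d_cup p f η l (by omega), smul_add, smul_smul, hs, one_smul]
    abel

/-- Two sets cover `X` with a Lebesgue number. -/
def Cov (N S : Set X) : Prop := ∃ ε > 0, ∀ l : List X, (∀ x ∈ l, ∀ y ∈ l, dist x y < ε) →
  (∀ x ∈ l, x ∈ N) ∨ ∀ x ∈ l, x ∈ S

theorem Cov.lz {N S : Set X} (h : Cov N S) (hN : LZ N n f) (hS : LZ S n f) :
    LZ Set.univ n f := by
  obtain ⟨ε, hε, h⟩ := h
  obtain ⟨ε₁, hε₁, h₁⟩ := hN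
  obtain ⟨ε₂, hε₂, h₂⟩ := hS
  refine ⟨min ε (min ε₁ ε₂), lt_min hε (lt_min hε₁ hε₂), fun l hl _ h3 => ?_⟩
  simp only [lt_min_iff] at h3
  rcases h l fun x hx y hy => (h3 x hx y hy).1 with hl' | hl'
  · exact h₁ l hl hl' fun x hx y hy => (h3 x hx y hy).2.1
  · exact h₂ l hl hl' fun x hx y hy => (h3 x hx y hy).2.2

/-- Gluing of primitives which agree on the intersection of a cover. -/
theorem Cov.bd {N S : Set X} (h : Cov N S) {u v : List X → L} (hN : LZ N (n + 2) (f - Coch.d u))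
    (hS : LZ S (n + 2) (f - Coch.d v)) (huv : LZ (N ∩ S) (n + 1) (u - v)) :
    Bd Set.univ (n + 2) f := by
  classical
  refine Bd.of_two_le (by omega) (fun l => if ∀ x ∈ l, x ∈ N then u l else v l) (h.lz ?_ ?_)
  · refine hN.congr fun l _ h2 => ?_
    simp only [Pi.sub_apply]
    congr 1
    refine d_congr fun l' h3 _ => ?_
    rw [if_pos fun x hx => h2 x (h3.subset hx)]
  · have : LZ S (n + 1) (v - fun l => if ∀ x ∈ l, x ∈ N then u l else v l) := by
      obtain ⟨ε, hε, h⟩ := huv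
      refine ⟨ε, hε, fun l h1 h2 h3 => ?_⟩
      simp only [Pi.sub_apply]
      split_ifs with h4
      · have := h l h1 (fun x hx => ⟨h4 x hx, h2 x hx⟩) h3
        rw [← neg_eq_zero]; simpa using this
      · simp
    have := hS.add this.d
    rw [d_sub] at this
    simpa using this

/-- Homotopy invariance. -/
theorem bd_of_homotopy {B : Set Y} {f : List Y → L} (hA : IsCompact A) (hf : Coc B n f)
    (H : ℝ → X → Y) (hH : ContinuousOn (Function.uncurry H) (Set.Icc 0 1 ×ˢ A))
    (hm : ∀ s ∈ Set.Icc (0 : ℝ) 1, ∀ x ∈ A, H s x ∈ B) :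
    Bd A n (pull (H 1) f - pull (H 0) f) := by
  have hu := (isCompact_Icc.prod hA).uniformContinuousOn_of_continuous hH
  obtain ⟨ε, hε, h⟩ := hf
  obtain ⟨δ, hδ, hd⟩ := Metric.uniformContinuousOn_iff.1 hu (ε / 3) (by positivity)
  have hstep : ∀ s ∈ Set.Icc (0 : ℝ) 1, ∀ t ∈ Set.Icc (0 : ℝ) 1, dist s t < δ →
      Bd A n (pull (H t) f - pull (H s) f) := by
    intro s hs t ht hst
    refine ⟨prism (H s) (H t) f, rfl, δ, hδ, fun l h1 h2 h3 => ?_⟩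
    rw [← d_prism_eq, add_sub_cancel_left]
    refine prism_eq_zero fun l' h4 h5 => h l' (by omega) ?_ ?_
    · intro y hy
      obtain ⟨x, hx, rfl | rfl⟩ := h5 y hy
      · exact hm s hs x (h2 x hx)
      · exact hm t ht x (h2 x hx)
    · have key : ∀ y ∈ l', ∃ x ∈ l, dist y (H s x) < ε / 3 := by
        intro y hy
        obtain ⟨x, hx, rfl | rfl⟩ := h5 y hy
        · exact ⟨x, hx, by simpa using by positivity⟩
        · refine ⟨x, hx, hd (t, x) ⟨ht, h2 x hx⟩ (s, x) ⟨hs, h2 x hx⟩ ?_⟩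
          simpa [Prod.dist_eq, dist_comm t s] using hst
      intro y hy y' hy'
      obtain ⟨x, hx, hyx⟩ := key y hy
      obtain ⟨x', hx', hyx'⟩ := key y' hy'
      have := hd (s, x) ⟨hs, h2 x hx⟩ (s, x') ⟨hs, h2 x' hx'⟩
        (by simpa [Prod.dist_eq] using h3 x hx x' hx')
      simp only [Function.uncurry_apply_pair] at this
      calc dist y y' ≤ dist y (H s x) + dist (H s x) (H s x') + dist (H s x') y' :=
            dist_triangle4 _ _ _ _
        _ < ε / 3 + ε / 3 + ε / 3 := by rw [dist_comm _ y']; gcongr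
        _ = ε := by ring
  obtain ⟨N, hN⟩ := exists_nat_gt (1 / δ)
  have hN0 : (0 : ℝ) < N := lt_trans (by positivity) hN
  have key : ∀ k : ℕ, k ≤ N → Bd A n (pull (H (k / N)) f - pull (H 0) f) := by
    intro k
    induction k with
    | zero => intro _; simpa using Bd.zero
    | succ k ih =>
      intro hk
      have hk' : (k : ℝ) + 1 ≤ N := by exact_mod_cast hk
      have := (hstep (k / N) ⟨by positivity, by rw [div_le_one hN0]; linarith⟩
        ((k + 1 : ℕ) / N) ⟨by positivity, by rw [div_le_one hN0]; push_cast; linarith⟩ (by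
          rw [Real.dist_eq, ← sub_div, abs_div]
          push_cast
          rw [show (k : ℝ) - (k + 1) = -1 by ring, abs_neg, abs_one, abs_of_pos hN0]
          rw [div_lt_iff₀ hδ] at hN
          rw [div_lt_iff₀ hN0]; linarith)).add (ih (by omega))
      simpa using this
  have := key N le_rfl
  rwa [div_self hN0.ne'] at this

end Local

section Sphere

/-- The first basis vector. -/
def vec0 (m : ℕ) : EuclideanSpace ℝ (Fin (m + 1)) := EuclideanSpace.single 0 1

theorem vec0_zero (m : ℕ) : vec0 m 0 = 1 := by simp [vec0]
theorem norm_vec0 (m : ℕ) : ‖vec0 m‖ = 1 := by simp [vec0]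

/-- Radial projection to the sphere. -/
def nrm {m : ℕ} (v : EuclideanSpace ℝ (Fin (m + 1))) : Sph m :=
  if h : v = 0 then ⟨vec0 m, by simp [norm_vec0]⟩
  else ⟨‖v‖⁻¹ • v, by
    rw [mem_sphere_zero_iff_norm, norm_smul, norm_inv, norm_norm, inv_mul_cancel₀ (by simpa)]⟩

theorem coe_nrm {m : ℕ} {v : EuclideanSpace ℝ (Fin (m + 1))} (h : v ≠ 0) :
    (nrm v : EuclideanSpace ℝ (Fin (m + 1))) = ‖v‖⁻¹ • v := by
  rw [nrm, dif_neg h]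

theorem norm_sph {m : ℕ} (x : Sph m) : ‖(x : EuclideanSpace ℝ (Fin (m + 1)))‖ = 1 :=
  mem_sphere_zero_iff_norm.1 x.2

theorem sph_ne_zero {m : ℕ} (x : Sph m) : (x : EuclideanSpace ℝ (Fin (m + 1))) ≠ 0 := by
  rw [← norm_pos_iff, norm_sph]; exact one_pos

theorem nrm_coe {m : ℕ} (x : Sph m) : nrm (x : EuclideanSpace ℝ (Fin (m + 1))) = x :=
  Subtype.ext (by rw [coe_nrm (sph_ne_zero x), norm_sph, inv_one, one_smul])

theorem continuousOn_nrm (m : ℕ) :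
    ContinuousOn (nrm : EuclideanSpace ℝ (Fin (m + 1)) → Sph m) {v | v ≠ 0} := by
  rw [Topology.IsInducing.subtypeVal.continuousOn_iff]
  have : ContinuousOn (fun v : EuclideanSpace ℝ (Fin (m + 1)) => ‖v‖⁻¹ • v) {v | v ≠ 0} :=
    (continuous_norm.continuousOn.inv₀ fun v hv => norm_ne_zero_iff.2 hv).smul continuousOn_id
  exact this.congr fun v hv => coe_nrm hv

/-- Forget the first coordinate. -/
def tl {m : ℕ} (v : EuclideanSpace ℝ (Fin (m + 1 + 1))) : EuclideanSpace ℝ (Fin (m + 1)) :=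
  WithLp.toLp 2 fun i => v i.succ

/-- The equatorial inclusion. -/
def cs {m : ℕ} (v : EuclideanSpace ℝ (Fin (m + 1))) : EuclideanSpace ℝ (Fin (m + 1 + 1)) :=
  WithLp.toLp 2 (Fin.cons 0 fun i => v i)

theorem continuous_tl (m : ℕ) : Continuous (tl (m := m)) := by
  unfold tl; fun_prop

theorem continuous_cs (m : ℕ) : Continuous (cs (m := m)) := by
  unfold cs
  refine (PiLp.continuous_toLp 2 _).comp (continuous_pi fun i => ?_)
  refine Fin.cases ?_ (fun i => ?_) i
  · simpa using continuous_const
  · simp only [Fin.cons_succ]; fun_prop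

theorem tl_cs {m : ℕ} (v : EuclideanSpace ℝ (Fin (m + 1))) : tl (cs v) = v := by
  ext i; simp [tl, cs]

theorem cs_zero {m : ℕ} (v : EuclideanSpace ℝ (Fin (m + 1))) : cs v 0 = 0 := by
  simp [cs]

theorem norm_sq_eq {m : ℕ} (v : EuclideanSpace ℝ (Fin (m + 1 + 1))) :
    ‖v‖ ^ 2 = v 0 ^ 2 + ‖tl v‖ ^ 2 := by
  simp [EuclideanSpace.norm_sq_eq, Fin.sum_univ_succ, tl]

theorem norm_cs {m : ℕ} (v : EuclideanSpace ℝ (Fin (m + 1))) : ‖cs v‖ = ‖v‖ := by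
  have := norm_sq_eq (cs v)
  rw [cs_zero, tl_cs] at this
  exact (sq_eq_sq₀ (norm_nonneg _) (norm_nonneg _)).1 (by simpa using this)

theorem cs_smul {m : ℕ} (a : ℝ) (v : EuclideanSpace ℝ (Fin (m + 1))) :
    cs (a • v) = a • cs v := by
  ext i
  refine Fin.cases ?_ (fun i => ?_) i <;> simp [cs]

/-- The equator. -/
def eqt {m : ℕ} (y : Sph m) : Sph (m + 1) := ⟨cs y, by simp [norm_cs]⟩

/-- Radial retraction to the equator. -/
def ret {m : ℕ} (x : Sph (m + 1)) : Sph m := nrm (tl x)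

theorem ret_eqt {m : ℕ} (y : Sph m) : ret (eqt y) = y := by
  simp only [ret, eqt, tl_cs, nrm_coe]

/-- The two caps for `σ = ±1`. -/
def cap (m : ℕ) (σ : ℝ) : Set (Sph m) := {x | -(1 / 2) ≤ σ * x.1 0}

theorem continuous_height (m : ℕ) : Continuous fun x : Sph m => x.1 0 := by fun_prop

theorem isClosed_cap (m : ℕ) (σ : ℝ) : IsClosed (cap m σ) :=
  isClosed_le continuous_const (continuous_const.mul (continuous_height m))

theorem dist_height {m : ℕ} (x y : Sph m) : |x.1 0 - y.1 0| ≤ dist x y := by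
  rw [Subtype.dist_eq, dist_eq_norm]
  simpa using PiLp.norm_apply_le (x.1 - y.1) 0

theorem abs_height_le {m : ℕ} (x : Sph m) : |x.1 0| ≤ 1 := by
  have := PiLp.norm_apply_le x.1 0
  rwa [norm_sph] at this

theorem cap_inter {m : ℕ} {x : Sph m} (h : x ∈ cap m 1 ∩ cap m (-1)) : |x.1 0| ≤ 1 / 2 := by
  obtain ⟨h1, h2⟩ := h
  simp only [cap, Set.mem_ofPred_eq] at h1 h2
  rw [abs_le]; constructor <;> linarith

theorem tl_ne_zero {m : ℕ} {x : Sph (m + 1)} (h : x ∈ cap (m + 1) 1 ∩ cap (m + 1) (-1)) :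
    tl x.1 ≠ 0 := by
  intro h0
  have := norm_sq_eq x.1
  rw [h0, norm_sph, norm_zero] at this
  have h2 := abs_le.1 (cap_inter h)
  nlinarith

theorem bd_linear {Z Y L : Type*} [PseudoMetricSpace Z] [PseudoMetricSpace Y] [AddCommGroup L]
    {k n : ℕ} {A : Set Z} (hA : IsCompact A) {B : Set (Y × Sph k)} {f : List (Y × Sph k) → L}
    (hf : Coc B n f) (α : Z → Y) (a b : Z → EuclideanSpace ℝ (Fin (k + 1)))
    (hα : ContinuousOn α A) (ha : ContinuousOn a A) (hb : ContinuousOn b A)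
    (h0 : ∀ s ∈ Set.Icc (0 : ℝ) 1, ∀ z ∈ A, (1 - s) • a z + s • b z ≠ 0)
    (hm : ∀ s ∈ Set.Icc (0 : ℝ) 1, ∀ z ∈ A, (α z, nrm ((1 - s) • a z + s • b z)) ∈ B) :
    Bd A n (pull (fun z => (α z, nrm (b z))) f - pull (fun z => (α z, nrm (a z))) f) := by
  have := bd_of_homotopy hA hf (fun s z => (α z, nrm ((1 - s) • a z + s • b z))) ?_ hm
  · simpa using this
  · have e : Set.MapsTo Prod.snd (Set.Icc (0 : ℝ) 1 ×ˢ A) A := fun z hz => hz.2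
    refine (hα.comp continuousOn_snd e).prodMk
      ((continuousOn_nrm k).comp ?_ fun z hz => h0 z.1 hz.1 z.2 hz.2)
    exact ((continuousOn_const.sub continuousOn_fst).smul (ha.comp continuousOn_snd e)).add
      (continuousOn_fst.smul (hb.comp continuousOn_snd e))

theorem nrm_height {k : ℕ} {v : EuclideanSpace ℝ (Fin (k + 1))} (h : v ≠ 0) :
    (nrm v).1 0 * ‖v‖ = v 0 := by
  rw [coe_nrm h]
  have : ‖v‖ ≠ 0 := norm_ne_zero_iff.2 h
  simp only [PiLp.smul_apply, smul_eq_mul]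
  field_simp

variable {Y L : Type*} [PseudoMetricSpace Y] [CompactSpace Y] [AddCommGroup L]

theorem isCompact_snd {k : ℕ} {A : Set (Sph k)} (hA : IsClosed A) :
    IsCompact (Prod.snd ⁻¹' A : Set (Y × Sph k)) :=
  (hA.preimage continuous_snd).isCompact

theorem bd_cap {k n : ℕ} {σ : ℝ} (hσ : σ ^ 2 = 1) {f : List (Y × Sph k) → L}
    (hf : Coc (Prod.snd ⁻¹' cap k σ) n f) :
    Bd (Prod.snd ⁻¹' cap k σ) n (f - pull (fun p => (p.1, nrm (σ • vec0 k))) f) := by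
  have hn : ∀ s : ℝ, ∀ x : Sph k, ‖(1 - s) • x.1 + s • σ • vec0 k‖ ^ 2 =
      (1 - s) ^ 2 + s ^ 2 + 2 * s * (1 - s) * (σ * x.1 0) := by
    intro s x
    rw [norm_add_sq_real, norm_smul, norm_smul, norm_smul, norm_sph, norm_vec0,
      inner_smul_left, inner_smul_right, inner_smul_right, vec0,
      EuclideanSpace.inner_single_right]
    simp only [Real.norm_eq_abs, mul_one, mul_pow, sq_abs, hσ]
    simp
    ring
  have h0 : ∀ s ∈ Set.Icc (0 : ℝ) 1, ∀ x ∈ cap k σ, (1 - s) • x.1 + s • σ • vec0 k ≠ 0 := by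
    intro s hs x hx h
    have := hn s x
    rw [h, norm_zero] at this
    simp only [cap, Set.mem_ofPred_eq] at hx
    nlinarith [mul_nonneg hs.1 (sub_nonneg.2 hs.2), sq_nonneg (2 * s - 1)]
  have := bd_linear (isCompact_snd (isClosed_cap k σ)) hf Prod.fst (fun p => p.2.1)
    (fun _ => σ • vec0 k) (by fun_prop) (by fun_prop) (by fun_prop)
    (fun s hs z hz => h0 s hs z.2 hz) ?_
  · have h := this.neg
    rw [neg_sub] at h
    simpa [nrm_coe, pull_id] using h
  · intro s hs z hz
    have hne := h0 s hs z.2 hz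
    have e1 := nrm_height hne
    have e2 := hn s z.2
    have e3 := norm_pos_iff.2 hne
    simp only [cap, Set.mem_preimage, Set.mem_ofPred_eq] at hz ⊢
    set v := (1 - s) • z.2.1 + s • σ • vec0 k with hv
    have e4 : σ * v 0 = (1 - s) * (σ * z.2.1 0) + s := by
      simp only [hv, PiLp.add_apply, PiLp.smul_apply, smul_eq_mul, vec0_zero]
      linear_combination s * hσ
    generalize σ * z.2.1 0 = h at hz e2 e4
    have e5 : -(‖v‖ / 2) ≤ σ * v 0 := by
      by_contra hc
      push Not at hc
      have h1 : (1 - s) * h + s < 0 := by rw [← e4]; linarith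
      have h2 : ‖v‖ ^ 2 < (2 * ((1 - s) * h + s)) ^ 2 := by rw [← e4]; nlinarith
      have h3 : s ≤ (1 - s) / 2 := by nlinarith [hs.1, hs.2]
      have h4 : -((1 - s) * h + s) ≤ (1 - s) / 2 - s := by nlinarith [hs.1, hs.2]
      have h5 : (2 * ((1 - s) * h + s)) ^ 2 ≤ ((1 - s) - 2 * s) ^ 2 := by nlinarith
      have h6 : (1 - s) ^ 2 + s ^ 2 - s * (1 - s) ≤ ‖v‖ ^ 2 := by
        rw [e2]; nlinarith [mul_nonneg hs.1 (sub_nonneg.2 hs.2)]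
      nlinarith [hs.1]
    rw [← e1] at e5
    by_contra hc
    push Not at hc
    nlinarith

theorem bd_sections {k n : ℕ} {f : List (Y × Sph (k + 1)) → L} (hf : Coc Set.univ n f) :
    Bd Set.univ n (pull (fun y : Y => (y, nrm ((-1 : ℝ) • vec0 (k + 1)))) f -
      pull (fun y : Y => (y, nrm ((1 : ℝ) • vec0 (k + 1)))) f) := by
  have key : ∀ σ : ℝ, σ ≠ 0 →
      Bd Set.univ n (pull (fun y : Y => (y, nrm (EuclideanSpace.single 1 1))) f -
      pull (fun y : Y => (y, nrm (σ • vec0 (k + 1)))) f) := by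
    intro σ hσ
    refine bd_linear isCompact_univ hf (fun y => y) (fun _ => σ • vec0 (k + 1))
      (fun _ => EuclideanSpace.single 1 1) (by fun_prop) (by fun_prop) (by fun_prop) ?_
      (fun _ _ _ _ => Set.mem_univ _)
    intro s hs z _ h
    have h1 := congrArg (fun v : EuclideanSpace ℝ (Fin (k + 1 + 1)) => v 1) h
    have h2 := congrArg (fun v : EuclideanSpace ℝ (Fin (k + 1 + 1)) => v 0) h
    simp [vec0] at h1 h2
    simp [h1] at h2
    exact hσ h2
  have := (key 1 (by norm_num)).sub (key (-1) (by norm_num))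
  simpa using this

theorem bd_band {k n : ℕ} {f : List (Y × Sph (k + 1)) → L}
    (hf : Coc (Prod.snd ⁻¹' (cap (k + 1) 1 ∩ cap (k + 1) (-1))) n f) :
    Bd (Prod.snd ⁻¹' (cap (k + 1) 1 ∩ cap (k + 1) (-1))) n
      (f - pull (fun p => (p.1, eqt (ret p.2))) f) := by
  have ht : ∀ s : ℝ, ∀ x : Sph (k + 1), tl ((1 - s) • x.1 + s • cs (tl x.1)) = tl x.1 := by
    intro s x
    ext i
    simp [tl, cs]
    ring
  have hh : ∀ s : ℝ, ∀ x : Sph (k + 1), ((1 - s) • x.1 + s • cs (tl x.1)) 0 =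
      (1 - s) * x.1 0 := by
    intro s x
    simp [cs_zero]
  have h0 : ∀ s ∈ Set.Icc (0 : ℝ) 1, ∀ x ∈ cap (k + 1) 1 ∩ cap (k + 1) (-1),
      (1 - s) • x.1 + s • cs (tl x.1) ≠ 0 := by
    intro s hs x hx h
    refine tl_ne_zero hx ?_
    rw [← ht s x, h]
    ext i; simp [tl]
  have := bd_linear (isCompact_snd ((isClosed_cap (k + 1) 1).inter (isClosed_cap (k + 1) (-1))))
    hf Prod.fst (fun p => p.2.1) (fun p => cs (tl p.2.1)) (by fun_prop) (by fun_prop)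
    ((continuous_cs k).comp ((continuous_tl k).comp
      (continuous_subtype_val.comp continuous_snd))).continuousOn
    (fun s hs z hz => h0 s hs z.2 hz) ?_
  · have h := this.neg
    rw [neg_sub] at h
    obtain ⟨η, h1, h2⟩ := h
    refine ⟨η, h1, h2.congr fun l _ hl => ?_⟩
    simp only [Pi.sub_apply, nrm_coe, pull]
    congr 2
    · simp
    · congr 1
      refine List.map_congr_left fun p hp => Prod.ext rfl (Subtype.ext ?_)
      have h3 := tl_ne_zero (hl p hp)
      have h4 : cs (tl p.2.1) ≠ 0 := by
        rw [← norm_ne_zero_iff, norm_cs, norm_ne_zero_iff]; exact h3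
      simp only [eqt, ret]
      rw [coe_nrm h3, coe_nrm h4, norm_cs, cs_smul]
  · intro s hs z hz
    have hne := h0 s hs z.2 hz
    have e1 := nrm_height hne
    have e2 := norm_sq_eq ((1 - s) • z.2.1 + s • cs (tl z.2.1))
    have e3 := norm_sq_eq z.2.1
    rw [ht, hh] at e2
    rw [norm_sph] at e3
    rw [hh] at e1
    have e4 := norm_pos_iff.2 hne
    have e5 := abs_le.1 (cap_inter hz)
    have e6 := abs_le.1 (abs_height_le z.2)
    generalize (nrm ((1 - s) • z.2.1 + s • cs (tl z.2.1))) = w at e1 ⊢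
    generalize ‖(1 - s) • z.2.1 + s • cs (tl z.2.1)‖ = v at e1 e2 e4
    have e7 : (1 - s) ≤ v := by
      have : (1 - s) ^ 2 ≤ v ^ 2 := by
        have h1 : (1 - s) ^ 2 ≤ 1 := by nlinarith [hs.1, hs.2]
        nlinarith [sq_nonneg ‖tl z.2.1‖]
      exact le_of_sq_le_sq this e4.le
    simp only [cap, Set.mem_preimage, Set.mem_inter_iff, Set.mem_ofPred_eq]
    constructor <;> by_contra hc <;> push Not at hc <;> nlinarith [hs.1, hs.2]

end Sphere

section Kunneth

/-- Extension of a cochain on `A` by zero. -/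
def extz {X L : Type*} [AddCommGroup L] (A : Set X) (f : List X → L) : List X → L := by
  classical exact fun l => if ∀ x ∈ l, x ∈ A then f l else 0

theorem extz_of {X L : Type*} [AddCommGroup L] {A : Set X} {f : List X → L} {l : List X}
    (h : ∀ x ∈ l, x ∈ A) : extz A f l = f l := by
  classical exact if_pos h

theorem extz_of_not {X L : Type*} [AddCommGroup L] {A : Set X} {f : List X → L} {l : List X}
    (h : ¬ ∀ x ∈ l, x ∈ A) : extz A f l = 0 := by
  classical exact if_neg h

/-- The band around the equator. -/
def band (m : ℕ) : Set (Sph m) := cap m 1 ∩ cap m (-1)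

open Classical in
/-- The fundamental cocycle of the sphere, constructed by iterated Mayer–Vietoris. -/
def sg : (m : ℕ) → List (Sph m) → ℤ
  | 0, l => if ∃ x ∈ l.head?, 0 < x.1 0 then 1 else 0
  | m + 1, l => extz (cap (m + 1) 1) (d (extz (band (m + 1)) (pull ret (sg m)))) l

/-- The cochain on the band defining `sg (m + 1)`. -/
def st (m : ℕ) : List (Sph (m + 1)) → ℤ := extz (band (m + 1)) (pull ret (sg m))

theorem sg_succ (m : ℕ) : sg (m + 1) = extz (cap (m + 1) 1) (d (st m)) := rfl

theorem uniformContinuousOn_ret (m : ℕ) : UniformContinuousOn (ret (m := m)) (band (m + 1)) := by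
  refine ((isClosed_cap (m + 1) 1).inter (isClosed_cap (m + 1) (-1))).isCompact
    |>.uniformContinuousOn_of_continuous ?_
  exact (continuousOn_nrm m).comp ((continuous_tl m).comp continuous_subtype_val).continuousOn
    fun x hx => tl_ne_zero hx

theorem pole_height {k : ℕ} {σ : ℝ} (hσ : σ ^ 2 = 1) : (nrm (σ • vec0 k)).1 0 = σ := by
  have h1 : ‖σ • vec0 k‖ = 1 := by
    rw [norm_smul, norm_vec0, mul_one, Real.norm_eq_abs]
    rw [← sq_abs] at hσ
    nlinarith [abs_nonneg σ]
  rw [coe_nrm (by rw [← norm_pos_iff, h1]; exact one_pos), h1]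
  simp [vec0_zero]

theorem pole_mem {k : ℕ} {σ : ℝ} (hσ : σ ^ 2 = 1) : nrm (σ • vec0 k) ∈ cap k σ := by
  simp only [cap, Set.mem_ofPred_eq, pole_height hσ]
  nlinarith

theorem Cov.preimage_snd {X Y : Type*} [PseudoMetricSpace X] [PseudoMetricSpace Y] {N S : Set X}
    (h : Cov N S) : Cov (X := Y × X) (Prod.snd ⁻¹' N) (Prod.snd ⁻¹' S) := by
  obtain ⟨ε, hε, h⟩ := h
  refine ⟨ε, hε, fun l hl => ?_⟩
  have := h (l.map Prod.snd) (by
    intro x hx y hy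
    obtain ⟨x', hx', rfl⟩ := List.mem_map.1 hx
    obtain ⟨y', hy', rfl⟩ := List.mem_map.1 hy
    exact (le_max_right _ _).trans_lt (hl x' hx' y' hy'))
  rcases this with h | h
  · exact Or.inl fun x hx => h _ (List.mem_map_of_mem hx)
  · exact Or.inr fun x hx => h _ (List.mem_map_of_mem hx)

theorem sph0_eq (x : Sph 0) : x = nrm ((1 : ℝ) • vec0 0) ∨ x = nrm ((-1 : ℝ) • vec0 0) := by
  have h : x.1 0 = 1 ∨ x.1 0 = -1 := by
    have h := norm_sph x
    rw [EuclideanSpace.norm_eq, Real.sqrt_eq_one, Fin.sum_univ_succ] at h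
    simpa using h
  rcases h with h | h
  · refine Or.inl (Subtype.ext ?_)
    ext i
    obtain rfl : i = 0 := Fin.ext (by omega)
    rw [pole_height (by norm_num)]
    exact h
  · refine Or.inr (Subtype.ext ?_)
    ext i
    obtain rfl : i = 0 := Fin.ext (by omega)
    rw [pole_height (by norm_num)]
    exact h

theorem sg_zero_pole (σ : ℝ) (hσ : σ ^ 2 = 1) :
    sg 0 [nrm (σ • vec0 0)] = if 0 < σ then 1 else 0 := by
  simp [sg, pole_height hσ]

theorem eq_of_small {x y : Sph 0} (h : dist x y < 1) : x = y := by
  have h1 := dist_height x y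
  have h2 := pole_height (k := 0) (σ := 1) (by norm_num)
  have h3 := pole_height (k := 0) (σ := -1) (by norm_num)
  rcases sph0_eq x with rfl | rfl <;> rcases sph0_eq y with rfl | rfl <;> try rfl
  all_goals
    rw [h2, h3] at h1
    have := h1.trans_lt h
    norm_num at this

theorem lz_sg {m : ℕ} (h : Coc Set.univ (m + 1) (sg m)) :
    LZ (cap (m + 1) (-1)) (m + 2) (sg (m + 1)) := by
  have h1 := h.pull (uniformContinuousOn_ret m) (Set.mapsTo_univ _ _)
  obtain ⟨ε, hε, h1⟩ := h1
  refine ⟨ε, hε, fun l hl h2 h3 => ?_⟩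
  rw [sg_succ]
  by_cases h4 : ∀ x ∈ l, x ∈ cap (m + 1) 1
  · rw [extz_of h4, ← h1 l hl (fun x hx => ⟨h4 x hx, h2 x hx⟩) h3]
    refine d_congr fun l' h5 _ => extz_of fun x hx => ?_
    exact ⟨h4 x (h5.subset hx), h2 x (h5.subset hx)⟩
  · exact extz_of_not h4

theorem cov_sph (m : ℕ) : Cov (cap m 1) (cap m (-1)) := by
  refine ⟨1 / 2, by norm_num, fun l hl => ?_⟩
  by_cases h : ∀ x ∈ l, x ∈ cap m 1
  · exact Or.inl h
  right
  push Not at h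
  obtain ⟨x, hx, hx'⟩ := h
  intro y hy
  have h1 := dist_height y x
  have h2 := hl y hy x hx
  simp only [cap, Set.mem_ofPred_eq] at hx' ⊢
  have := abs_le.1 h1
  linarith

theorem coc_sg (m : ℕ) : Coc Set.univ (m + 1) (sg m) := by
  induction m with
  | zero =>
    refine ⟨1, one_pos, fun l hl _ h => ?_⟩
    match l, hl with
    | [x, y], _ =>
      have := eq_of_small (h x (by simp) y (by simp))
      subst this
      simp [d_cons, sg]
  | succ m ih =>
    refine (cov_sph (m + 1)).lz ?_ (lz_sg ih).coc
    refine LZ.of_eq fun l _ h2 => ?_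
    have : d (sg (m + 1)) l = d (d (st m)) l :=
      d_congr fun l' h5 _ => extz_of fun x hx => h2 x (h5.subset hx)
    rw [this, d_d]
    rfl

theorem pull_eqt_st (m : ℕ) : pull eqt (st m) = sg m := by
  funext l
  have h : ∀ x ∈ l.map eqt, x ∈ band (m + 1) := by
    intro x hx
    obtain ⟨y, -, rfl⟩ := List.mem_map.1 hx
    constructor <;> simp [cap, eqt, cs_zero]
  simp only [pull, st]
  rw [extz_of h]
  simp [pull, List.map_map, Function.comp_def, ret_eqt]

variable {Y L : Type*} [PseudoMetricSpace Y] [CompactSpace Y] [AddCommGroup L]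

theorem uc_const {Z : Type*} [PseudoMetricSpace Z] (z : Z) (A : Set Y) :
    UniformContinuousOn (fun y : Y => (y, z)) A :=
  (uniformContinuous_id.prodMk uniformContinuous_const).uniformContinuousOn

theorem uc_fst {Z : Type*} [PseudoMetricSpace Z] (A : Set (Y × Z)) :
    UniformContinuousOn (Prod.fst : Y × Z → Y) A :=
  uniformContinuous_fst.uniformContinuousOn

theorem uc_snd {Z : Type*} [PseudoMetricSpace Z] (A : Set (Y × Z)) :
    UniformContinuousOn (Prod.snd : Y × Z → Z) A :=
  uniformContinuous_snd.uniformContinuousOn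

theorem uc_eqt (m : ℕ) :
    UniformContinuousOn (fun p : Y × Sph m => (p.1, eqt p.2)) Set.univ := by
  have : Continuous (fun p : Y × Sph m => (p.1, eqt p.2)) := by
    refine continuous_fst.prodMk (Continuous.subtype_mk ?_ _)
    exact (continuous_cs m).comp (continuous_subtype_val.comp continuous_snd)
  exact (CompactSpace.uniformContinuous_of_continuous this).uniformContinuousOn

theorem uc_ret (m : ℕ) :
    UniformContinuousOn (fun p : Y × Sph (m + 1) => (p.1, ret p.2))
      (Prod.snd ⁻¹' band (m + 1)) := by
  refine (isCompact_snd ((isClosed_cap (m + 1) 1).inter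
    (isClosed_cap (m + 1) (-1)))).uniformContinuousOn_of_continuous ?_
  exact continuousOn_fst.prodMk ((uniformContinuousOn_ret m).continuousOn.comp continuousOn_snd
    fun p hp => hp)

theorem mem_band_eqt {m : ℕ} (y : Sph m) : eqt y ∈ band (m + 1) := by
  constructor <;> simp [cap, eqt, cs_zero]

theorem lz_cup_north {m p : ℕ} {b : List Y → L} (hb : Coc Set.univ (p + 1) b) :
    LZ (Prod.snd ⁻¹' cap (m + 1) 1) (p + m + 2) (cup p (pull Prod.fst b) (pull Prod.snd (sg (m + 1)))
      - d ((-1 : ℤ) ^ p • cup p (pull Prod.fst b) (pull Prod.snd (st m)))) := by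
  have h1 : LZ (Prod.snd ⁻¹' cap (m + 1) 1) (p + m + 2)
      (cup (p + 1) (d (pull Prod.fst b)) (pull Prod.snd (st m))) :=
    LZ.cup_left (hb.pull (uc_fst _) (Set.mapsTo_univ _ _)) (by omega)
  refine (h1.smul (-(-1) ^ p)).congr fun l hl h2 => ?_
  have hs : ((-1 : ℤ) ^ p) * (-1) ^ p = 1 := by rw [← mul_pow]; simp
  have h3 : cup p (pull Prod.fst b) (pull Prod.snd (sg (m + 1))) l =
      cup p (pull Prod.fst b) (d (pull Prod.snd (st m))) l := by
    simp only [cup]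
    congr 1
    rw [d_pull, pull, pull, sg_succ]
    refine extz_of fun x hx => ?_
    obtain ⟨y, hy, rfl⟩ := List.mem_map.1 hx
    exact h2 y (List.drop_subset p l hy)
  simp only [Pi.sub_apply, d_zsmul, Pi.smul_apply]
  rw [d_cup p _ _ l (by omega), h3, smul_add, smul_smul, hs]
  module

theorem lz_cup_south (m p : ℕ) (b : List Y → L) :
    LZ (Prod.snd ⁻¹' cap (m + 1) (-1)) (p + m + 2)
      (cup p (pull Prod.fst b) (pull Prod.snd (sg (m + 1)))) :=
  LZ.cup_right (q := m + 2) ((lz_sg (coc_sg m)).pull (uc_snd _) fun _ hx => hx)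

theorem kunneth_left {m p : ℕ} {a : List Y → L} {b : List Y → L}
    (h : Bd Set.univ (p + m + 1)
      (pull Prod.fst a + cup p (pull Prod.fst b) (pull Prod.snd (sg m)))) :
    Bd Set.univ (p + m + 1) a := by
  have h1 := h.pull (uc_const (nrm ((-1 : ℝ) • vec0 m)) Set.univ) (Set.mapsTo_univ _ _)
  rw [pull_add, pull_cup, pull_pull, pull_pull, pull_pull, pull_id, pull_id] at h1
  have h2 : LZ Set.univ (p + (m + 1))
      (cup p b (pull (fun _ : Y => nrm ((-1 : ℝ) • vec0 m)) (sg m))) := by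
    refine LZ.cup_right ?_
    cases m with
    | zero =>
      refine LZ.of_eq fun l hl _ => ?_
      match l, hl with
      | [y], _ =>
        simp only [pull, List.map_cons, List.map_nil]
        rw [sg_zero_pole _ (by norm_num), if_neg (by norm_num)]
    | succ m =>
      exact (lz_sg (coc_sg m)).pull uniformContinuous_const.uniformContinuousOn
        fun _ _ => pole_mem (by norm_num)
  simpa using h1.sub h2.bd

theorem kunneth_inj (m p : ℕ) {a : List Y → L} {b : List Y → L} (hb : Coc Set.univ (p + 1) b)
    (h : Bd Set.univ (p + m + 1)
      (pull Prod.fst a + cup p (pull Prod.fst b) (pull Prod.snd (sg m)))) :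
    Bd Set.univ (p + 1) b := by
  induction m generalizing a b with
  | zero =>
    have h1 := kunneth_left h
    have h2 := h.pull (uc_const (nrm ((1 : ℝ) • vec0 0)) Set.univ) (Set.mapsTo_univ _ _)
    rw [pull_add, pull_cup, pull_pull, pull_pull, pull_pull, pull_id, pull_id] at h2
    have h3 := h2.sub h1
    rw [add_sub_cancel_left] at h3
    obtain ⟨η, h4, h5⟩ := h3
    refine ⟨η, h4, h5.congr fun l hl _ => ?_⟩
    simp only [Pi.sub_apply]
    congr 1
    obtain ⟨x, hx⟩ : ∃ x, l.drop p = [x] := List.length_eq_one_iff.1 (by simp [hl])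
    simp only [cup, hx, pull, List.map_cons, List.map_nil]
    rw [sg_zero_pole _ (by norm_num), if_pos (by norm_num), one_smul, List.take_of_length_le]
    omega
  | succ m ih =>
    have h0 := h.sub ((kunneth_left h).pull (uc_fst _) (Set.mapsTo_univ _ _))
    rw [add_sub_cancel_left] at h0
    obtain ⟨η, -, h1⟩ := h0
    set S := Prod.snd ⁻¹' cap (m + 1) (-1) with hS
    set N := Prod.snd ⁻¹' cap (m + 1) 1 with hN
    set b' : List (Y × Sph (m + 1)) → L := pull Prod.fst b with hb'
    have h2 : LZ N (p + m + 2) _ := lz_cup_north hb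
    have h3 : LZ S (p + m + 2) _ := lz_cup_south m p b
    have h4 : Coc S (p + m + 1) η := by
      have := h3.sub (h1.mono (Set.subset_univ S))
      rwa [sub_sub_cancel] at this
    set w := (-1 : ℤ) ^ p • cup p b' (pull Prod.snd (st m)) - η with hw
    have h5 : Coc N (p + m + 1) w := by
      have := (h1.mono (Set.subset_univ N)).sub h2
      rw [Coc, hw, d_sub]
      rwa [sub_sub_sub_cancel_left] at this
    have h6 := (bd_cap (by norm_num) h5).mono (A := N ∩ S) Set.inter_subset_left
    have h7 := (bd_cap (by norm_num) h4).mono (A := N ∩ S) Set.inter_subset_right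
    have h8 := (h6.add h7).pull (uc_eqt m) (B := N ∩ S) fun x _ => mem_band_eqt x.2
    set e := pull (fun y => (y, nrm ((1 : ℝ) • vec0 (m + 1)))) w +
      pull (fun y => (y, nrm ((-1 : ℝ) • vec0 (m + 1)))) η with he
    have h9 : Bd Set.univ (p + m + 1) (pull Prod.fst (-((-1 : ℤ) ^ p • e)) +
        cup p (pull Prod.fst b) (pull Prod.snd (sg m))) := by
      have hs : ((-1 : ℤ) ^ p) * (-1) ^ p = 1 := by rw [← mul_pow]; simp
      have e2 : pull (fun p : Y × Sph m => (p.1, eqt p.2)) (w + η) =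
          (-1 : ℤ) ^ p • cup p (pull Prod.fst b) (pull Prod.snd (sg m)) := by
        rw [hw, sub_add_cancel, pull_smul, pull_cup, hb', pull_pull, pull_pull, ← pull_eqt_st m,
          pull_pull]
      have e3 := h8.smul ((-1) ^ p)
      rw [sub_add_sub_comm, pull_sub, e2, smul_sub, smul_smul, hs, one_smul, pull_add] at e3
      rw [pull_neg, pull_smul, he, pull_add, neg_add_eq_sub]
      simpa only [pull_pull] using e3
    exact ih hb h9

theorem kunneth_surj_zero {p : ℕ} {f : List (Y × Sph 0) → L} (hf : Coc Set.univ (p + 1) f) :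
    ∃ a b : List Y → L, Coc Set.univ (p + 1) a ∧ Coc Set.univ (p + 1) b ∧
      Bd Set.univ (p + 1) (f - pull Prod.fst a -
        cup p (pull Prod.fst b) (pull Prod.snd (sg 0))) := by
  have h1 : ∀ σ : ℝ, Coc Set.univ (p + 1) (pull (fun y : Y => (y, nrm (σ • vec0 0))) f) :=
    fun σ => hf.pull (uc_const _ _) (Set.mapsTo_univ _ _)
  refine ⟨_, _, h1 (-1), (h1 1).sub (h1 (-1)), LZ.bd ⟨1, one_pos, fun l hl _ h => ?_⟩⟩
  obtain ⟨x, hx⟩ : ∃ x, l.drop p = [x] := List.length_eq_one_iff.1 (by simp [hl])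
  have hxl : x ∈ l := List.drop_subset p l (by simp [hx])
  have hl' : l = l.map fun q => (q.1, x.2) := by
    conv_lhs => rw [← List.map_id l]
    refine List.map_congr_left fun q hq => Prod.ext rfl ?_
    exact eq_of_small ((le_max_right _ _).trans_lt (h q hq x hxl))
  have ht : l.take (p + 1) = l := List.take_of_length_le hl.le
  simp only [Pi.sub_apply, cup, hx, pull, List.map_cons, List.map_nil, ht, List.map_map]
  conv in f l => rw [hl']
  rcases sph0_eq x.2 with h2 | h2
  · rw [h2, sg_zero_pole _ (by norm_num), if_pos (by norm_num)]
    simp [Function.comp_def]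
  · rw [h2, sg_zero_pole _ (by norm_num), if_neg (by norm_num)]
    simp [Function.comp_def]

theorem exists_north {m n : ℕ} {f : List (Y × Sph (m + 1)) → L} (hf : Coc Set.univ n f) :
    ∃ a : List Y → L, Coc Set.univ n a ∧
      Bd (Prod.snd ⁻¹' cap (m + 1) 1) n (f - pull Prod.fst a) ∧
      Bd (Prod.snd ⁻¹' cap (m + 1) (-1)) n (f - pull Prod.fst a) := by
  refine ⟨_, hf.pull (uc_const (nrm ((1 : ℝ) • vec0 (m + 1))) Set.univ) (Set.mapsTo_univ _ _),
    ?_, ?_⟩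
  · rw [pull_pull]
    exact bd_cap (by norm_num) (hf.mono (Set.subset_univ _))
  · have h1 := bd_cap (σ := -1) (by norm_num) (hf.mono (Set.subset_univ _))
    have h2 := (bd_sections hf).pull (uc_fst (Prod.snd ⁻¹' cap (m + 1) (-1)))
      (Set.mapsTo_univ _ _)
    rw [pull_sub, pull_pull, pull_pull] at h2
    rw [pull_pull]
    simpa using h1.add h2

theorem exists_band {m n : ℕ} {f : List (Y × Sph (m + 1)) → L} (hf : Coc Set.univ (n + 2) f) :
    ∃ (a : List Y → L) (u v : List (Y × Sph (m + 1)) → L) (w : List (Y × Sph m) → L),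
      Coc Set.univ (n + 2) a ∧
      LZ (Prod.snd ⁻¹' cap (m + 1) 1) (n + 2) (f - pull Prod.fst a - d u) ∧
      LZ (Prod.snd ⁻¹' cap (m + 1) (-1)) (n + 2) (f - pull Prod.fst a - d v) ∧
      Coc Set.univ (n + 1) w ∧
      Bd (Prod.snd ⁻¹' band (m + 1)) (n + 1) (u - v - pull (fun p => (p.1, ret p.2)) w) := by
  obtain ⟨a, ha, ⟨u, -, hu⟩, v, -, hv⟩ := exists_north hf
  have h1 : Coc (Prod.snd ⁻¹' band (m + 1)) (n + 1) (u - v) := by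
    have := (hv.mono (A := Prod.snd ⁻¹' band (m + 1)) (Set.preimage_mono Set.inter_subset_right)).sub
      (hu.mono (Set.preimage_mono Set.inter_subset_left))
    rwa [sub_sub_sub_cancel_left, ← d_sub] at this
  refine ⟨a, u, v, _, ha, hu, hv, h1.pull (uc_eqt m) fun x _ => mem_band_eqt x.2, ?_⟩
  rw [pull_pull]
  exact bd_band h1

theorem kunneth_low {m q : ℕ} (hq : q < m) {f : List (Y × Sph m) → L}
    (hf : Coc Set.univ (q + 1) f) :
    ∃ a : List Y → L, Coc Set.univ (q + 1) a ∧ Bd Set.univ (q + 1) (f - pull Prod.fst a) := by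
  induction m generalizing q with
  | zero => omega
  | succ m ih =>
    cases q with
    | zero =>
      obtain ⟨a, ha, ⟨u, hu0, hu⟩, v, hv0, hv⟩ := exists_north hf
      have key : ∀ (A : Set (Y × Sph (m + 1))) (u : List (Y × Sph (m + 1)) → L), u [] = 0 →
          LZ A 1 (f - pull Prod.fst a - d u) → LZ A 1 (f - pull Prod.fst a) := by
        intro A u hu0 hu
        refine hu.congr fun l hl _ => ?_
        match l, hl with
        | [x], _ => simp [d_cons, hu0]
      exact ⟨a, ha, ((cov_sph (m + 1)).preimage_snd.lz (key _ u hu0 hu) (key _ v hv0 hv)).bd⟩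
    | succ q =>
      obtain ⟨a, u, v, w, ha, hu, hv, hw, huv⟩ := exists_band hf
      obtain ⟨a₁, ha₁, hw'⟩ := ih (by omega) hw
      have h1 := huv.add (hw'.pull (uc_ret m) (Set.mapsTo_univ _ _))
      rw [pull_sub, pull_pull, sub_add_sub_cancel] at h1
      obtain ⟨η, -, h1⟩ := h1
      refine ⟨a, ha, (cov_sph (m + 1)).preimage_snd.bd (u := u - pull Prod.fst a₁ - d η)
        (v := v) ?_ hv ?_⟩
      · have h2 : Coc (Prod.snd ⁻¹' cap (m + 1) 1) (q + 1) (pull (Prod.fst : _ → Y) a₁) :=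
          ha₁.pull (uc_fst _) (Set.mapsTo_univ _ _)
        have := hu.add h2
        rw [d_sub, d_sub, d_d]
        convert this using 1
        abel
      · have e : u - pull Prod.fst a₁ - d η - v = u - v - pull Prod.fst a₁ - d η := by abel
        rw [e]
        exact h1

theorem kunneth_surj (m p : ℕ) {f : List (Y × Sph m) → L} (hf : Coc Set.univ (p + m + 1) f) :
    ∃ a b : List Y → L, Coc Set.univ (p + m + 1) a ∧ Coc Set.univ (p + 1) b ∧
      Bd Set.univ (p + m + 1) (f - pull Prod.fst a -
        cup p (pull Prod.fst b) (pull Prod.snd (sg m))) := by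
  induction m with
  | zero => exact kunneth_surj_zero hf
  | succ m ih =>
    obtain ⟨a, u, v, w, ha, hu, hv, hw, huv⟩ := exists_band (n := p + m) hf
    obtain ⟨a₁, b₁, ha₁, hb₁, hw'⟩ := ih hw
    refine ⟨a, (-1 : ℤ) ^ p • b₁, ha, hb₁.smul _, ?_⟩
    have h1 := huv.add (hw'.pull (uc_ret m) (Set.mapsTo_univ _ _))
    rw [pull_sub, pull_sub, pull_pull, pull_cup, pull_pull, pull_pull] at h1
    obtain ⟨η, -, h1⟩ := h1
    have h2 := lz_cup_north (m := m) hb₁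
    have h3 := lz_cup_south m p b₁
    have hs : ((-1 : ℤ) ^ p) * (-1) ^ p = 1 := by rw [← mul_pow]; simp
    rw [pull_smul, cup_smul]
    refine (cov_sph (m + 1)).preimage_snd.bd (n := p + m)
      (u := u - pull Prod.fst a₁ - cup p (pull Prod.fst b₁) (pull Prod.snd (st m)) - d η)
      (v := v) ?_ ?_ ?_
    · have h4 : Coc (Prod.snd ⁻¹' cap (m + 1) 1) (p + m + 1) (pull (Prod.fst : _ → Y) a₁) :=
        ha₁.pull (uc_fst _) (Set.mapsTo_univ _ _)
      have := (hu.add h4).sub (h2.smul ((-1) ^ p))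
      rw [d_zsmul, smul_sub, smul_smul, hs, one_smul] at this
      rw [d_sub, d_sub, d_sub, d_d]
      convert this using 1
      abel
    · have := hv.sub (h3.smul ((-1) ^ p))
      convert this using 1
      abel
    · refine h1.congr fun l hl hl' => ?_
      have e : cup p (pull Prod.fst b₁) (pull Prod.snd (st m)) l =
          cup p (pull (fun x : Y × Sph (m + 1) => x.1) b₁)
            (pull (fun x : Y × Sph (m + 1) => ret x.2) (sg m)) l := by
        simp only [cup]
        congr 1
        simp only [pull, st]
        rw [extz_of]
        · simp [pull, List.map_map, Function.comp_def]
        · intro x hx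
          obtain ⟨y, hy, rfl⟩ := List.mem_map.1 hx
          exact hl' y (List.drop_subset p l hy)
      simp only [Pi.sub_apply, Pi.add_apply, e]
      abel

end Kunneth

section Torus

/-- The product of `t` copies of the sphere. -/
abbrev Tor (m t : ℕ) : Type := Fin t → Sph m

/-- The cocycle pulled back from the `i`-th factor. -/
def xc {m t : ℕ} (i : Fin t) : List (Tor m t) → ℤ := pull (fun x => x i) (sg m)

theorem uc_of_cont {X Y : Type*} [PseudoMetricSpace X] [PseudoMetricSpace Y] [CompactSpace X]
    {f : X → Y} (hf : Continuous f) (A : Set X) : UniformContinuousOn f A :=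
  (CompactSpace.uniformContinuous_of_continuous hf).uniformContinuousOn

theorem coc_xc {m t : ℕ} (i : Fin t) : Coc Set.univ (m + 1) (xc (m := m) i) :=
  (coc_sg m).pull (uc_of_cont (continuous_apply i) _) (Set.mapsTo_univ _ _)

variable {m t : ℕ} {L : Type*} [AddCommGroup L]

/-- Splitting off the first factor. -/
def spl (x : Tor m (t + 1)) : Tor m t × Sph m := (Fin.tail x, x 0)

/-- The inverse of `spl`. -/
def jn (p : Tor m t × Sph m) : Tor m (t + 1) := Fin.cons p.2 p.1

theorem continuous_tail : Continuous (Fin.tail : Tor m (t + 1) → Tor m t) :=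
  continuous_pi fun i => continuous_apply i.succ

theorem continuous_spl : Continuous (spl (m := m) (t := t)) :=
  continuous_tail.prodMk (continuous_apply 0)

theorem continuous_jn : Continuous (jn (m := m) (t := t)) := by
  refine continuous_pi fun i => ?_
  refine Fin.cases ?_ (fun i => ?_) i
  · exact continuous_snd
  · exact (continuous_apply i).comp continuous_fst

theorem jn_spl (x : Tor m (t + 1)) : jn (spl x) = x := Fin.cons_self_tail x

theorem pull_spl_jn (f : List (Tor m (t + 1)) → L) : pull spl (pull jn f) = f := by
  rw [pull_pull]
  simp only [jn_spl, pull_id]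

theorem pull_jn_tail (a : List (Tor m t) → L) :
    pull jn (pull (Fin.tail : Tor m (t + 1) → Tor m t) a) = pull Prod.fst a := by
  rw [pull_pull]
  rfl

theorem pull_jn_xc : pull jn (xc (m := m) (0 : Fin (t + 1))) = pull Prod.snd (sg m) := by
  rw [xc, pull_pull]
  rfl

theorem bd_of_jn {n : ℕ} {f : List (Tor m (t + 1)) → L} (h : Bd Set.univ n (pull jn f)) :
    Bd Set.univ n f := by
  have := h.pull (uc_of_cont continuous_spl Set.univ) (Set.mapsTo_univ _ _)
  rwa [pull_spl_jn] at this

theorem bd_jn {n : ℕ} {f : List (Tor m (t + 1)) → L} (h : Bd Set.univ n f) :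
    Bd Set.univ n (pull jn f) :=
  h.pull (uc_of_cont continuous_jn Set.univ) (Set.mapsTo_univ _ _)

theorem coc_jn {n : ℕ} {f : List (Tor m (t + 1)) → L} (h : Coc Set.univ n f) :
    Coc Set.univ n (pull jn f) :=
  h.pull (uc_of_cont continuous_jn Set.univ) (Set.mapsTo_univ _ _)

theorem tor_surj {p : ℕ} {f : List (Tor m (t + 1)) → L} (hf : Coc Set.univ (p + m + 1) f) :
    ∃ a b : List (Tor m t) → L, Coc Set.univ (p + m + 1) a ∧ Coc Set.univ (p + 1) b ∧
      Bd Set.univ (p + m + 1) (f - pull Fin.tail a - cup p (pull Fin.tail b) (xc 0)) := by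
  obtain ⟨a, b, ha, hb, h⟩ := kunneth_surj m p (coc_jn hf)
  refine ⟨a, b, ha, hb, bd_of_jn ?_⟩
  rwa [pull_sub, pull_sub, pull_cup, pull_jn_tail, pull_jn_tail, pull_jn_xc]

theorem tor_low {q : ℕ} (hq : q < m) {f : List (Tor m (t + 1)) → L}
    (hf : Coc Set.univ (q + 1) f) :
    ∃ a : List (Tor m t) → L, Coc Set.univ (q + 1) a ∧
      Bd Set.univ (q + 1) (f - pull Fin.tail a) := by
  obtain ⟨a, ha, h⟩ := kunneth_low hq (coc_jn hf)
  refine ⟨a, ha, bd_of_jn ?_⟩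
  rwa [pull_sub, pull_jn_tail]

theorem tor_inj {p : ℕ} {a b : List (Tor m t) → L} (hb : Coc Set.univ (p + 1) b)
    (h : Bd Set.univ (p + m + 1) (pull (Fin.tail : Tor m (t + 1) → Tor m t) a +
      cup p (pull Fin.tail b) (xc 0))) :
    Bd Set.univ (p + m + 1) a ∧ Bd Set.univ (p + 1) b := by
  have := bd_jn h
  rw [pull_add, pull_cup, pull_jn_tail, pull_jn_tail, pull_jn_xc] at this
  exact ⟨kunneth_left this, kunneth_inj m p hb this⟩

theorem bd_tail {n : ℕ} {f : List (Tor m t) → L} (h : Bd Set.univ n f) :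
    Bd Set.univ n (pull (Fin.tail : Tor m (t + 1) → Tor m t) f) :=
  h.pull (uc_of_cont continuous_tail Set.univ) (Set.mapsTo_univ _ _)

theorem bd_point {X : Type*} [PseudoMetricSpace X] [Subsingleton X] (x : X) {n : ℕ}
    {f : List X → L} (hf : Coc Set.univ (n + 2) f) : Bd Set.univ (n + 2) f := by
  obtain ⟨ε, hε, h⟩ := hf
  refine Bd.of_two_le (by omega) (fun l => f (x :: l)) (LZ.of_eq fun l hl _ => ?_)
  rw [Pi.sub_apply, d_cone f x l, sub_self]
  refine h _ (by simp [hl]) (by simp) fun y _ z _ => ?_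
  rw [Subsingleton.elim y z, dist_self]
  exact hε

theorem lz_of_bd_one {X : Type*} [PseudoMetricSpace X] {A : Set X} {f : List X → L}
    (h : Bd A 1 f) : LZ A 1 f := by
  obtain ⟨η, h0, h⟩ := h
  refine h.congr fun l hl _ => ?_
  match l, hl with
  | [x], _ => simp [d_cons, h0]

theorem tor_zero (hm : 0 < m) {f : List (Tor m t) → L} (hf : Coc Set.univ 1 f) :
    ∃ c : L, LZ Set.univ 1 (f - fun _ => c) := by
  induction t with
  | zero =>
    refine ⟨f [Fin.elim0], LZ.of_eq fun l hl _ => ?_⟩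
    match l, hl with
    | [x], _ => rw [Subsingleton.elim x Fin.elim0]; simp
  | succ t ih =>
    obtain ⟨a, ha, h⟩ := tor_low (q := 0) hm hf
    obtain ⟨c, hc⟩ := ih ha
    refine ⟨c, lz_of_bd_one ?_⟩
    have := h.add (bd_tail hc.bd)
    rw [pull_sub, sub_add_sub_cancel] at this
    exact this

theorem tor_lt {q : ℕ} (hq0 : 0 < q) (hq : q < m) {f : List (Tor m t) → L}
    (hf : Coc Set.univ (q + 1) f) : Bd Set.univ (q + 1) f := by
  obtain ⟨q, rfl⟩ := Nat.exists_eq_add_of_le' hq0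
  induction t with
  | zero => exact bd_point Fin.elim0 hf
  | succ t ih =>
    obtain ⟨a, ha, h⟩ := tor_low hq hf
    simpa using h.add (bd_tail (ih ha))

theorem coc_zero_left {a : List (Tor m t) → L} {p : ℕ} (ha : Bd Set.univ (p + 1) a) :
    Bd Set.univ (p + m + 1) (cup p (pull (Fin.tail : Tor m (t + 1) → Tor m t) a) (xc 0)) :=
  Bd.cup_left (bd_tail ha) (coc_xc 0)

theorem tor_gt {q : ℕ} (hq : m * t < q) {f : List (Tor m t) → L}
    (hf : Coc Set.univ (q + 1) f) : Bd Set.univ (q + 1) f := by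
  induction t generalizing q with
  | zero =>
    obtain ⟨q, rfl⟩ := Nat.exists_eq_add_of_le' (show 0 < q by omega)
    exact bd_point Fin.elim0 hf
  | succ t ih =>
    rw [Nat.mul_succ] at hq
    obtain ⟨p, rfl⟩ := Nat.exists_eq_add_of_le' (show m ≤ q by omega)
    obtain ⟨a, b, ha, hb, h⟩ := tor_surj hf
    have h1 := (h.add (coc_zero_left (ih (by omega) hb))).add (bd_tail (ih (by omega) ha))
    simpa using h1

/-- The iterated product of cochains of degree `m`. -/
def prd (m : ℕ) {X : Type*} : List (List X → ℤ) → List X → ℤ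
  | [] => fun _ => 1
  | y :: ys => cup (m * ys.length) (prd m ys) y

theorem pull_prd {X Y : Type*} (φ : X → Y) (ys : List (List Y → ℤ)) :
    pull φ (prd m ys) = prd m (ys.map (pull φ)) := by
  induction ys with
  | nil => rfl
  | cons y ys ih => simp only [prd, pull_cup, ih, List.map_cons, List.length_map]

theorem coc_one {X : Type*} [PseudoMetricSpace X] (A : Set X) (c : L) :
    Coc A 1 (fun _ : List X => c) := by
  refine LZ.of_eq fun l hl _ => ?_
  match l, hl with
  | [x, y], _ => simp [d_cons]

theorem coc_prd {X : Type*} [PseudoMetricSpace X] {A : Set X} {ys : List (List X → ℤ)}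
    (h : ∀ y ∈ ys, Coc A (m + 1) y) : Coc A (m * ys.length + 1) (prd m ys) := by
  induction ys with
  | nil => exact coc_one A 1
  | cons y ys ih =>
    have := (ih fun z hz => h z (List.mem_cons_of_mem _ hz)).cup (h y (by simp))
    rwa [List.length_cons, Nat.mul_succ]

/-- The top class. -/
def tht (m t : ℕ) : List (Tor m t) → ℤ := prd m (List.ofFn xc)

theorem pull_tail_xc (i : Fin t) :
    pull (Fin.tail : Tor m (t + 1) → Tor m t) (xc i) = xc i.succ := by
  rw [xc, pull_pull]
  rfl

theorem tht_succ (m t : ℕ) : tht m (t + 1) = cup (m * t) (pull Fin.tail (tht m t)) (xc 0) := by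
  have h : (pull Fin.tail) ∘ (xc (m := m) (t := t)) = fun i => xc i.succ :=
    funext pull_tail_xc
  rw [tht, List.ofFn_succ, prd, List.length_ofFn, tht, pull_prd, List.map_ofFn, h]

theorem coc_tht (m t : ℕ) : Coc Set.univ (m * t + 1) (tht m t) := by
  have := coc_prd (m := m) (A := Set.univ) (ys := List.ofFn (xc (m := m) (t := t))) (by
    intro y hy
    obtain ⟨i, rfl⟩ := (List.mem_ofFn' _ _).1 hy
    exact coc_xc i)
  rwa [List.length_ofFn] at this

theorem exists_top (hm : 0 < m) {f : List (Tor m t) → ℤ} (hf : Coc Set.univ (m * t + 1) f) :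
    ∃ c : ℤ, Bd Set.univ (m * t + 1) (f - c • tht m t) := by
  induction t with
  | zero =>
    refine ⟨f [Fin.elim0], LZ.bd <| LZ.of_eq fun l hl _ => ?_⟩
    match l, hl with
    | [x], _ => rw [Subsingleton.elim x Fin.elim0]; simp [tht, prd]
  | succ t ih =>
    rw [Nat.mul_succ] at hf ⊢
    obtain ⟨a, b, ha, hb, h⟩ := tor_surj hf
    obtain ⟨c, hc⟩ := ih hb
    refine ⟨c, ?_⟩
    have h1 := (h.add (coc_zero_left hc)).add (bd_tail (tor_gt (by omega) ha))
    rw [pull_sub, cup_sub, pull_smul, cup_smul, ← tht_succ] at h1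
    convert h1 using 1
    abel

theorem point_exists (m t : ℕ) : ∃ _ : Tor m t, True :=
  ⟨fun _ => nrm ((1 : ℝ) • vec0 m), trivial⟩

theorem lz_const {X : Type*} [PseudoMetricSpace X] {n : ℕ} {c : L} (x : X)
    (h : LZ Set.univ n (fun _ : List X => c)) : c = 0 := by
  obtain ⟨ε, hε, h⟩ := h
  refine h (List.replicate n x) (by simp) (by simp) fun y hy z hz => ?_
  rw [List.eq_of_mem_replicate hy, List.eq_of_mem_replicate hz, dist_self]
  exact hε

theorem top_unique {c : ℤ} (h : Bd Set.univ (m * t + 1) (c • tht m t)) : c = 0 := by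
  induction t with
  | zero =>
    have := lz_const (L := ℤ) (c := c) Fin.elim0 ((lz_of_bd_one h).congr (by simp [tht, prd]))
    exact this
  | succ t ih =>
    refine ih (tor_inj (a := 0) ((coc_tht m t).smul c) ?_).2
    rwa [pull_zero, zero_add, pull_smul, cup_smul, ← tht_succ, ← Nat.mul_succ]

theorem cup_zero_const {X : Type*} (c : L) (ψ : List X → ℤ) :
    cup 0 (fun _ => c) ψ = fun l => ψ l • c := by
  funext l; simp [cup]

theorem exists_coeff (hm : 0 < m) {f : List (Tor m t) → ℤ} (hf : Coc Set.univ (m + 1) f) :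
    ∃ c : Fin t → ℤ, Bd Set.univ (m + 1) (f - ∑ i, c i • xc i) := by
  induction t with
  | zero => exact ⟨0, by simpa using tor_gt (by omega) hf⟩
  | succ t ih =>
    obtain ⟨a, b, ha, hb, h⟩ := tor_surj (p := 0) (by simpa using hf)
    rw [zero_add] at ha h
    obtain ⟨c, hc⟩ := ih ha
    obtain ⟨c0, hc0⟩ := tor_zero hm hb
    refine ⟨Fin.cons c0 c, ?_⟩
    have h1 := (h.add (by simpa using coc_zero_left (p := 0) hc0.bd)).add (bd_tail hc)
    rw [pull_sub, cup_sub, pull_sub, pull_sum] at h1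
    rw [Fin.sum_univ_succ]
    simp only [Fin.cons_zero, Fin.cons_succ]
    have e1 : cup 0 (pull (Fin.tail : Tor m (t + 1) → Tor m t) fun _ => c0) (xc 0) = c0 • xc 0 := by
      change cup 0 (fun _ => c0) _ = _
      rw [cup_zero_const]
      funext l
      simp [mul_comm]
    rw [e1] at h1
    simp only [pull_smul, pull_tail_xc] at h1
    convert h1 using 1
    abel

theorem coeff_unique {c : Fin t → ℤ} (h : Bd Set.univ (m + 1) (∑ i, c i • xc (m := m) i)) :
    c = 0 := by
  induction t with
  | zero => exact Subsingleton.elim _ _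
  | succ t ih =>
    have h1 : ∑ i, c i • xc (m := m) i = pull Fin.tail (∑ i : Fin t, c i.succ • xc i) +
        cup 0 (pull Fin.tail fun _ => c 0) (xc 0) := by
      change _ = _ + cup 0 (fun _ => c 0) _
      rw [Fin.sum_univ_succ, cup_zero_const, pull_sum]
      simp only [pull_smul, pull_tail_xc]
      rw [add_comm (c 0 • xc (m := m) 0)]
      congr 1
      funext l
      simp [mul_comm]
    rw [h1] at h
    have h2 := tor_inj (p := 0) (coc_one _ _) (by simpa using h)
    rw [zero_add] at h2
    have h3 := ih h2.1
    obtain ⟨x, -⟩ := point_exists m t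
    have h4 := lz_const x (lz_of_bd_one h2.2)
    funext i
    refine Fin.cases h4 (fun i => ?_) i
    exact congrFun h3 i

end Torus

section Parity

variable {m t : ℕ}

/-- Equality of classes up to sign. -/
def Sgn {X : Type*} [PseudoMetricSpace X] (n : ℕ) (f g : List X → ℤ) : Prop :=
  ∃ s : ℤ, (s = 1 ∨ s = -1) ∧ Bd Set.univ n (f - s • g)

theorem Sgn.refl {X : Type*} [PseudoMetricSpace X] {n : ℕ} (f : List X → ℤ) : Sgn n f f :=
  ⟨1, Or.inl rfl, by simpa using Bd.zero⟩

theorem Sgn.trans {X : Type*} [PseudoMetricSpace X] {n : ℕ} {f g h : List X → ℤ}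
    (h1 : Sgn n f g) (h2 : Sgn n g h) : Sgn n f h := by
  obtain ⟨s, hs, h1⟩ := h1
  obtain ⟨s', hs', h2⟩ := h2
  refine ⟨s * s', by rcases hs with rfl | rfl <;> rcases hs' with rfl | rfl <;> simp, ?_⟩
  have := h1.add (h2.smul s)
  rwa [smul_sub, smul_smul, sub_add_sub_cancel] at this

theorem bd_sq (hm : 0 < m) (i : Fin t) :
    Bd Set.univ (m + m + 1) (cup m (xc (m := m) i) (xc i)) := by
  have h1 : Bd Set.univ (m + m + 1) (cup m (xc (m := m) (0 : Fin 1)) (xc 0)) :=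
    tor_gt (by omega) ((coc_xc 0).cup (coc_xc 0))
  have h2 := h1.pull (uc_of_cont (f := fun (x : Tor m t) (_ : Fin 1) => x i)
    (continuous_pi fun _ => continuous_apply i) Set.univ) (Set.mapsTo_univ _ _)
  rw [pull_cup, xc, pull_pull] at h2
  exact h2

theorem tht_two : tht m 2 = cup m (xc 1) (xc 0) := by
  have : cup (m * 0) (fun _ => (1 : ℤ)) (xc (m := m) (1 : Fin 2)) = xc 1 := by
    rw [Nat.mul_zero, cup_zero_const]
    funext l
    simp
  simp only [tht, List.ofFn_succ, List.ofFn_zero, prd, List.length_cons, List.length_nil]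
  simp only [zero_add, mul_one]
  exact congrArg (fun f => cup m f (xc 0)) this

theorem sgn_swap (hm : 0 < m) (i j : Fin t) :
    Sgn (m + m + 1) (cup m (xc (m := m) i) (xc j)) (cup m (xc j) (xc i)) := by
  have hτ : Continuous (fun (x : Tor m 2) (k : Fin 2) => x (1 - k)) :=
    continuous_pi fun k => continuous_apply _
  have e1 : pull (fun (x : Tor m 2) (k : Fin 2) => x (1 - k)) (xc 0) = xc 1 := by
    rw [xc, pull_pull]
    rfl
  have e2 : pull (fun (x : Tor m 2) (k : Fin 2) => x (1 - k)) (xc 1) = xc 0 := by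
    rw [xc, pull_pull]
    rfl
  have hs : Sgn (m + m + 1) (cup m (xc (m := m) (0 : Fin 2)) (xc 1)) (cup m (xc 1) (xc 0)) := by
    obtain ⟨c, hc⟩ := exists_top (t := 2) hm (f := cup m (xc 0) (xc 1))
      (by rw [mul_two]; exact (coc_xc 0).cup (coc_xc 1))
    have h1 := hc.pull (uc_of_cont hτ Set.univ) (Set.mapsTo_univ _ _)
    rw [pull_sub, pull_smul, tht_two, pull_cup, pull_cup, e1, e2] at h1
    rw [tht_two] at hc
    have h2 := h1.add (hc.smul c)
    rw [smul_sub, sub_add_sub_cancel, smul_smul, ← tht_two] at h2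
    have h3 := top_unique (c := 1 - c * c) (by rwa [sub_smul, one_smul])
    refine ⟨c, ?_, by rwa [mul_two] at hc⟩
    exact mul_self_eq_one_iff.1 (by linarith)
  obtain ⟨s, hs, h⟩ := hs
  refine ⟨s, hs, ?_⟩
  have h2 := h.pull (uc_of_cont (f := fun (x : Tor m t) (k : Fin 2) => if k = 0 then x i else x j)
    (continuous_pi fun k => by split_ifs <;> exact continuous_apply _) Set.univ)
    (Set.mapsTo_univ _ _)
  rw [pull_sub, pull_smul, pull_cup, pull_cup] at h2
  simp only [xc, pull_pull] at h2
  exact h2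

/-- The product along a word. -/
def wd (m : ℕ) {t : ℕ} (w : List (Fin t)) : List (Tor m t) → ℤ := prd m (w.map xc)

theorem wd_cons (i : Fin t) (w : List (Fin t)) :
    wd m (i :: w) = cup (m * w.length) (wd m w) (xc i) := by
  simp [wd, prd]

theorem coc_wd (w : List (Fin t)) : Coc Set.univ (m * w.length + 1) (wd m w) := by
  have := coc_prd (m := m) (A := Set.univ) (ys := w.map (xc (m := m) (t := t))) (by
    intro y hy
    obtain ⟨i, -, rfl⟩ := List.mem_map.1 hy
    exact coc_xc i)
  rwa [List.length_map] at this

theorem wd_cons_cons (i j : Fin t) (w : List (Fin t)) :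
    wd m (i :: j :: w) = cup (m * w.length) (wd m w) (cup m (xc j) (xc i)) := by
  rw [wd_cons, wd_cons, List.length_cons, Nat.mul_succ, cup_assoc]

theorem wd_perm (hm : 0 < m) {w w' : List (Fin t)} (h : w.Perm w') :
    Sgn (m * w.length + 1) (wd m w) (wd m w') := by
  induction h with
  | nil => exact Sgn.refl _
  | @cons x l₁ l₂ h ih =>
    obtain ⟨s, hs, ih⟩ := ih
    refine ⟨s, hs, ?_⟩
    have := ih.cup_left (coc_xc x)
    rwa [cup_sub, cup_smul, ← wd_cons, h.length_eq, ← wd_cons, ← Nat.mul_succ, ← h.length_eq]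
      at this
  | swap x y l =>
    obtain ⟨s, hs, h⟩ := sgn_swap (m := m) hm x y
    refine ⟨s, hs, ?_⟩
    have := Bd.cup_right (coc_wd (m := m) l) (q := m + m) h
    rw [sub_cup, smul_cup, ← wd_cons_cons, ← wd_cons_cons] at this
    convert this using 1
    simp only [List.length_cons]
    ring
  | trans h1 h2 ih1 ih2 => exact ih1.trans (by rwa [h1.length_eq])

theorem wd_dup (hm : 0 < m) {w : List (Fin t)} (h : ¬ w.Nodup) :
    Bd Set.univ (m * w.length + 1) (wd m w) := by
  obtain ⟨x, hx⟩ := List.exists_duplicate_iff_not_nodup.2 h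
  obtain ⟨l, hl⟩ := (List.duplicate_iff_sublist.1 hx).exists_perm_append
  obtain ⟨s, -, hs⟩ := wd_perm hm hl
  have h1 := Bd.cup_right (coc_wd (m := m) l) (q := m + m) (bd_sq hm x)
  rw [← wd_cons_cons] at h1
  have h2 : Bd Set.univ (m * w.length + 1) (wd m (x :: x :: l)) := by
    convert h1 using 1
    rw [hl.length_eq]
    simp only [List.length_append, List.length_cons, List.length_nil]
    ring
  simpa using hs.add (h2.smul s)

/-- The combination of the standard cocycles with given coefficients. -/
def lin (m : ℕ) {t : ℕ} (c : Fin t → ℤ) : List (Tor m t) → ℤ := ∑ i, c i • xc i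

theorem lin_add (c c' : Fin t → ℤ) : lin m (c + c') = lin m c + lin m c' := by
  simp [lin, add_smul, Finset.sum_add_distrib]

theorem lin_smul (a : ℤ) (c : Fin t → ℤ) : lin m (a • c) = a • lin m c := by
  simp [lin, mul_smul, Finset.smul_sum]

theorem lin_single (i : Fin t) : lin m (Pi.single i 1) = xc i := by
  rw [lin, Finset.sum_eq_single i]
  · simp
  · intro j _ h
    simp [h]
  · simp

theorem coc_lin (c : Fin t → ℤ) : Coc Set.univ (m + 1) (lin m c) :=
  Coc.sum fun i _ => (coc_xc i).smul _

variable {X : Type*}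

theorem prd_update_add {n : ℕ} (v : Fin n → List X → ℤ) (i : Fin n) (x y : List X → ℤ) :
    prd m (List.ofFn (Function.update v i (x + y))) =
      prd m (List.ofFn (Function.update v i x)) + prd m (List.ofFn (Function.update v i y)) := by
  induction n with
  | zero => exact i.elim0
  | succ n ih =>
    refine Fin.cases ?_ (fun i => ?_) i
    · simp [List.ofFn_succ, prd, add_cup]
    · have := ih (Fin.tail v) i
      simp only [← Fin.tail_update_succ] at this
      simp only [List.ofFn_succ, prd, Function.update_of_ne (Fin.succ_ne_zero i).symm]
      simp only [List.length_ofFn]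
      rw [← cup_add]
      congr 1

theorem prd_update_smul {n : ℕ} (v : Fin n → List X → ℤ) (i : Fin n) (a : ℤ) (x : List X → ℤ) :
    prd m (List.ofFn (Function.update v i (a • x))) =
      a • prd m (List.ofFn (Function.update v i x)) := by
  induction n with
  | zero => exact i.elim0
  | succ n ih =>
    refine Fin.cases ?_ (fun i => ?_) i
    · simp [List.ofFn_succ, prd, smul_cup, -zsmul_eq_mul]
    · have := ih (Fin.tail v) i
      simp only [← Fin.tail_update_succ] at this
      simp only [List.ofFn_succ, prd, Function.update_of_ne (Fin.succ_ne_zero i).symm]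
      simp only [List.length_ofFn]
      rw [← cup_smul]
      congr 1

/-- The coefficient of the top class. -/
def tp (hm : 0 < m) (f : List (Tor m t) → ℤ) : ℤ := by
  classical exact if h : Coc Set.univ (m * t + 1) f then (exists_top hm h).choose else 0

theorem tp_spec (hm : 0 < m) {f : List (Tor m t) → ℤ} (h : Coc Set.univ (m * t + 1) f) :
    Bd Set.univ (m * t + 1) (f - tp hm f • tht m t) := by
  rw [tp, dif_pos h]
  exact (exists_top hm h).choose_spec

theorem tp_eq (hm : 0 < m) {f : List (Tor m t) → ℤ} {c : ℤ}
    (h : Bd Set.univ (m * t + 1) (f - c • tht m t)) : tp hm f = c := by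
  have hf : Coc Set.univ (m * t + 1) f := by
    simpa using h.coc.add ((coc_tht m t).smul c)
  have := h.sub (tp_spec hm hf)
  rw [sub_sub_sub_cancel_left, ← sub_smul] at this
  linarith [top_unique this]

theorem coc_prd_lin (v : Fin t → Fin t → ℤ) :
    Coc Set.univ (m * t + 1) (prd m (List.ofFn fun j => lin m (v j))) := by
  have := coc_prd (m := m) (A := Set.univ) (ys := List.ofFn fun j => lin m (v j)) (by
    intro y hy
    obtain ⟨i, rfl⟩ := (List.mem_ofFn' _ _).1 hy
    exact coc_lin _)
  rwa [List.length_ofFn] at this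

/-- The top coefficient of a product of `t` classes of degree `m`. -/
def topMul (hm : 0 < m) : MultilinearMap ℤ (fun _ : Fin t => Fin t → ℤ) ℤ where
  toFun v := tp hm (prd m (List.ofFn fun j => lin m (v j)))
  map_update_add' {inst} v i x y := by
    obtain rfl : inst = instDecidableEqFin t := Subsingleton.elim _ _
    have e : ∀ z : Fin t → ℤ, (fun j => lin m (Function.update v i z j)) =
        Function.update (fun j => lin m (v j)) i (lin m z) := fun z => by
      funext j
      exact Function.apply_update (fun _ => lin m) v i z j
    refine tp_eq hm ?_
    have h1 := tp_spec hm (coc_prd_lin (m := m) (Function.update v i x))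
    have h2 := tp_spec hm (coc_prd_lin (m := m) (Function.update v i y))
    have h3 := h1.add h2
    convert h3 using 1
    rw [e, e, e, lin_add, prd_update_add, add_smul]
    abel
  map_update_smul' {inst} v i a x := by
    obtain rfl : inst = instDecidableEqFin t := Subsingleton.elim _ _
    have e : ∀ z : Fin t → ℤ, (fun j => lin m (Function.update v i z j)) =
        Function.update (fun j => lin m (v j)) i (lin m z) := fun z => by
      funext j
      exact Function.apply_update (fun _ => lin m) v i z j
    refine tp_eq hm ?_
    have h3 := (tp_spec hm (coc_prd_lin (m := m) (Function.update v i x))).smul a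
    convert h3 using 1
    rw [e, e, lin_smul, prd_update_smul, smul_sub, smul_smul]
    rfl

theorem topMul_single (hm : 0 < m) (f : Fin t → Fin t) :
    topMul hm (fun j => Pi.single (f j) (1 : ℤ)) = tp hm (wd m (List.ofFn f)) := by
  change tp hm _ = _
  simp only [lin_single, wd, List.map_ofFn]
  rfl

theorem topMul_parity (hm : 0 < m) :
    (Int.castAddHom (ZMod 2)).toIntLinearMap.compMultilinearMap (topMul (t := t) hm) =
      (Int.castAddHom (ZMod 2)).toIntLinearMap.compMultilinearMap
        (Matrix.detRowAlternating (n := Fin t) (R := ℤ)).toMultilinearMap := by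
  refine Module.Basis.ext_multilinear (fun _ => Pi.basisFun ℤ (Fin t)) fun v => ?_
  simp only [Pi.basisFun_apply]
  simp only [LinearMap.compMultilinearMap_apply, AddMonoidHom.coe_toIntLinearMap,
    Int.coe_castAddHom, topMul_single, AlternatingMap.coe_multilinearMap]
  by_cases hv : Function.Injective v
  · obtain ⟨σ, rfl⟩ : ∃ σ : Equiv.Perm (Fin t), ⇑σ = v :=
      ⟨Equiv.ofBijective v (Finite.injective_iff_bijective.1 hv), rfl⟩
    have h1 : Matrix.detRowAlternating (R := ℤ)
        (fun i => Pi.single (σ i) (1 : ℤ)) = (Equiv.Perm.sign σ : ℤ) := by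
      have := (Matrix.detRowAlternating (n := Fin t) (R := ℤ)).map_perm
        (fun i => Pi.single i (1 : ℤ)) σ
      have h2 : Matrix.detRowAlternating (R := ℤ) (fun i : Fin t => Pi.single i (1 : ℤ)) = 1 := by
        have := Matrix.det_one (n := Fin t) (R := ℤ)
        rw [← this]
        congr 1
        funext i j
        simp [Matrix.one_apply, Pi.single_apply, eq_comm]
      rw [h2] at this
      simpa [Function.comp_def, Units.smul_def] using this
    rw [h1]
    have hp : (List.ofFn σ).Perm (List.ofFn id) := by
      rw [List.perm_ext_iff_of_nodup (List.nodup_ofFn.2 σ.injective)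
        (List.nodup_ofFn.2 Function.injective_id)]
      intro a
      simpa [List.mem_ofFn] using σ.surjective a
    obtain ⟨s, hs, h2⟩ := wd_perm (m := m) hm hp
    rw [List.length_ofFn] at h2
    have h3 : wd m (List.ofFn (id : Fin t → Fin t)) = tht m t := by
      simp [wd, tht, List.map_ofFn]
    rw [h3] at h2
    rw [tp_eq hm h2]
    have : ∀ s : ℤ, s = 1 ∨ s = -1 → ((s : ℤ) : ZMod 2) = 1 := by
      rintro s (rfl | rfl) <;> simp
    rw [this s hs, this]
    rcases Int.units_eq_one_or (Equiv.Perm.sign σ) with h | h <;> simp [h]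
  · rw [AlternatingMap.map_eq_zero_of_not_injective]
    · have := wd_dup (m := m) hm (w := List.ofFn v) (by rwa [List.nodup_ofFn])
      rw [List.length_ofFn] at this
      rw [tp_eq hm (c := 0) (by simpa using this)]
    · intro h
      exact hv fun a b hab => h (by simp [hab])

theorem topMul_basis_odd (hm : 0 < m) (b : Module.Basis (Fin t) ℤ (Fin t → ℤ)) :
    Odd (topMul hm b) := by
  have h1 := congrArg (fun f => f b) (topMul_parity (t := t) hm)
  simp only [LinearMap.compMultilinearMap_apply, AddMonoidHom.coe_toIntLinearMap,
    Int.coe_castAddHom, AlternatingMap.coe_multilinearMap] at h1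
  have h2 := (Pi.basisFun ℤ (Fin t)).isUnit_det b
  rw [Pi.basisFun_det] at h2
  rw [← Int.not_even_iff_odd, even_iff_two_dvd]
  intro h
  have h3 := (ZMod.intCast_zmod_eq_zero_iff_dvd _ 2).2 h
  rw [h3] at h1
  have h4 := (ZMod.intCast_zmod_eq_zero_iff_dvd _ 2).1 h1.symm
  rcases Int.isUnit_iff.1 h2 with h | h <;> rw [h] at h4 <;> norm_num at h4

theorem bd_prd_sub {X : Type*} [PseudoMetricSpace X] {n : ℕ} {y z : Fin n → List X → ℤ}
    (hz : ∀ i, Coc Set.univ (m + 1) (z i)) (h : ∀ i, Bd Set.univ (m + 1) (y i - z i)) :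
    Bd Set.univ (m * n + 1) (prd m (List.ofFn y) - prd m (List.ofFn z)) := by
  have hy : ∀ i, Coc Set.univ (m + 1) (y i) := fun i => by simpa using (h i).coc.add (hz i)
  induction n with
  | zero => simpa [prd] using Bd.zero
  | succ n ih =>
    have h1 := ih (fun i => hz i.succ) (fun i => h i.succ) (fun i => hy i.succ)
    have h2 := h1.cup_left (hy 0)
    have h3 : Coc Set.univ (m * n + 1) (prd m (List.ofFn fun i : Fin n => z i.succ)) := by
      have := coc_prd (m := m) (A := Set.univ) (ys := List.ofFn fun i : Fin n => z i.succ) (by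
        intro y hy
        obtain ⟨i, rfl⟩ := (List.mem_ofFn' _ _).1 hy
        exact hz _)
      rwa [List.length_ofFn] at this
    have h4 := h2.add (Bd.cup_right h3 (h 0))
    rw [cup_sub, sub_cup, sub_add_sub_cancel] at h4
    rw [← Nat.mul_succ] at h4
    simpa only [List.ofFn_succ, prd, List.length_ofFn] using h4

theorem prd_basis (hm : 0 < m) (b : Module.Basis (Fin t) ℤ (Fin t → ℤ)) (a : Fin t → ℤ)
    {y : Fin t → List (Tor m t) → ℤ}
    (h : ∀ i, Bd Set.univ (m + 1) (y i - lin m (a i • b i))) :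
    ∃ c : ℤ, Odd c ∧ Bd Set.univ (m * t + 1)
      (prd m (List.ofFn y) - ((∏ i, a i) * c) • tht m t) := by
  refine ⟨_, topMul_basis_odd hm b, ?_⟩
  have h1 := bd_prd_sub (fun i => coc_lin (m := m) (a i • b i)) h
  have h2 := tp_spec hm (coc_prd_lin (m := m) fun i => a i • b i)
  have h3 : tp hm (prd m (List.ofFn fun i => lin m (a i • b i))) = (∏ i, a i) * topMul hm b := by
    have := (topMul (t := t) hm).map_smul_univ a b
    rwa [smul_eq_mul] at this
  rw [h3] at h2
  simpa using h1.add h2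

end Parity

section Coeff

variable {X L M : Type*} [PseudoMetricSpace X] [AddCommGroup L] [AddCommGroup M]
  {A : Set X} {n : ℕ}

theorem lz_hom {f : List X → L} (φ : L →+ M) (hf : LZ A n f) : LZ A n (fun l => φ (f l)) := by
  obtain ⟨ε, hε, h⟩ := hf
  exact ⟨ε, hε, fun l h1 h2 h3 => (congrArg φ (h l h1 h2 h3)).trans φ.map_zero⟩

theorem lz_of_inj {f : List X → L} (φ : L →+ M) (hφ : Function.Injective φ)
    (hf : LZ A n (fun l => φ (f l))) : LZ A n f := by
  obtain ⟨ε, hε, h⟩ := hf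
  exact ⟨ε, hε, fun l h1 h2 h3 => hφ ((h l h1 h2 h3).trans φ.map_zero.symm)⟩

theorem lz_pi {ι : Type*} [Finite ι] {f : List X → ι → L} (hf : ∀ i, LZ A n (fun l => f l i)) :
    LZ A n f := by
  classical
  cases nonempty_fintype ι
  have h1 : LZ A n (∑ i, fun l => AddMonoidHom.single (fun _ : ι => L) i (f l i)) :=
    LZ.sum fun i _ => lz_hom _ (hf i)
  refine h1.congr fun l _ _ => ?_
  rw [Finset.sum_apply]
  exact Finset.univ_sum_single _

theorem lz_union {f : List X → L} {ι : Type*} [Finite ι] {U : ι → Set X} {ε : ℝ}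
    (hε : 0 < ε) (hU : ∀ x, ∃ i, ∀ y, dist x y < ε → y ∈ U i) (h0 : n ≠ 0)
    (hf : ∀ i, LZ (U i) n f) : LZ Set.univ n f := by
  classical
  have h1 : LZ Set.univ n (fun l i => if ∀ x ∈ l, x ∈ U i then f l else 0) := by
    refine lz_pi fun i => ?_
    obtain ⟨δ, hδ, h⟩ := hf i
    refine ⟨δ, hδ, fun l h1 _ h3 => ?_⟩
    simp only
    split_ifs with h4
    · exact h l h1 h4 h3
    · rfl
  obtain ⟨δ, hδ, h⟩ := h1
  refine ⟨min δ ε, lt_min hδ hε, fun l h1 h2 h3 => ?_⟩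
  have h4 := h l h1 h2 fun x hx y hy => (h3 x hx y hy).trans_le (min_le_left _ _)
  match l, h1 with
  | [], h1 => exact absurd h1.symm h0
  | x :: l, _ =>
    obtain ⟨i, hi⟩ := hU x
    have h5 := congrFun h4 i
    simp only at h5
    rwa [if_pos] at h5
    exact fun y hy => hi y ((h3 x (by simp) y hy).trans_le (min_le_right _ _))

end Coeff

section GroupAction

variable {Γ X L : Type*} [Group Γ] [MulAction Γ X] [AddCommGroup L]

/-- The action of a group element on cochains with twisted coefficients. -/
def gact (a : Γ →* AddMonoid.End L) (γ : Γ) (f : List X → L) : List X → L :=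
  fun l => a γ (f (l.map (γ⁻¹ • ·)))

variable (a : Γ →* AddMonoid.End L)

theorem gact_sub (γ : Γ) (f g : List X → L) : gact a γ (f - g) = gact a γ f - gact a γ g := by
  funext l
  simp [gact]

theorem d_gact (γ : Γ) (f : List X → L) : d (gact a γ f) = gact a γ (d f) := by
  funext l
  exact (d_hom (a γ) _ l).trans (congrArg _ (d_map _ f l))

theorem lz_gact [PseudoMetricSpace X] {n : ℕ} {f : List X → L} {γ : Γ}
    (hc : UniformContinuousOn (fun x : X => γ⁻¹ • x) Set.univ) (hf : LZ Set.univ n f) :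
    LZ Set.univ n (gact a γ f) :=
  lz_hom (a γ) (hf.pull hc (Set.mapsTo_univ _ _))

theorem sum_gact_map [Fintype Γ] (f : List X → L) (γ : Γ) (l : List X) :
    (∑ g, gact a g f) (l.map (γ • ·)) = a γ ((∑ g, gact a g f) l) := by
  simp only [Finset.sum_apply, map_sum]
  refine (Fintype.sum_equiv (Equiv.mulLeft γ) _ _ fun g => ?_).symm
  simp only [gact, Equiv.coe_mulLeft, map_mul, AddMonoid.End.coe_mul, List.map_map,
    Function.comp_apply]
  have h : l.map ((fun x => (γ * g)⁻¹ • x) ∘ fun x => γ • x) = l.map (g⁻¹ • ·) :=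
    List.map_congr_left fun x _ => by simp [mul_smul]
  rw [h]

/-- The functions with sum zero. -/
def Zsum (Γ L : Type*) [Fintype Γ] [AddCommGroup L] : AddSubgroup (Γ → L) where
  carrier := {f | ∑ g, f g = 0}
  zero_mem' := by simp
  add_mem' {f g} hf hg := by
    simp only [Set.mem_ofPred_eq, Pi.add_apply, Finset.sum_add_distrib] at *
    rw [hf, hg, add_zero]
  neg_mem' {f} hf := by
    simp only [Set.mem_ofPred_eq, Pi.neg_apply, Finset.sum_neg_distrib] at *
    rw [hf, neg_zero]

theorem mem_Zsum [Fintype Γ] {f : Γ → L} : f ∈ Zsum Γ L ↔ ∑ g, f g = 0 := Iff.rfl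

/-- The twisted action on the functions with sum zero. -/
def zact [Fintype Γ] : Γ →* AddMonoid.End (Zsum Γ L) where
  toFun γ :=
    { toFun := fun f => ⟨fun g => a γ (f.1 (γ⁻¹ * g)), by
        have h := Equiv.sum_comp (Equiv.mulLeft γ⁻¹) f.1
        rw [mem_Zsum.1 f.2] at h
        rw [mem_Zsum, ← map_sum]
        exact (congrArg _ h).trans (map_zero _)⟩
      map_zero' := Subtype.ext (funext fun g => map_zero (a γ))
      map_add' := fun f f' => Subtype.ext (funext fun g => map_add (a γ) _ _) }
  map_one' := by
    refine AddMonoidHom.ext fun f => Subtype.ext (funext fun g => ?_)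
    change a 1 (f.1 (1⁻¹ * g)) = f.1 g
    simp
  map_mul' γ γ' := by
    refine AddMonoidHom.ext fun f => Subtype.ext (funext fun g => ?_)
    change a (γ * γ') (f.1 ((γ * γ')⁻¹ * g)) = a γ (a γ' (f.1 (γ'⁻¹ * (γ⁻¹ * g))))
    rw [map_mul, mul_inv_rev, mul_assoc]
    rfl

theorem zact_apply [Fintype Γ] (γ : Γ) (f : Zsum Γ L) (g : Γ) :
    (zact a γ f).1 g = a γ (f.1 (γ⁻¹ * g)) := rfl

open Classical in
/-- The indicator of a fibre of a function to a group, on one-point tuples. -/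
def ind (r : X → Γ) (g : Γ) : List X → ℤ
  | [x] => if r x = g then 1 else 0
  | _ => 0

theorem sum_ind [Fintype Γ] (r : X → Γ) (x : X) : ∑ g, ind r g [x] = 1 := by
  classical
  refine (Finset.sum_congr rfl fun g _ => ?_).trans
    (Finset.sum_ite_eq Finset.univ (r x) fun _ => (1 : ℤ)) |>.trans (by simp)
  simp only [ind]

theorem sum_d_ind [Fintype Γ] (r : X → Γ) (l : List X) : ∑ g, d (ind r g) l = 0 := by
  have h : ∀ l : List X, (∑ g, ind r g) l = if l.length = 1 then 1 else 0 := by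
    intro l
    rw [Finset.sum_apply]
    match l with
    | [] => simp [ind]
    | [x] => simpa using sum_ind r x
    | x :: y :: l => simp [ind]
  rw [← Finset.sum_apply, ← d_sum]
  match l with
  | [] => rfl
  | [x] => simp [d_cons, h]
  | [x, y] => simp [d_cons, h]
  | x :: y :: z :: l =>
    refine d_eq_zero fun l' _ h2 => (h l').trans (if_neg ?_)
    simp only [List.length_cons] at h2
    omega

theorem ind_map {r : X → Γ} (hr : ∀ (γ : Γ) x, r (γ • x) = γ * r x) (γ g : Γ) (l : List X) :
    ind r g (l.map (γ • ·)) = ind r (γ⁻¹ * g) l := by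
  match l with
  | [] => rfl
  | [x] =>
    classical
    have h : r (γ • x) = g ↔ r x = γ⁻¹ * g := by rw [hr, eq_inv_mul_iff_mul_eq]
    simp only [List.map_cons, List.map_nil, ind, h]
  | x :: y :: l => rfl

theorem d_ind_map {r : X → Γ} (hr : ∀ (γ : Γ) x, r (γ • x) = γ * r x) (γ g : Γ) (l : List X) :
    d (ind r g) (l.map (γ • ·)) = d (ind r (γ⁻¹ * g)) l := by
  rw [← d_map]
  congr 1
  funext l
  exact ind_map hr γ g l

end GroupAction

section Trace

variable {Γ X : Type} [Group Γ] [Fintype Γ] [PseudoMetricSpace X] [MulAction Γ X]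

theorem trace_aux {n : ℕ}
    (hX : ∀ (L : Type) [AddCommGroup L] (q : ℕ), n < q → ∀ f : List X → L,
      Coc Set.univ (q + 1) f → Bd Set.univ (q + 1) f)
    (hc : ∀ γ : Γ, UniformContinuousOn (fun x : X => γ • x) Set.univ)
    {ι : Type} [Finite ι] {U : ι → Set X} {r : ι → X → Γ} {ε : ℝ} (hε : 0 < ε)
    (hU : ∀ x, ∃ i, ∀ y, dist x y < ε → y ∈ U i)
    (hr : ∀ i (γ : Γ) x, r i (γ • x) = γ * r i x)
    (hrU : ∀ i, ∀ x ∈ U i, ∀ y ∈ U i, dist x y < ε → r i x = r i y) (S : Finset ι) :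
    ∀ (L : Type) [AddCommGroup L] (a : Γ →* AddMonoid.End L) (j : ℕ), n ≤ j →
      ∀ z : List X → L, (∀ (γ : Γ) l, z (l.map (γ • ·)) = a γ (z l)) → Coc Set.univ (j + 1) z →
      (∀ i ∉ S, LZ (U i) (j + 1) z) →
      ∃ F : List X → L, Coc Set.univ (j + 1) F ∧ LZ Set.univ (j + 1) (z - ∑ γ, gact a γ F) := by
  classical
  induction S using Finset.induction_on with
  | empty =>
    intro L _ a j hj z hz hzc h0
    refine ⟨0, Coc.zero, ?_⟩
    have h1 : LZ Set.univ (j + 1) z := by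
      refine lz_union hε hU (by omega) fun i => h0 i (by simp)
    refine h1.congr fun l _ _ => ?_
    simp [gact]
  | insert i S hi ih =>
    intro L _ a j hj z hz hzc h0
    let z' : List X → Zsum Γ L := fun l =>
      ⟨fun g => cup j z (d (ind (r i) g)) l, by
        simp only [mem_Zsum, cup]
        rw [← Finset.sum_smul, sum_d_ind, zero_smul]⟩
    have hz' : ∀ l g, (z' l).1 g = cup j z (d (ind (r i) g)) l := fun _ _ => rfl
    have hev : ∀ g, ∃ φ : Zsum Γ L →+ L, ∀ f, φ f = f.1 g := fun g =>
      ⟨(Pi.evalAddMonoidHom _ g).comp (Zsum Γ L).subtype, fun _ => rfl⟩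
    have hlz : ∀ (A : Set X) (n : ℕ) (f : List X → Zsum Γ L),
        (∀ g, LZ A n fun l => (f l).1 g) → LZ A n f := fun A n f h =>
      lz_of_inj (Zsum Γ L).subtype Subtype.coe_injective (lz_pi h)
    have hdz : ∀ (f : List X → Zsum Γ L) l g, (d f l).1 g = d (fun l => (f l).1 g) l := by
      intro f l g
      obtain ⟨φ, hφ⟩ := hev g
      simp only [← hφ]
      rw [d_hom]
    have heq : ∀ (γ : Γ) l, z' (l.map (γ • ·)) = zact a γ (z' l) := by
      intro γ l
      refine Subtype.ext (funext fun g => ?_)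
      rw [zact_apply, hz', hz']
      simp only [cup]
      rw [← List.map_drop, ← List.map_take, d_ind_map (hr i), hz, map_zsmul]
    have hcoc : Coc Set.univ (j + 1 + 1) z' := by
      refine hlz _ _ _ fun g => ?_
      have h1 : Coc Set.univ (j + 1 + 1) (cup j z (d (ind (r i) g))) :=
        hzc.cup (q := 1) Coc.d
      exact LZ.congr h1 fun l _ _ => (hdz z' l g).symm
    have hvan : ∀ k ∉ S, LZ (U k) (j + 1 + 1) z' := by
      intro k hk
      refine hlz _ _ _ fun g => ?_
      simp only [hz']
      by_cases hki : k = i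
      · subst hki
        have h1 : LZ (U k) 2 (d (ind (r k) g)) := by
          refine ⟨ε, hε, fun l h1 h2 h3 => ?_⟩
          match l, h1 with
          | [x, y], _ =>
            simp [d_cons, ind, hrU k x (h2 x (by simp)) y (h2 y (by simp))
              (h3 x (by simp) y (by simp))]
        exact LZ.cup_right (p := j) (q := 2) h1
      · exact LZ.cup_left (h0 k (by simp [hk, hki])) (by omega)
    obtain ⟨F', hF', hlF⟩ := ih (Zsum Γ L) (zact a) (j + 1) (by omega) z' heq hcoc hvan
    obtain ⟨w, -, hw⟩ := hX (Zsum Γ L) (j + 1) (by omega) F' hF'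
    set v : List X → Zsum Γ L := ∑ γ : Γ, gact (zact a) γ w with hv
    have hzv : LZ Set.univ (j + 2) (z' - d v) := by
      have h1 : LZ Set.univ (j + 2) (∑ γ : Γ, gact (zact a) γ (F' - d w)) :=
        LZ.sum fun γ _ => lz_gact _ (hc _) hw
      have h2 := hlF.add h1
      simp only [gact_sub, Finset.sum_sub_distrib, ← d_gact] at h2
      rwa [sub_add_sub_cancel, ← d_sum] at h2
    have hveq : ∀ (γ : Γ) l, v (l.map (γ • ·)) = zact a γ (v l) := sum_gact_map (zact a) w
    let Q : Γ → List X → L := fun g =>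
      cup j z (ind (r i) g) - (-1 : ℤ) ^ j • fun l => (v l).1 g
    have hs : ((-1 : ℤ) ^ j) * (-1) ^ j = 1 := by rw [← mul_pow]; simp
    have hQ : Coc Set.univ (j + 1) (Q 1) := by
      have h1 : LZ Set.univ (j + 2) (cup (j + 1) (d z) (ind (r i) 1)) :=
        LZ.cup_left hzc (by omega)
      obtain ⟨φ, hφ⟩ := hev 1
      have h2 := (lz_hom φ hzv).smul ((-1) ^ j)
      refine (h1.add h2).congr fun l hl _ => ?_
      simp only [Q, d_sub, d_zsmul, Pi.sub_apply, Pi.add_apply, Pi.smul_apply]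
      rw [d_cup j _ _ l (by omega), map_sub, hφ, hφ, hz', hdz, smul_sub]
      abel
    refine ⟨Q 1, hQ, LZ.of_eq fun l hl _ => ?_⟩
    have h1 : ∀ γ : Γ, gact a γ (Q 1) l = Q γ l := by
      intro γ
      have e1 : (v (l.map (γ⁻¹ • ·))).1 1 = a γ⁻¹ ((v l).1 γ) := by
        rw [hveq, zact_apply, inv_inv, mul_one]
      have e2 : ∀ x, a γ (a γ⁻¹ x) = x := fun x => by
        have := congrArg (fun e : AddMonoid.End L => e x) (map_mul a γ γ⁻¹)
        rw [mul_inv_cancel, map_one] at this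
        exact this.symm
      simp only [gact, Q, Pi.sub_apply, Pi.smul_apply, cup]
      rw [e1, ← List.map_drop, ← List.map_take, ind_map (hr i), hz, map_sub, map_zsmul, map_zsmul,
        e2, e2, inv_inv, mul_one]
    have h2 : ∑ γ, ind (r i) γ (l.drop j) = 1 := by
      obtain ⟨x, hx⟩ : ∃ x, l.drop j = [x] := List.length_eq_one_iff.1 (by simp [hl])
      rw [hx]
      exact sum_ind _ x
    rw [Pi.sub_apply, Finset.sum_apply]
    simp only [h1, Q, Pi.sub_apply, Pi.smul_apply, cup, Finset.sum_sub_distrib]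
    rw [← Finset.sum_smul, ← Finset.smul_sum, h2, mem_Zsum.1 (v l).2,
      List.take_of_length_le (by omega)]
    simp

end Trace

section Cover

variable {Γ X : Type} [Group Γ] [Finite Γ] [MetricSpace X] [CompactSpace X] [MulAction Γ X]

omit [Finite Γ] [MetricSpace X] [CompactSpace X] in
theorem exists_equivariant (hfree : ∀ (γ : Γ) (x : X), γ • x = x → γ = 1) :
    ∃ s : X → Γ, ∀ (γ : Γ) x, s (γ • x) = γ * s x := by
  have h : ∀ x : X, ∃ γ : Γ, γ • (Quotient.mk (MulAction.orbitRel Γ X) x).out = x := by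
    intro x
    have := Quotient.mk_out (s := MulAction.orbitRel Γ X) x
    obtain ⟨γ, hγ⟩ := (MulAction.orbitRel Γ X).symm this
    exact ⟨γ, hγ⟩
  choose s hs using h
  refine ⟨s, fun γ x => ?_⟩
  have h1 : Quotient.mk (MulAction.orbitRel Γ X) (γ • x) = Quotient.mk _ x :=
    Quotient.sound ⟨γ, rfl⟩
  have h2 := hs (γ • x)
  rw [h1] at h2
  have h3 : ((γ * s x)⁻¹ * s (γ • x)) • (Quotient.mk (MulAction.orbitRel Γ X) x).out =
      (Quotient.mk (MulAction.orbitRel Γ X) x).out := by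
    rw [mul_smul, h2, inv_smul_eq_iff, mul_smul, hs]
  exact (inv_mul_eq_one.1 (hfree _ _ h3)).symm

theorem exists_separation (hc : ∀ γ : Γ, Continuous fun x : X => γ • x)
    (hfree : ∀ (γ : Γ) (x : X), γ • x = x → γ = 1) :
    ∃ δ > 0, ∀ (γ : Γ) (x : X), dist (γ • x) x < δ → γ = 1 := by
  have h1 : ∀ γ : Γ, ∃ δ > 0, ∀ x : X, dist (γ • x) x < δ → γ = 1 := by
    intro γ
    by_cases hγ : γ = 1
    · exact ⟨1, one_pos, fun _ _ => hγ⟩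
    by_cases hX : Nonempty X
    · obtain ⟨x, -, hx⟩ := isCompact_univ.exists_isMinOn (Set.univ_nonempty (α := X))
        (((hc γ).dist continuous_id).continuousOn (s := Set.univ))
      refine ⟨dist (γ • x) x, dist_pos.2 fun h => hγ (hfree γ x h), fun y hy => ?_⟩
      exact absurd hy (not_lt.2 (hx (Set.mem_univ y)))
    · exact ⟨1, one_pos, fun x => (hX ⟨x⟩).elim⟩
  choose δ hδ h using h1
  cases nonempty_fintype Γ
  refine ⟨Finset.univ.inf' ⟨1, Finset.mem_univ _⟩ δ, (Finset.lt_inf'_iff _).2 fun γ _ => hδ γ,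
    fun γ x hx => h γ x (hx.trans_le (Finset.inf'_le _ (Finset.mem_univ γ)))⟩

theorem exists_cover (hc : ∀ γ : Γ, Continuous fun x : X => γ • x)
    (hfree : ∀ (γ : Γ) (x : X), γ • x = x → γ = 1) :
    ∃ (ι : Type) (_ : Finite ι) (U : ι → Set X) (r : ι → X → Γ) (ε : ℝ), 0 < ε ∧
      (∀ x, ∃ i, ∀ y, dist x y < ε → y ∈ U i) ∧
      (∀ i (γ : Γ) x, r i (γ • x) = γ * r i x) ∧
      ∀ i, ∀ x ∈ U i, ∀ y ∈ U i, dist x y < ε → r i x = r i y := by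
  classical
  obtain ⟨δ, hδ, hsep⟩ := exists_separation hc hfree
  obtain ⟨s, hs⟩ := exists_equivariant hfree
  obtain ⟨ε, hε, hε1, hu⟩ : ∃ ε > 0, ε ≤ δ / 8 ∧
      ∀ (γ : Γ) (x y : X), dist x y < ε → dist (γ • x) (γ • y) < δ / 8 := by
    have h1 : ∀ γ : Γ, ∃ ε > 0, ∀ x y : X, dist x y < ε → dist (γ • x) (γ • y) < δ / 8 := by
      intro γ
      obtain ⟨ε, hε, h⟩ := Metric.uniformContinuous_iff.1
        (CompactSpace.uniformContinuous_of_continuous (hc γ)) (δ / 8) (by positivity)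
      exact ⟨ε, hε, fun x y h' => h h'⟩
    choose ε hε h using h1
    cases nonempty_fintype Γ
    refine ⟨min (δ / 8) (Finset.univ.inf' ⟨1, Finset.mem_univ _⟩ ε),
      lt_min (by positivity) ((Finset.lt_inf'_iff _).2 fun γ _ => hε γ), min_le_left _ _,
      fun γ x y hx => h γ x y (hx.trans_le ((min_le_right _ _).trans
        (Finset.inf'_le _ (Finset.mem_univ γ))))⟩
  obtain ⟨T, hT⟩ := (isCompact_univ (X := X)).elim_nhds_subcover' (fun x _ => Metric.ball x (δ / 8))
    fun x _ => Metric.ball_mem_nhds x (by positivity)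
  have huniq : ∀ (c x : X) (γ γ' : Γ), dist (γ⁻¹ • x) c < δ / 4 → dist (γ'⁻¹ • x) c < δ / 4 →
      γ = γ' := by
    intro c x γ γ' h1 h2
    have h3 : dist ((γ'⁻¹ * γ) • γ⁻¹ • x) (γ⁻¹ • x) < δ := by
      rw [mul_smul, smul_inv_smul]
      have := dist_triangle_right (γ'⁻¹ • x) (γ⁻¹ • x) c
      linarith
    exact (inv_mul_eq_one.1 (hsep _ _ h3)).symm
  let U : T → Set X := fun c => {x | ∃ γ : Γ, dist (γ⁻¹ • x) c.1.1 < δ / 4}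
  let r : T → X → Γ := fun c x => if h : x ∈ U c then h.choose else s x
  have hrU : ∀ c x, x ∈ U c → dist ((r c x)⁻¹ • x) c.1.1 < δ / 4 := by
    intro c x hx
    simp only [r, dif_pos hx]
    exact hx.choose_spec
  refine ⟨T, inferInstance, U, r, ε, hε, fun x => ?_, fun c γ x => ?_, fun c x hx y hy hxy => ?_⟩
  · obtain ⟨c, hcT, hxc⟩ := Set.mem_iUnion₂.1 (hT (Set.mem_univ x))
    refine ⟨⟨c, hcT⟩, fun y hy => ⟨1, ?_⟩⟩
    rw [inv_one, one_smul]
    have := dist_triangle_left y c.1 x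
    have := Metric.mem_ball.1 hxc
    linarith
  · by_cases hx : x ∈ U c
    · have h1 : γ • x ∈ U c := by
        obtain ⟨g, hg⟩ := hx
        refine ⟨γ * g, ?_⟩
        rwa [mul_inv_rev, mul_smul, inv_smul_smul]
      refine huniq c.1.1 (γ • x) _ _ (hrU c _ h1) ?_
      rw [mul_inv_rev, mul_smul, inv_smul_smul]
      exact hrU c x hx
    · have h1 : γ • x ∉ U c := by
        rintro ⟨g, hg⟩
        refine hx ⟨γ⁻¹ * g, ?_⟩
        rwa [mul_inv_rev, inv_inv, mul_smul]
      simp only [r, dif_neg hx, dif_neg h1, hs]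
  · have h1 := hrU c x hx
    have h2 := hrU c y hy
    have h3 := hu (r c x)⁻¹ x y hxy
    have h4 : dist (((r c y)⁻¹ * r c x) • (r c x)⁻¹ • y) ((r c x)⁻¹ • y) < δ := by
      rw [mul_smul, smul_inv_smul]
      have e1 := dist_triangle_right ((r c y)⁻¹ • y) ((r c x)⁻¹ • x) c.1.1
      have e2 := dist_triangle ((r c y)⁻¹ • y) ((r c x)⁻¹ • x) ((r c x)⁻¹ • y)
      linarith
    exact (inv_mul_eq_one.1 (hsep _ _ h4)).symm

theorem trace_lemma [Fintype Γ] {n : ℕ}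
    (hX : ∀ (L : Type) [AddCommGroup L] (q : ℕ), n < q → ∀ f : List X → L,
      Coc Set.univ (q + 1) f → Bd Set.univ (q + 1) f)
    (hc : ∀ γ : Γ, Continuous fun x : X => γ • x)
    (hfree : ∀ (γ : Γ) (x : X), γ • x = x → γ = 1)
    {z : List X → ℤ} (hz : ∀ (γ : Γ) l, z (l.map (γ • ·)) = z l) (hzc : Coc Set.univ (n + 1) z) :
    ∃ F : List X → ℤ, Coc Set.univ (n + 1) F ∧
      LZ Set.univ (n + 1) (z - ∑ γ : Γ, pull (γ⁻¹ • ·) F) := by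
  classical
  obtain ⟨ι, _, U, r, ε, hε, hU, hr, hrU⟩ := exists_cover hc hfree
  cases nonempty_fintype ι
  exact trace_aux hX (fun γ => (CompactSpace.uniformContinuous_of_continuous
    (hc γ)).uniformContinuousOn) hε hU hr hrU Finset.univ ℤ 1 n le_rfl z (by simpa using hz) hzc
    (by simp)

end Cover

section Smith

theorem exists_smith {t : ℕ} (I : AddSubgroup (Fin t → ℤ)) (hI : I.index ≠ 0) :
    ∃ (b : Module.Basis (Fin t) ℤ (Fin t → ℤ)) (a : Fin t → ℤ),
      (∀ i, a i • b i ∈ I) ∧ (∏ i, a i).natAbs = I.index := by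
  classical
  obtain ⟨n, snf⟩ := (AddSubgroup.toIntSubmodule I).smithNormalForm (Pi.basisFun ℤ (Fin t))
  have hI' : (AddSubgroup.toIntSubmodule I).toAddSubgroup.index ≠ 0 := hI
  have hn := snf.toAddSubgroup_index_ne_zero_iff.1 hI'
  rw [Fintype.card_fin] at hn
  subst hn
  have hf : Function.Bijective snf.f := Finite.injective_iff_bijective.1 snf.f.injective
  refine ⟨snf.bM.reindex (Equiv.ofBijective snf.f hf).symm, snf.a, fun i => ?_, ?_⟩
  · have h : snf.a i • snf.bM (snf.f i) ∈ I := snf.snf i ▸ (snf.bN i).2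
    simpa using h
  · have h : I.index = _ := snf.toAddSubgroup_index_eq_ite
    rw [h, if_pos (by simp)]
    simp [Ideal.span_singleton_toAddSubgroup_eq_zmultiples, Int.index_zmultiples]
    exact map_prod Int.natAbsHom _ _

end Smith

section TraceIndex

variable {m t : ℕ} {Γ : Type} [Group Γ] [MulAction Γ (Tor m t)]

variable (m t Γ) in
/-- The classes in degree `m` represented by invariant cocycles. -/
def invLat : AddSubgroup (Fin t → ℤ) where
  carrier := {c | ∃ f : List (Tor m t) → ℤ, (∀ γ : Γ, pull (γ • ·) f = f) ∧
    Bd Set.univ (m + 1) (f - lin m c)}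
  zero_mem' := ⟨0, fun _ => rfl, by
    have h : lin m (0 : Fin t → ℤ) = 0 := by simp [lin]
    rw [h, sub_zero]
    exact Bd.zero⟩
  add_mem' := by
    rintro c c' ⟨f, hf, h⟩ ⟨f', hf', h'⟩
    refine ⟨f + f', fun γ => by rw [pull_add, hf, hf'], ?_⟩
    rw [lin_add, add_sub_add_comm]
    exact h.add h'
  neg_mem' := by
    rintro c ⟨f, hf, h⟩
    refine ⟨-f, fun γ => by rw [pull_neg, hf], ?_⟩
    have h1 : lin m (-c) = -lin m c := by simpa using lin_smul (m := m) (-1) c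
    rw [h1, ← neg_sub']
    exact h.neg

theorem mem_invLat {c : Fin t → ℤ} : c ∈ invLat m t Γ ↔ ∃ f : List (Tor m t) → ℤ,
    (∀ γ : Γ, pull (γ • ·) f = f) ∧ Bd Set.univ (m + 1) (f - lin m c) := Iff.rfl

theorem card_dvd_index [Fintype Γ] (hm : 0 < m) (hc : ∀ γ : Γ, Continuous fun x : Tor m t => γ • x)
    (hfree : ∀ (γ : Γ) (x : Tor m t), γ • x = x → γ = 1)
    (htriv : ∀ (γ : Γ) i, Bd Set.univ (m + 1) (pull (γ • ·) (xc (m := m) (t := t) i) - xc i))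
    {s : ℕ} (hs : Nat.card Γ = 2 ^ s) (hI : (invLat m t Γ).index ≠ 0) :
    Nat.card Γ ∣ (invLat m t Γ).index := by
  obtain ⟨b, a, hab, ha⟩ := exists_smith _ hI
  choose y hy hyb using fun i => mem_invLat.1 (hab i)
  have hyc : ∀ i, Coc Set.univ (m + 1) (y i) := fun i => by
    simpa using (hyb i).coc.add (coc_lin (a i • b i))
  obtain ⟨c, hco, hz⟩ := prd_basis hm b a hyb
  set z := prd m (List.ofFn y) with hzdef
  have hinv : ∀ γ : Γ, pull (γ • ·) z = z := by
    intro γ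
    rw [hzdef, pull_prd, List.map_ofFn]
    congr 2
    exact funext fun i => hy i γ
  have hzc : Coc Set.univ (m * t + 1) z := by
    have := coc_prd (A := Set.univ) (m := m) (ys := List.ofFn y) (by
      intro w hw
      obtain ⟨i, rfl⟩ := (List.mem_ofFn' _ _).1 hw
      exact hyc i)
    rwa [List.length_ofFn] at this
  obtain ⟨F, hF, hzF⟩ := trace_lemma (n := m * t) (fun L _ q hq f hf => tor_gt hq hf) hc hfree
    (fun γ l => congrFun (hinv γ) l) hzc
  obtain ⟨e, he⟩ := exists_top hm hF
  have htht : ∀ γ : Γ, Bd Set.univ (m * t + 1) (pull (γ • ·) (tht m t) - tht m t) := by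
    intro γ
    have := bd_prd_sub (m := m) (y := fun i => pull (γ • ·) (xc (m := m) (t := t) i)) (z := xc)
      (fun i => coc_xc i) (htriv γ)
    rw [tht, pull_prd, List.map_ofFn]
    exact this
  have h1 : Bd Set.univ (m * t + 1) (∑ γ : Γ, (pull (γ⁻¹ • ·) F - e • tht m t)) := by
    refine Bd.sum fun γ _ => ?_
    have h2 := (he.pull (uc_of_cont (hc γ⁻¹) Set.univ) (Set.mapsTo_univ _ _)).add
      ((htht γ⁻¹).smul e)
    rwa [pull_sub, pull_smul, smul_sub, sub_add_sub_cancel] at h2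
  rw [Finset.sum_sub_distrib, Finset.sum_const, Finset.card_univ, ← Nat.card_eq_fintype_card] at h1
  have h2 := (hz.sub hzF.bd).sub h1
  have h3 : (Nat.card Γ : ℤ) * e - (∏ i, a i) * c = 0 := by
    refine Coch.top_unique (m := m) (t := t) ?_
    convert h2 using 1
    rw [sub_smul, mul_smul, Nat.cast_smul_eq_nsmul]
    abel
  have h4 : (Nat.card Γ : ℤ) ∣ (∏ i, a i) * c := ⟨e, by linarith⟩
  have h5 : IsCoprime (Nat.card Γ : ℤ) c := by
    rw [hs, Nat.cast_pow]
    refine IsCoprime.pow_left ?_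
    obtain ⟨k, rfl⟩ := hco
    exact ⟨-k, 1, by push_cast; ring⟩
  rw [← ha, ← Int.natCast_dvd]
  exact h5.dvd_of_dvd_mul_right h4

end TraceIndex

section Truncation

variable {X Y L : Type*} [AddCommGroup L]

/-- The part of a cochain on tuples of a given length. -/
def trunc (n : ℕ) (f : List X → L) : List X → L := fun l => if l.length = n then f l else 0

/-- A cochain concentrated on tuples of a given length. -/
def Supp (n : ℕ) (f : List X → L) : Prop := ∀ l : List X, l.length ≠ n → f l = 0

theorem supp_trunc (n : ℕ) (f : List X → L) : Supp n (trunc n f) := fun _ h => if_neg h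

theorem trunc_of_supp {n : ℕ} {f : List X → L} (h : Supp n f) : trunc n f = f := by
  funext l
  simp only [trunc]
  split_ifs with hl
  · rfl
  · exact (h l hl).symm

theorem d_trunc (n : ℕ) (f : List X → L) : d (trunc n f) = trunc (n + 1) (d f) := by
  funext l
  simp only [trunc]
  split_ifs with hl
  · exact d_congr fun l' _ h => if_pos (by omega)
  · exact d_eq_zero fun l' _ h => if_neg (by omega)

theorem pull_trunc (φ : X → Y) (n : ℕ) (f : List Y → L) :
    pull φ (trunc n f) = trunc n (pull φ f) := by
  funext l
  simp [pull, trunc]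

theorem Supp.pull {n : ℕ} {f : List Y → L} (h : Supp n f) (φ : X → Y) : Supp n (pull φ f) :=
  fun l hl => h _ (by simpa using hl)

theorem Supp.d {n : ℕ} {f : List X → L} (h : Supp n f) : Supp (n + 1) (d f) := by
  rw [← trunc_of_supp h, d_trunc]
  exact supp_trunc _ _

theorem Supp.smul {n : ℕ} {f : List X → L} (h : Supp n f) (a : ℤ) : Supp n (a • f) :=
  fun l hl => by simp [h l hl]

theorem Supp.sub {n : ℕ} {f g : List X → L} (h : Supp n f) (h' : Supp n g) : Supp n (f - g) :=
  fun l hl => by simp [h l hl, h' l hl]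

theorem lz_trunc {X : Type*} [PseudoMetricSpace X] {A : Set X} {n : ℕ} {f : List X → L}
    (h : LZ A n f) : LZ A n (trunc n f) :=
  h.congr fun _ hl _ => (if_pos hl).symm

theorem exists_primitive [Nonempty X] {f : List X → L} (h : Coch.d f = 0) :
    ∃ y, Coch.d y = f := by
  obtain ⟨x⟩ := ‹Nonempty X›
  exact ⟨fun l => f (x :: l), funext fun l => d_cone f x l (congrFun h _)⟩

end Truncation

section ElementaryAbelian

variable {X : Type} [Nonempty X]

theorem exists_half (n : ℕ) : ∀ (Λ : Type) [Group Λ] [MulAction Λ X], Nat.card Λ = 2 ^ n →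
    (∀ x : Λ, x * x = 1) → (∀ (γ : Λ) (x : X), γ • x = x → γ = 1) →
    ∀ z : List X → ℤ, (∀ γ : Λ, pull (γ • ·) z = z) → d z = 0 →
    ∃ y, (∀ γ : Λ, pull (γ • ·) y = y) ∧ d y = (2 : ℤ) • z := by
  classical
  induction n with
  | zero =>
    intro Λ _ _ hcard _ _ z _ hz
    obtain ⟨y, rfl⟩ := exists_primitive hz
    refine ⟨(2 : ℤ) • y, fun γ => ?_, d_zsmul _ _⟩
    have : Subsingleton Λ := (Nat.card_eq_one_iff_unique.1 (by simpa using hcard)).1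
    rw [Subsingleton.elim γ 1]
    simp only [one_smul, pull_id]
  | succ n ih =>
    intro Λ _ _ hcard hsq hfree z hinv hz
    have hcomm : ∀ a b : Λ, a * b = b * a := by
      have hi : ∀ a : Λ, a⁻¹ = a := fun a => inv_eq_of_mul_eq_one_left (hsq a)
      intro a b
      rw [← hi (a * b), mul_inv_rev, hi, hi]
    have : Finite Λ := Nat.finite_of_card_ne_zero (by rw [hcard]; positivity)
    have : Fact (Nat.Prime 2) := ⟨Nat.prime_two⟩
    obtain ⟨H, hH⟩ := Sylow.exists_subgroup_card_pow_prime 2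
      (show 2 ^ n ∣ Nat.card Λ by rw [hcard]; exact pow_dvd_pow 2 n.le_succ)
    have hidx : H.index = 2 := by
      have h := H.card_mul_index
      rw [hH, hcard, pow_succ] at h
      exact Nat.eq_of_mul_eq_mul_left (by positivity) h
    obtain ⟨c, hc⟩ : ∃ c, c ∉ H := by
      by_contra! h
      have : H = ⊤ := (Subgroup.eq_top_iff' H).2 h
      rw [this, Subgroup.index_top] at hidx
      omega
    obtain ⟨y₀, hy₀, hdy₀⟩ := ih H hH (fun x => Subtype.ext (hsq x))
      (fun γ x h => Subtype.ext (hfree γ x h)) z (fun γ => hinv γ) hz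
    obtain ⟨σ, hσ⟩ := exists_equivariant hfree
    let s : X → X := fun x => if σ x ∈ H then x else c • x
    have hcc : ∀ x : X, c • c • x = x := fun x => by rw [← mul_smul, hsq, one_smul]
    have hsc : ∀ x, s (c • x) = s x := by
      intro x
      simp only [s, hσ, Subgroup.mul_mem_iff_of_index_two hidx, hc, false_iff]
      by_cases h : σ x ∈ H <;> simp [h, hcc]
    have hsH : ∀ (h : H) x, s (h • x) = h • s x := by
      intro h x
      have h1 : h.1 * σ x ∈ H ↔ σ x ∈ H := H.mul_mem_cancel_left h.2
      simp only [s, Subgroup.smul_def, hσ, h1]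
      split_ifs
      · rfl
      · rw [← mul_smul, hcomm, mul_smul]
    set η := prism s (fun x => x) z with hη
    have hdη : d η = z - pull s z := by
      have h := d_prism_eq s (fun x => x) z
      have h0 : prism s (fun x => x) (0 : List X → ℤ) = 0 :=
        funext fun l => prism_eq_zero fun _ _ _ => rfl
      rwa [hz, h0, add_zero, pull_id] at h
    have hηH : ∀ h : H, pull (h • ·) η = η := by
      intro h
      funext l
      refine (prism_map s (fun x => x) s (fun x => x) (h • ·) (h • ·) (hsH h) (fun _ => rfl)
        z l).trans ?_
      exact congrArg (fun f => prism s (fun x => x) f l) (hinv h)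
    refine ⟨pull s y₀ + η + pull (c • ·) η, fun γ => ?_, ?_⟩
    · have key : ∀ h : H, pull (h • ·) (pull s y₀ + η + pull (c • ·) η) =
          pull s y₀ + η + pull (c • ·) η := by
        intro h
        rw [pull_add, pull_add, hηH]
        congr 1
        · congr 1
          rw [pull_pull]
          simp only [hsH]
          rw [← pull_pull s (fun x => h • x), hy₀]
        · rw [pull_pull]
          have : (fun x : X => c • h • x) = fun x => h • c • x := by
            funext x
            simp only [Subgroup.smul_def, ← mul_smul]
            rw [hcomm]
          rw [this, ← pull_pull (fun x => c • x) (fun x => h • x), hηH]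
      have keyc : pull (c • ·) (pull s y₀ + η + pull (c • ·) η) =
          pull s y₀ + η + pull (c • ·) η := by
        rw [pull_add, pull_add, pull_pull, pull_pull]
        simp only [hsc, hcc, pull_id]
        abel
      by_cases hγ : γ ∈ H
      · exact key ⟨γ, hγ⟩
      · have h1 : c * γ ∈ H := by
          rw [Subgroup.mul_mem_iff_of_index_two hidx]
          simp [hc, hγ]
        have h2 : (fun x : X => γ • x) = fun x => c • (⟨c * γ, h1⟩ : H) • x := by
          funext x
          simp only [Subgroup.smul_def, ← mul_smul]
          rw [← mul_assoc, hsq, one_mul]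
        rw [h2, ← pull_pull (fun x => (⟨c * γ, h1⟩ : H) • x) (fun x => c • x), keyc, key]
    · rw [d_add, d_add, d_pull, d_pull, hdy₀, hdη, pull_sub, pull_smul, pull_pull, hinv]
      simp only [hsc]
      module

/-- The loss in solving the coboundary equation invariantly. -/
def loss (p : ℕ) : ℤ := if 3 ≤ p then 2 else 1

theorem exists_primitive_of_free {n p : ℕ} (Λ : Type) [Group Λ] [MulAction Λ X]
    (hcard : Nat.card Λ = 2 ^ n) (hsq : ∀ x : Λ, x * x = 1)
    (hfree : ∀ (γ : Λ) (x : X), γ • x = x → γ = 1) {z : List X → ℤ}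
    (hinv : ∀ γ : Λ, pull (γ • ·) z = z) (hs : Supp (p + 1) z) (hz : d z = 0) :
    ∃ y, (∀ γ : Λ, pull (γ • ·) y = y) ∧ Supp p y ∧ d y = loss (p + 1) • z := by
  have hcase : p = 0 ∨ p = 1 ∨ 2 ≤ p := by omega
  rcases hcase with rfl | rfl | hp
  · obtain ⟨y, rfl⟩ := exists_primitive hz
    refine ⟨trunc 0 y, fun γ => ?_, supp_trunc _ _, ?_⟩
    · rw [pull_trunc]
      funext l
      simp only [trunc, List.length_eq_zero_iff]
      split_ifs with h
      · rw [h]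
        rfl
      · rfl
    · rw [d_trunc, trunc_of_supp hs]
      simp [loss]
  · obtain ⟨x⟩ := ‹Nonempty X›
    refine ⟨trunc 1 fun l => z (x :: l), fun γ => ?_, supp_trunc _ _, ?_⟩
    · rw [pull_trunc]
      funext l
      simp only [trunc]
      split_ifs with h
      · obtain ⟨y, rfl⟩ := List.length_eq_one_iff.1 h
        have h1 := congrFun hz [x, y, γ • y]
        have h2 := congrFun hz [y, γ • y, y]
        have h3 := congrFun hz [y, y, y]
        have h4 := congrFun (hinv γ) [y, γ • y]
        simp only [d_cons, d_nil, Pi.zero_apply, pull, List.map_cons, List.map_nil, ← mul_smul, hsq,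
          one_smul] at h1 h2 h3 h4 ⊢
        linarith
      · rfl
    · rw [d_trunc]
      have h : d (fun l => z (x :: l)) = z := funext fun l => d_cone z x l (congrFun hz _)
      rw [h, trunc_of_supp hs]
      simp [loss]
  · obtain ⟨y, hy, hdy⟩ := exists_half n Λ hcard hsq hfree z hinv hz
    refine ⟨trunc p y, fun γ => by rw [pull_trunc, hy], supp_trunc _ _, ?_⟩
    rw [d_trunc, hdy, trunc_of_supp (hs.smul 2), loss, if_pos (by omega)]

end ElementaryAbelian

section DoubleComplex

variable {Γ W X : Type} [Group Γ] [Group W] [MulAction Γ X] (π : Γ →* W)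

/-- Invariance of a cochain of the double complex under the diagonal action. -/
def Inv (u : List W → List X → ℤ) : Prop :=
  ∀ (γ : Γ) w, pull (γ • ·) (u (w.map (π γ * ·))) = u w

/-- The differential of the double complex in the second variable. -/
def vd (u : List W → List X → ℤ) : List W → List X → ℤ := fun w => d (u w)

theorem d_vd (u : List W → List X → ℤ) : d (vd u) = vd (d u) :=
  funext fun w => d_hom dHom u w

theorem vd_vd (u : List W → List X → ℤ) : vd (vd u) = 0 := funext fun w => d_d (u w)

theorem vd_add (u v : List W → List X → ℤ) : vd (u + v) = vd u + vd v :=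
  funext fun _ => d_add _ _

theorem vd_sub (u v : List W → List X → ℤ) : vd (u - v) = vd u - vd v :=
  funext fun _ => d_sub _ _

theorem vd_smul (a : ℤ) (u : List W → List X → ℤ) : vd (a • u) = a • vd u :=
  funext fun _ => d_zsmul _ _

theorem d_apply (u : List W → List X → ℤ) (w : List W) (l : List X) :
    d u w l = d (fun w => u w l) w :=
  (d_hom (Pi.evalAddMonoidHom (fun _ : List X => ℤ) l) u w).symm

variable {π}

theorem Inv.d {u : List W → List X → ℤ} (hu : Inv π u) : Inv π (d u) := by
  intro γ w
  let φ : (List X → ℤ) →+ (List X → ℤ) :=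
    { toFun := pull (γ • ·), map_zero' := rfl, map_add' := fun _ _ => rfl }
  have h := d_hom φ (fun w => u (w.map (π γ * ·))) w
  rw [d_map] at h
  exact h.symm.trans (congrArg (fun f => Coch.d f w) (funext fun w => hu γ w))

theorem Inv.vd {u : List W → List X → ℤ} (hu : Inv π u) : Inv π (vd u) := by
  intro γ w
  exact (d_pull _ _).symm.trans (congrArg Coch.d (hu γ w))

theorem Inv.smul {u : List W → List X → ℤ} (hu : Inv π u) (a : ℤ) : Inv π (a • u) :=
  fun γ w => congrArg (a • ·) (hu γ w)

theorem Inv.sub {u v : List W → List X → ℤ} (hu : Inv π u) (hv : Inv π v) : Inv π (u - v) :=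
  fun γ w => congrArg₂ (· - ·) (hu γ w) (hv γ w)

theorem exists_lift (π : Γ →* W) :
    ∃ σ : W → Γ, ∀ (γ : Γ) w, π (σ (π γ * w)) = π γ * π (σ w) := by
  obtain ⟨s, hs⟩ := exists_equivariant (Γ := π.range) (X := W) fun γ x h =>
    Subtype.ext (mul_eq_right.1 h)
  choose σ hσ using fun w => (s w).2
  refine ⟨σ, fun γ w => ?_⟩
  rw [hσ, hσ]
  exact congrArg Subtype.val (hs ⟨π γ, γ, rfl⟩ w)

/-- Invariant solutions of an invariant problem, from solutions invariant under stabilizers. -/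
theorem exists_inv {P : (List X → ℤ) → (List X → ℤ) → Prop}
    (hP : ∀ (γ : Γ) f y, P f y → P (pull (γ • ·) f) (pull (γ • ·) y))
    {z : List W → List X → ℤ} (hz : Inv π z)
    (h : ∀ w, w ≠ [] → ∃ y, (∀ γ ∈ π.ker, pull (γ • ·) y = y) ∧ P (z w) y) :
    ∃ y, Inv π y ∧ y [] = 0 ∧ ∀ w, w ≠ [] → P (z w) (y w) := by
  obtain ⟨σ, hσ⟩ := exists_lift π
  choose! y₀ hy₀ hyP using h
  let y : List W → List X → ℤ := fun w => match w with
    | [] => 0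
    | w₀ :: w => pull ((σ w₀)⁻¹ • ·) (y₀ ((w₀ :: w).map (π (σ w₀)⁻¹ * ·)))
  have hinv : ∀ (γ : Γ) w, pull (γ⁻¹ • ·) (z (w.map (π γ⁻¹ * ·))) = z w := fun γ w => hz γ⁻¹ w
  refine ⟨y, fun γ w => ?_, rfl, fun w hw => ?_⟩
  · match w with
    | [] => rfl
    | w₀ :: w =>
      simp only [y, List.map_cons, List.map_map]
      have hk : (σ (π γ * w₀))⁻¹ * γ * σ w₀ ∈ π.ker := by
        rw [MonoidHom.mem_ker, map_mul, map_mul, map_inv, hσ]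
        group
      have h1 : ∀ v, π (σ (π γ * w₀))⁻¹ * (π γ * v) = π (σ w₀)⁻¹ * v := by
        intro v
        rw [map_inv, hσ, map_inv]
        group
      have h2 : ((fun x => π (σ (π γ * w₀))⁻¹ * x) ∘ fun x => π γ * x) =
          fun x => π (σ w₀)⁻¹ * x := funext h1
      have h3 : ∀ x : X, (σ (π γ * w₀))⁻¹ • γ • x =
          ((σ (π γ * w₀))⁻¹ * γ * σ w₀) • (σ w₀)⁻¹ • x := by
        intro x
        simp only [← mul_smul]
        congr 1
        group
      rw [h1, h2, pull_pull]
      simp only [h3]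
      rw [← pull_pull (fun x => (σ w₀)⁻¹ • x)
        (fun x => ((σ (π γ * w₀))⁻¹ * γ * σ w₀) • x), hy₀ _ (by simp) _ hk]
  · match w with
    | [] => exact absurd rfl hw
    | w₀ :: w =>
      have h1 := hP (σ w₀)⁻¹ _ _ (hyP ((w₀ :: w).map (π (σ w₀)⁻¹ * ·)) (by simp))
      rwa [hinv] at h1

/-- The contraction of the double complex in the first variable. -/
def contr (e : X → W) (u : List W → List X → ℤ) : List W → List X → ℤ := fun w l =>
  match l with
  | [] => 0
  | x :: l => u (e x :: w) (x :: l)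

theorem inv_contr {e : X → W} (he : ∀ (γ : Γ) x, e (γ • x) = π γ * e x)
    {u : List W → List X → ℤ} (hu : Inv π u) : Inv π (contr e u) := by
  intro γ w
  funext l
  match l with
  | [] => rfl
  | x :: l =>
    have h := congrFun (hu γ (e x :: w)) (x :: l)
    simp only [pull, List.map_cons, contr, he] at h ⊢
    exact h

theorem d_contr (e : X → W) {u : List W → List X → ℤ} (hu : d u = 0) (h0 : ∀ w, u w [] = 0) :
    d (contr e u) = u := by
  funext w l
  rw [d_apply]
  match l with
  | [] =>
    rw [h0]
    exact d_eq_zero fun _ _ _ => rfl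
  | x :: l =>
    have h := congrFun (d_cone u (e x) w (congrFun hu _)) (x :: l)
    rw [d_apply] at h
    exact h

theorem supp_contr {p : ℕ} (e : X → W) {u : List W → List X → ℤ} (h : ∀ w, Supp p (u w))
    (w : List W) : Supp p (contr e u w) := by
  intro l hl
  match l, hl with
  | [], _ => rfl
  | x :: l, hl => exact h _ _ hl

theorem supp_d {p : ℕ} {u : List W → List X → ℤ} (h : ∀ w, Supp p (u w)) (w : List W) :
    Supp p (d u w) := by
  intro l hl
  rw [d_apply]
  exact d_eq_zero fun w _ _ => h w l hl

variable (π) in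
/-- A zigzag in the double complex, from a cochain down to the bottom row. -/
def Lad : ℕ → (List W → List X → ℤ) → (List W → ℤ) → Prop
  | 0, u, ω => ∀ w, u w [] = ω w
  | p + 1, u, ω => ∃ u', Inv π u' ∧ (∀ w, Supp p (u' w)) ∧ loss (p + 1) • d u = vd u' ∧ Lad p u' ω

theorem Lad.smul {p : ℕ} (a : ℤ) {u : List W → List X → ℤ} {ω : List W → ℤ} (h : Lad π p u ω) :
    Lad π p (a • u) (a • ω) := by
  induction p generalizing u with
  | zero => exact fun w => congrArg (a • ·) (h w)
  | succ p ih =>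
    obtain ⟨u', h1, h2, h3, h4⟩ := h
    exact ⟨a • u', h1.smul a, fun w => (h2 w).smul a,
      by rw [d_zsmul, vd_smul, smul_comm, h3], ih h4⟩

theorem Lad.sub {p : ℕ} {u v : List W → List X → ℤ} {ω θ : List W → ℤ} (h : Lad π p u ω)
    (h' : Lad π p v θ) : Lad π p (u - v) (ω - θ) := by
  induction p generalizing u v with
  | zero => exact fun w => congrArg₂ (· - ·) (h w) (h' w)
  | succ p ih =>
    obtain ⟨u', h1, h2, h3, h4⟩ := h
    obtain ⟨v', k1, k2, k3, k4⟩ := h'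
    exact ⟨u' - v', h1.sub k1, fun w => (h2 w).sub (k2 w),
      by rw [d_sub, vd_sub, smul_sub, h3, k3], ih h4 k4⟩

/-- The translate of a cochain of the double complex along a map in the second variable. -/
def transl (τ : X → X) (u : List W → List X → ℤ) : List W → List X → ℤ := fun w => pull τ (u w)

theorem Inv.transl {τ : X → X}
    (hτ : ∀ γ : Γ, ∃ γ' : Γ, π γ = π γ' ∧ ∀ x, τ (γ • x) = γ' • τ x)
    {u : List W → List X → ℤ} (hu : Inv π u) : Inv π (transl τ u) := by
  intro γ w
  obtain ⟨γ', h1, h2⟩ := hτ γ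
  simp only [Coch.transl]
  rw [pull_pull]
  simp only [h2]
  rw [← pull_pull τ (fun x => γ' • x), h1, hu]

theorem d_transl (τ : X → X) (u : List W → List X → ℤ) :
    d (transl τ u) = transl τ (d u) := by
  funext w l
  rw [d_apply]
  exact (d_apply u _ _).symm

theorem vd_transl (τ : X → X) (u : List W → List X → ℤ) :
    vd (transl τ u) = transl τ (vd u) :=
  funext fun _ => d_pull τ _

theorem Lad.transl {p : ℕ} {τ : X → X}
    (hτ : ∀ γ : Γ, ∃ γ' : Γ, π γ = π γ' ∧ ∀ x, τ (γ • x) = γ' • τ x)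
    {u : List W → List X → ℤ} {ω : List W → ℤ} (h : Lad π p u ω) :
    Lad π p (Coch.transl τ u) ω := by
  induction p generalizing u with
  | zero => exact fun w => h _
  | succ p ih =>
    obtain ⟨u', h1, h2, h3, h4⟩ := h
    refine ⟨Coch.transl τ u', h1.transl hτ, fun w => (h2 _).pull τ, ?_, ih h4⟩
    rw [d_transl, vd_transl, ← h3]
    rfl

theorem exists_lad [Nonempty X] {n p : ℕ} (hcard : Nat.card π.ker = 2 ^ n)
    (hsq : ∀ x ∈ π.ker, x * x = 1) (hfree : ∀ (γ : Γ) (x : X), γ • x = x → γ = 1)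
    {u : List W → List X → ℤ} (hu : Inv π u) (hs : ∀ w, Supp p (u w)) (hd : vd (d u) = 0) :
    ∃ ω, Lad π p u ω ∧ (∀ γ : Γ, pull (π γ * ·) ω = ω) ∧ d ω = 0 := by
  induction p generalizing u with
  | zero =>
    refine ⟨fun w => u w [], fun _ => rfl, fun γ => funext fun w => congrFun (hu γ w) [], ?_⟩
    funext w
    obtain ⟨x⟩ := ‹Nonempty X›
    have h := congrFun (congrFun hd w) [x]
    simp only [vd, d_cons, d_nil, Pi.zero_apply, sub_zero] at h
    rw [d_apply] at h
    exact h
  | succ p ih =>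
    obtain ⟨u', h1, h2, h3⟩ := exists_inv (P := fun f y => Supp p y ∧ d y = loss (p + 1) • f)
      (fun γ f y h => ⟨h.1.pull _, by rw [d_pull, h.2, pull_smul]⟩) hu.d (fun w _ => by
        obtain ⟨y, hy1, hy2, hy3⟩ := exists_primitive_of_free π.ker hcard
          (fun x => Subtype.ext (hsq x x.2)) (fun γ x h => Subtype.ext (hfree γ x h)) (z := d u w)
          (fun γ => by
            have h := hu.d γ.1 w
            simp only [MonoidHom.mem_ker.1 γ.2, one_mul, List.map_id'] at h
            exact h)
          (supp_d hs w) (congrFun hd w)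
        exact ⟨y, fun γ hγ => hy1 ⟨γ, hγ⟩, hy2, hy3⟩)
    have h4 : loss (p + 1) • d u = vd u' := by
      funext w
      by_cases hw : w = []
      · subst hw
        simp only [vd, h2, Pi.smul_apply, d_nil, smul_zero]
        exact (map_zero dHom).symm
      · exact (h3 w hw).2.symm
    have h5 : ∀ w, Supp p (u' w) := by
      intro w
      by_cases hw : w = []
      · subst hw
        rw [h2]
        exact fun _ _ => rfl
      · exact (h3 w hw).1
    obtain ⟨ω, k1, k2⟩ := ih h1 h5 (by rw [← d_vd, ← h4, d_zsmul, d_d, smul_zero])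
    exact ⟨ω, ⟨u', h1, h5, h4, k1⟩, k2⟩

theorem Lad.descend {p : ℕ} {e : X → W} (he : ∀ (γ : Γ) x, e (γ • x) = π γ * e x)
    {u : List W → List X → ℤ} {ω ω' : List W → ℤ} (hu : Inv π u) (hs : ∀ w, Supp p (u w))
    (h : Lad π p u ω) (hω : d ω' = ω) (hinv : ∀ γ : Γ, pull (π γ * ·) ω' = ω') :
    ∃ b b', Inv π b ∧ Inv π b' ∧ (∏ j ∈ Finset.range p, loss (j + 1)) • u = vd b + d b' := by
  induction p generalizing u with
  | zero =>
    refine ⟨0, fun w l => if l = [] then ω' w else 0, fun _ _ => rfl, fun γ w => ?_, ?_⟩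
    · funext l
      simp only [pull, List.map_eq_nil_iff]
      split_ifs
      · exact congrFun (hinv γ) w
      · rfl
    · funext w l
      have h0 : vd (0 : List W → List X → ℤ) = 0 := funext fun _ => map_zero dHom
      rw [h0, zero_add, d_apply, Finset.prod_range_zero, one_smul]
      by_cases hl : l = []
      · subst hl
        simp only [if_true]
        rw [h, ← hω]
      · simp only [if_neg hl]
        rw [hs w l (by simpa using hl)]
        exact (d_eq_zero fun _ _ _ => rfl).symm
  | succ p ih =>
    obtain ⟨u', h1, h2, h3, h4⟩ := h
    obtain ⟨b, b', hb, hb', hbb⟩ := ih h1 h2 h4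
    rw [Finset.prod_range_succ]
    set C := ∏ j ∈ Finset.range p, loss (j + 1)
    have h5 : d ((C * loss (p + 1)) • u - vd b') = 0 := by
      have h6 := congrArg vd hbb
      rw [vd_smul, ← h3, vd_add, vd_vd, zero_add, ← d_vd, ← d_zsmul, ← d_zsmul, smul_smul] at h6
      rw [d_sub, h6, sub_self]
    refine ⟨b', contr e ((C * loss (p + 1)) • u - vd b'), hb',
      inv_contr he ((hu.smul _).sub hb'.vd), ?_⟩
    rw [d_contr e h5, add_sub_cancel]
    intro w
    simp [vd, hs w [] (by simp)]

theorem prod_loss (m : ℕ) : ∏ j ∈ Finset.range (m + 2), loss (j + 1) = 2 ^ m := by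
  induction m with
  | zero => simp [Finset.prod_range_succ, loss]
  | succ m ih =>
    rw [Finset.prod_range_succ, ih, pow_succ]
    congr 1

variable [Nonempty X] {m n k : ℕ} {ψ : List X → ℤ}

open Classical in
/-- A cochain in the second variable, placed in the leftmost column. -/
def column (ψ : List X → ℤ) : List W → List X → ℤ := fun w => if w = [] then ψ else 0

theorem inv_column (hinv : ∀ γ : Γ, pull (γ • ·) ψ = ψ) : Inv π (column ψ) := by
  intro γ w
  simp only [column, List.map_eq_nil_iff]
  split_ifs
  · exact hinv γ
  · rfl

theorem supp_column {p : ℕ} (h : Supp p ψ) (w : List W) : Supp p (column ψ w) := by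
  intro l hl
  simp only [column]
  split_ifs
  · exact h l hl
  · rfl

theorem vd_column (h : d ψ = 0) : vd (column ψ : List W → List X → ℤ) = 0 := by
  funext w
  simp only [vd, column]
  split_ifs
  · rw [h]
    rfl
  · exact map_zero dHom

theorem exists_primitive_of_lad {e : X → W} (he : ∀ (γ : Γ) x, e (γ • x) = π γ * e x)
    (hinv : ∀ γ : Γ, pull (γ • ·) ψ = ψ) (hs : Supp (m + 2) ψ) {ω ω' : List W → ℤ}
    (h : Lad π (m + 2) (column ψ) ω) (hω : d ω' = ω) (hω' : ∀ γ : Γ, pull (π γ * ·) ω' = ω') :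
    ∃ y, (∀ γ : Γ, pull (γ • ·) y = y) ∧ d y = (2 : ℤ) ^ m • ψ := by
  obtain ⟨b, b', hb, -, hbb⟩ := h.descend he (inv_column hinv) (supp_column hs) hω hω'
  rw [prod_loss] at hbb
  refine ⟨b [], fun γ => hb γ [], ?_⟩
  have h1 := congrFun hbb []
  simp only [Pi.smul_apply, column, if_true, Pi.add_apply, d_nil, add_zero] at h1
  exact h1.symm

theorem exists_lad_column (hcard : Nat.card π.ker = 2 ^ n)
    (hsq : ∀ x ∈ π.ker, x * x = 1) (hfree : ∀ (γ : Γ) (x : X), γ • x = x → γ = 1)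
    (hinv : ∀ γ : Γ, pull (γ • ·) ψ = ψ) (hs : Supp (m + 2) ψ) (hd : d ψ = 0) :
    ∃ ω, Lad π (m + 2) (column ψ) ω ∧ (∀ γ : Γ, pull (π γ * ·) ω = ω) ∧ d ω = 0 :=
  exists_lad hcard hsq hfree (inv_column hinv) (supp_column hs)
    (by rw [← d_vd, vd_column hd]; exact map_zero dHom)

theorem exists_half_primitive (hcard : Nat.card π.ker = 2 ^ n) (hcard' : Nat.card π.range = 2 ^ k)
    (hsq : ∀ x ∈ π.ker, x * x = 1) (hsq' : ∀ x : W, x * x = 1)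
    (hfree : ∀ (γ : Γ) (x : X), γ • x = x → γ = 1)
    (hinv : ∀ γ : Γ, pull (γ • ·) ψ = ψ) (hs : Supp (m + 2) ψ) (hd : d ψ = 0) :
    ∃ y, (∀ γ : Γ, pull (γ • ·) y = y) ∧ d y = (2 : ℤ) ^ (m + 1) • ψ := by
  obtain ⟨s, hse⟩ := exists_equivariant hfree
  obtain ⟨ω, h1, h2, h3⟩ := exists_lad_column hcard hsq hfree hinv hs hd
  obtain ⟨ω', h4, h5⟩ := exists_half k π.range hcard' (fun x => Subtype.ext (hsq' x))
    (X := W) (fun γ x h => Subtype.ext (mul_eq_right.1 h)) ω (by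
      rintro ⟨_, γ, rfl⟩
      exact h2 γ) h3
  have h6 : Lad π (m + 2) (column ((2 : ℤ) • ψ)) ((2 : ℤ) • ω) := by
    have h7 := h1.smul 2
    have h8 : (2 : ℤ) • (column ψ : List W → List X → ℤ) = column ((2 : ℤ) • ψ) := by
      funext w
      simp only [column, Pi.smul_apply]
      split_ifs <;> simp
    rwa [h8] at h7
  obtain ⟨y, h9, h10⟩ := exists_primitive_of_lad (e := fun x => π (s x))
    (fun γ x => by rw [hse, map_mul]) (fun γ => by rw [pull_smul, hinv]) (hs.smul 2) h6 h5
    fun γ => h4 ⟨π γ, γ, rfl⟩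
  exact ⟨y, h9, by rw [h10, smul_smul, pow_succ]⟩

theorem exists_translate_primitive (hcard : Nat.card π.ker = 2 ^ n)
    (hsq : ∀ x ∈ π.ker, x * x = 1) (hfree : ∀ (γ : Γ) (x : X), γ • x = x → γ = 1)
    (hinv : ∀ γ : Γ, pull (γ • ·) ψ = ψ) (hs : Supp (m + 2) ψ) (hd : d ψ = 0) {τ : X → X}
    (hτ : ∀ γ : Γ, ∃ γ' : Γ, π γ = π γ' ∧ ∀ x, τ (γ • x) = γ' • τ x) :
    ∃ y, (∀ γ : Γ, pull (γ • ·) y = y) ∧ d y = (2 : ℤ) ^ m • (pull τ ψ - ψ) := by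
  obtain ⟨s, hse⟩ := exists_equivariant hfree
  obtain ⟨ω, h1, -, -⟩ := exists_lad_column hcard hsq hfree hinv hs hd
  have h2 : Lad π (m + 2) (column (pull τ ψ - ψ)) (0 : List W → ℤ) := by
    have h3 := (h1.transl hτ).sub h1
    have h4 : transl τ (column ψ : List W → List X → ℤ) - column ψ = column (pull τ ψ - ψ) := by
      funext w
      simp only [transl, column, Pi.sub_apply]
      split_ifs
      · rfl
      · exact sub_self 0
    rwa [h4, sub_self] at h3
  refine exists_primitive_of_lad (e := fun x => π (s x)) (fun γ x => by rw [hse, map_mul])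
    (fun γ => ?_) ((hs.pull τ).sub hs) h2 d_zero fun γ => rfl
  obtain ⟨γ', -, h3⟩ := hτ γ
  rw [pull_sub, hinv, pull_pull]
  simp only [h3]
  rw [← pull_pull τ (fun x => γ' • x), hinv]

end DoubleComplex

section Transgression

variable {m t : ℕ}

theorem lz_pull {X Y L : Type*} [AddCommGroup L] [PseudoMetricSpace X] [CompactSpace X]
    [PseudoMetricSpace Y] {n : ℕ} {φ : X → Y} (hφ : Continuous φ) {f : List Y → L}
    (h : LZ Set.univ n f) : LZ Set.univ n (pull φ f) :=
  h.pull (uc_of_cont hφ _) (Set.mapsTo_univ _ _)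

theorem eq_zero_of_lz {X L : Type*} [PseudoMetricSpace X] [AddCommGroup L] {n : ℕ} (hn : n ≤ 1)
    {f : List X → L} (h : LZ Set.univ n f) (hs : Supp n f) : f = 0 := by
  obtain ⟨ε, hε, h⟩ := h
  funext l
  by_cases hl : l.length = n
  · refine h l hl (fun _ _ => Set.mem_univ _) fun x hx y hy => ?_
    match l, hl, hx, hy with
    | [a], _, hx, hy =>
      rw [List.mem_singleton] at hx hy
      subst hx hy
      rwa [dist_self]
    | a :: b :: l, hl, _, _ =>
      simp only [List.length_cons] at hl
      omega
  · exact hs l hl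

/-- Vanishing of the cohomology of the torus between degrees `0` and `m`, on the cochain level. -/
theorem exists_lz_primitive {p : ℕ} (hp : p ≤ m) {f : List (Tor m t) → ℤ}
    (hs : Supp (p + 1) f) (hlz : LZ Set.univ (p + 1) f) (hd : d f = 0) :
    ∃ y, LZ Set.univ p y ∧ Supp p y ∧ d y = f := by
  obtain ⟨x, -⟩ := point_exists m t
  have : Nonempty (Tor m t) := ⟨x⟩
  obtain ⟨η, rfl⟩ := exists_primitive hd
  match p with
  | 0 => exact ⟨0, LZ.zero, fun _ _ => rfl, by
      rw [eq_zero_of_lz le_rfl hlz hs]; exact map_zero dHom⟩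
  | 1 =>
    obtain ⟨c, hc⟩ := tor_zero (m := m) (by omega) (f := η) hlz
    refine ⟨trunc 1 (η - fun _ => c), lz_trunc hc, supp_trunc _ _, ?_⟩
    rw [d_trunc, d_sub]
    refine Eq.trans ?_ (trunc_of_supp hs)
    funext l
    simp only [trunc]
    split_ifs with hl
    · match l, hl with
      | [a, b], _ => simp [d_cons, d_nil]
    · rfl
  | p + 2 =>
    obtain ⟨θ, -, hθ⟩ := tor_lt (q := p + 1) (by omega) (by omega) (f := η) hlz
    refine ⟨trunc (p + 2) (η - d θ), lz_trunc hθ, supp_trunc _ _, ?_⟩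
    rw [d_trunc, d_sub, d_d, sub_zero, trunc_of_supp hs]

variable {Γ : Type} [Group Γ] [MulAction Γ (Tor m t)]

/-- Invariant families of locally zero cochains on tuples of length `p`. -/
structure Row (p : ℕ) (u : List Γ → List (Tor m t) → ℤ) : Prop where
  inv : Inv (MonoidHom.id Γ) u
  lz : ∀ w, LZ Set.univ p (u w)
  supp : ∀ w, Supp p (u w)

theorem Row.sub {p : ℕ} {u v : List Γ → List (Tor m t) → ℤ} (hu : Row p u) (hv : Row p v) :
    Row p (u - v) :=
  ⟨hu.inv.sub hv.inv, fun w => (hu.lz w).sub (hv.lz w), fun w => (hu.supp w).sub (hv.supp w)⟩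

theorem Row.vd {p : ℕ} {u : List Γ → List (Tor m t) → ℤ} (hu : Row p u) : Row (p + 1) (vd u) :=
  ⟨hu.inv.vd, fun w => (hu.lz w).d, fun w => (hu.supp w).d⟩

theorem lz_d_family {X W : Type} [PseudoMetricSpace X] {p : ℕ} {u : List W → List X → ℤ}
    (h : ∀ w, LZ Set.univ p (u w)) (w : List W) : LZ Set.univ p (d u w) := by
  induction w generalizing u with
  | nil => rw [d_nil]; exact LZ.zero
  | cons x w ih =>
    rw [d_cons]
    exact (h w).sub (ih fun w' => h (x :: w'))

theorem lz_contr {X W : Type} [PseudoMetricSpace X] [Finite W] {p : ℕ} (e : X → W)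
    {u : List W → List X → ℤ} (h : ∀ w, LZ Set.univ p (u w)) (w : List W) :
    LZ Set.univ p (contr e u w) := by
  have h1 : LZ Set.univ p (fun l γ => u (γ :: w) l) := lz_pi fun γ => h (γ :: w)
  obtain ⟨ε, hε, h1⟩ := h1
  refine ⟨ε, hε, fun l h2 h3 h4 => ?_⟩
  match l with
  | [] => rfl
  | x :: l => exact congrFun (h1 (x :: l) h2 h3 h4) (e x)

theorem Row.contr [Finite Γ] {p : ℕ} {e : Tor m t → Γ}
    (he : ∀ (γ : Γ) x, e (γ • x) = γ * e x) {u : List Γ → List (Tor m t) → ℤ} (hu : Row p u) :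
    Row p (contr e u) :=
  ⟨inv_contr he hu.inv, lz_contr e hu.lz, supp_contr e hu.supp⟩

theorem Row.exists_contr [Finite Γ] {p : ℕ} {e : Tor m t → Γ}
    (he : ∀ (γ : Γ) x, e (γ • x) = γ * e x) {u : List Γ → List (Tor m t) → ℤ}
    (hu : Row (p + 1) u) (hd : d u = 0) : ∃ v, Row (p + 1) v ∧ d v = u :=
  ⟨Coch.contr e u, hu.contr he, d_contr e hd fun w => hu.supp w [] (by simp)⟩

variable (hc : ∀ γ : Γ, Continuous fun x : Tor m t => γ • x)

include hc

theorem Row.exists_vd {p : ℕ} {u : List Γ → List (Tor m t) → ℤ} (hu : Inv (MonoidHom.id Γ) u)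
    (h0 : u [] = 0) (h : ∀ w, ∃ y, LZ Set.univ p y ∧ Supp p y ∧ d y = u w) :
    ∃ e, Row p e ∧ Coch.vd e = u := by
  obtain ⟨y, h1, h2, h3⟩ := exists_inv
    (P := fun f y => LZ Set.univ p y ∧ Supp p y ∧ d y = f)
    (fun γ f y hy => ⟨lz_pull (hc γ) hy.1, hy.2.1.pull _, by rw [d_pull, hy.2.2]⟩) hu
    (fun w _ => by
      obtain ⟨y, hy⟩ := h w
      refine ⟨y, fun γ hγ => ?_, hy⟩
      rw [MonoidHom.mem_ker, MonoidHom.id_apply] at hγ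
      simp only [hγ, one_smul, pull_id])
  have h4 : ∀ w, LZ Set.univ p (y w) ∧ Supp p (y w) ∧ d (y w) = u w := by
    intro w
    by_cases hw : w = []
    · subst hw
      rw [h2, h0]
      exact ⟨LZ.zero, fun _ _ => rfl, map_zero dHom⟩
    · exact h3 w hw
  exact ⟨y, ⟨h1, fun w => (h4 w).1, fun w => (h4 w).2.1⟩, funext fun w => (h4 w).2.2⟩

theorem exists_correction [Finite Γ] {e : Tor m t → Γ}
    (he : ∀ (γ : Γ) x, e (γ • x) = γ * e x) {p : ℕ} (hp : p ≤ m + 1)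
    {a : List Γ → List (Tor m t) → ℤ} (ha : Row (p + 1) a)
    (h : ∀ w, ∃ y, LZ Set.univ p y ∧ Supp p y ∧ d y = d a w) :
    ∃ b, Row p b ∧ d (a - vd b) = 0 := by
  induction p generalizing a with
  | zero =>
    have h1 : a = 0 := funext fun w => eq_zero_of_lz le_rfl (ha.lz w) (ha.supp w)
    have h2 : vd (0 : List Γ → List (Tor m t) → ℤ) = 0 := funext fun w => map_zero dHom
    refine ⟨0, ⟨fun _ _ => rfl, fun _ => LZ.zero, fun _ _ _ => rfl⟩, ?_⟩
    rw [h1, h2, sub_zero]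
    exact d_zero
  | succ p ih =>
    obtain ⟨f, hf, hfa⟩ := Row.exists_vd hc ha.inv.d (d_nil a) h
    obtain ⟨b, hb, hbf⟩ := ih (by omega) hf fun w =>
      exists_lz_primitive (by omega) (supp_d hf.supp w) (lz_d_family hf.lz w)
        (congrFun (show vd (d f) = 0 by rw [← d_vd, hfa, d_d]) w)
    obtain ⟨c, hc, hcf⟩ := (hf.sub hb.vd).exists_contr he hbf
    refine ⟨c, hc, ?_⟩
    rw [d_sub, ← hfa, d_vd, hcf, vd_sub, vd_vd, sub_zero, sub_self]

/-- The family of translates of a cochain. -/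
def orbit (ψ : List (Tor m t) → ℤ) : List Γ → List (Tor m t) → ℤ := fun w => match w with
  | [γ] => pull (γ⁻¹ • ·) ψ
  | _ => 0

theorem exists_invariant_cocycle [Finite Γ] (hfree : ∀ (γ : Γ) (x : Tor m t), γ • x = x → γ = 1)
    {ψ : List (Tor m t) → ℤ} (hs : Supp (m + 2) ψ) (hlz : LZ Set.univ (m + 2) ψ) 
    (htriv : ∀ γ : Γ, ∃ y, LZ Set.univ (m + 1) y ∧ Supp (m + 1) y ∧ d y = pull (γ • ·) ψ - ψ) :
    ∃ b, LZ Set.univ (m + 1) b ∧ Supp (m + 1) b ∧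
      ∀ γ : Γ, pull (γ • ·) (ψ - d b) = ψ - d b := by
  obtain ⟨e, he⟩ := exists_equivariant hfree
  have ha : Row (m + 2) (orbit ψ : List Γ → _) := by
    refine ⟨fun γ w => ?_, fun w => ?_, fun w => ?_⟩
    · match w with
      | [] => rfl
      | [γ'] =>
        simp only [orbit, List.map_cons, List.map_nil, MonoidHom.id_apply, pull_pull, ← mul_smul]
        simp
      | _ :: _ :: _ => rfl
    · match w with
      | [] => exact LZ.zero
      | [γ] => exact lz_pull (hc γ⁻¹) hlz
      | _ :: _ :: _ => exact LZ.zero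
    · match w with
      | [] => exact fun _ _ => rfl
      | [γ] => exact hs.pull _
      | _ :: _ :: _ => exact fun _ _ => rfl
  obtain ⟨b, hb, hab⟩ := exists_correction hc he le_rfl ha fun w => by
    match w with
    | [] => exact ⟨0, LZ.zero, fun _ _ => rfl, by rw [d_nil]; exact map_zero dHom⟩
    | [γ] => exact ⟨0, LZ.zero, fun _ _ => rfl, by
        rw [d_cons, d_nil, sub_zero]; exact map_zero dHom⟩
    | [γ, γ'] =>
      obtain ⟨y, h1, h2, h3⟩ := htriv γ⁻¹
      obtain ⟨y', h1', h2', h3'⟩ := htriv γ'⁻¹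
      refine ⟨y' - y, h1'.sub h1, h2'.sub h2, ?_⟩
      rw [d_sub, h3, h3', sub_sub_sub_cancel_right]
      simp [d_cons, d_nil, orbit]
    | γ :: γ' :: γ'' :: w => 
      refine ⟨0, LZ.zero, fun _ _ => rfl, ?_⟩
      rw [show d (orbit ψ) (γ :: γ' :: γ'' :: w) = 0 from d_eq_zero fun w' h1 h2 => by
        match w', h1 with
        | _ :: _ :: _, _ => rfl]
      exact map_zero dHom
  obtain ⟨c, hcr, hcd⟩ := (ha.sub hb.vd).exists_contr he hab
  have h1 : c [] = ψ - d (b [1]) := by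
    have h := congrFun hcd [1]
    rw [d_cons, d_nil, sub_zero] at h
    rw [h]
    simp [orbit, vd, pull_id]
  refine ⟨b [1], hb.lz _, hb.supp _, fun γ => ?_⟩
  rw [← h1]
  exact hcr.inv γ []

theorem exists_invariant_coboundary [Finite Γ]
    (hfree : ∀ (γ : Γ) (x : Tor m t), γ • x = x → γ = 1) (c : Fin t → ℤ)
    (htriv : ∀ γ : Γ, Bd Set.univ (m + 1) (pull (γ • ·) (lin m c) - lin m c)) :
    ∃ f, Bd Set.univ (m + 1) (f - lin m c) ∧ Supp (m + 2) (d f) ∧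
      ∀ γ : Γ, pull (γ • ·) (d f) = d f := by
  obtain ⟨b, hb, hbs, hbi⟩ := exists_invariant_cocycle hc hfree (ψ := d (trunc (m + 1) (lin m c)))
    (supp_trunc _ _).d (by rw [d_trunc]; exact lz_trunc (coc_lin c)) fun γ => by
      obtain ⟨η, -, hη⟩ := htriv γ
      refine ⟨trunc (m + 1) (pull (γ • ·) (lin m c) - lin m c - d η), lz_trunc hη,
        supp_trunc _ _, ?_⟩
      rw [← d_pull, ← d_sub, d_trunc, d_sub, d_d, sub_zero, ← d_trunc, pull_trunc]
      congr 1
      funext l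
      simp only [trunc, Pi.sub_apply]
      split_ifs <;> simp
  refine ⟨trunc (m + 1) (lin m c) - b, LZ.bd ?_, ?_, by rwa [d_sub]⟩
  · exact hb.neg.congr fun l hl _ => by simp [trunc, hl]
  · exact ((supp_trunc _ _).sub hbs).d

omit hc in
theorem mem_invLat_of_primitive (hm : 0 < m) {a : ℤ} {c : Fin t → ℤ} {f y : List (Tor m t) → ℤ}
    (hf : Bd Set.univ (m + 1) (f - lin m c)) (hy : ∀ γ : Γ, pull (γ • ·) y = y)
    (h : d y = a • d f) : a • c ∈ invLat m t Γ := by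
  obtain ⟨x, -⟩ := point_exists m t
  have : Nonempty (Tor m t) := ⟨x⟩
  refine mem_invLat.2 ⟨y, hy, ?_⟩
  obtain ⟨θ, hθ⟩ := exists_primitive (show d (y - a • f) = 0 by rw [d_sub, d_zsmul, h, sub_self])
  have h1 : Bd Set.univ (m + 1) (y - a • f) :=
    Bd.of_two_le (by omega) θ (by rw [hθ, sub_self]; exact LZ.zero)
  have h2 := h1.add (hf.smul a)
  rwa [smul_sub, ← lin_smul, sub_add_sub_cancel] at h2

end Transgression

theorem exists_card_eq_two_pow {G : Type*} [Group G] [Finite G] (h : ∀ x : G, x * x = 1) :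
    ∃ n, Nat.card G = 2 ^ n := by
  have : Fact (Nat.Prime 2) := ⟨Nat.prime_two⟩
  exact IsPGroup.iff_card.1 fun x => ⟨1, by rw [pow_one, pow_two, h]⟩

theorem mul_comm_of_sq {G : Type*} [Group G] (h : ∀ x : G, x * x = 1) (a b : G) :
    a * b = b * a := by
  have hi : ∀ a : G, a⁻¹ = a := fun a => inv_eq_of_mul_eq_one_left (h a)
  rw [← hi (a * b), mul_inv_rev, hi, hi]

section Representation

variable {m t : ℕ} {G : Type} [Group G] [MulAction G (Tor m t)]

theorem lin_unique {c c' : Fin t → ℤ} (h : Bd Set.univ (m + 1) (lin m c - lin m c')) : c = c' := by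
  have h1 : lin m (c - c') = lin m c - lin m c' := by
    have h2 := lin_add (m := m) (c - c') c'
    rw [sub_add_cancel] at h2
    rw [h2, add_sub_cancel_right]
  rw [← h1] at h
  exact sub_eq_zero.1 (coeff_unique h)

/-- The representation on the cohomology of the torus in degree `m`. -/
theorem exists_rep (hm : 0 < m) (hc : ∀ g : G, Continuous fun x : Tor m t => g • x) :
    ∃ θ : G →* Module.End ℤ (Fin t → ℤ), ∀ g c,
      Bd Set.univ (m + 1) (pull (g⁻¹ • ·) (lin m c) - lin m (θ g c)) := by
  have hp : ∀ (g : G) {f : List (Tor m t) → ℤ}, Bd Set.univ (m + 1) f →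
      Bd Set.univ (m + 1) (pull (g • ·) f) := fun g f h =>
    h.pull (uc_of_cont (hc g) _) (Set.mapsTo_univ _ _)
  choose θ hθ using fun (g : G) (c : Fin t → ℤ) => exists_coeff hm
    ((coc_lin (m := m) c).pull (uc_of_cont (hc g⁻¹) _) (Set.mapsTo_univ _ _))
  change ∀ g c, Bd Set.univ (m + 1) (pull (g⁻¹ • ·) (lin m c) - lin m (θ g c)) at hθ
  have huniq : ∀ {g c c'}, Bd Set.univ (m + 1) (pull (g⁻¹ • ·) (lin m c) - lin m c') →
      θ g c = c' := fun {g c c'} h => lin_unique (m := m) (by simpa using h.sub (hθ g c))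
  refine ⟨{ toFun := fun g => ⟨⟨θ g, fun c c' => huniq ?_⟩, fun a c => huniq ?_⟩
            map_one' := LinearMap.ext fun c => huniq ?_
            map_mul' := fun g g' => LinearMap.ext fun c => huniq ?_ }, hθ⟩
  · rw [lin_add, lin_add, pull_add, add_sub_add_comm]
    exact (hθ g c).add (hθ g c')
  · change Bd _ _ (_ - lin m (a • θ g c))
    rw [lin_smul, lin_smul, pull_smul, ← smul_sub]
    exact (hθ g c).smul a
  · simp only [inv_one, one_smul, pull_id]
    change Bd _ _ (_ - lin m c)
    rw [sub_self]
    exact Bd.zero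
  · change Bd _ _ (_ - lin m (θ g (θ g' c)))
    have h := (hp g⁻¹ (hθ g' c)).add (hθ g (θ g' c))
    rwa [pull_sub, pull_pull, sub_add_sub_cancel, show
      (fun x : Tor m t => g'⁻¹ • g⁻¹ • x) = fun x => (g * g')⁻¹ • x from funext fun x => by
        rw [← mul_smul, mul_inv_rev]] at h

variable [Finite G] (V : Subgroup G) [V.Normal]

theorem smul_mem_invLat (hm : 0 < m) (hV : ∀ x ∈ V, x * x = 1) (hW : ∀ w : G ⧸ V, w * w = 1)
    (hc : ∀ g : G, Continuous fun x : Tor m t => g • x)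
    (hfree : ∀ (g : G) (x : Tor m t), g • x = x → g = 1)
    {θ : G →* Module.End ℤ (Fin t → ℤ)}
    (hθ : ∀ g c, Bd Set.univ (m + 1) (pull (g⁻¹ • ·) (lin m c) - lin m (θ g c)))
    (c : Fin t → ℤ) :
    (2 : ℤ) ^ (m + 1) • c ∈ invLat m t θ.ker ∧
      ∀ g, (2 : ℤ) ^ m • (θ g c - c) ∈ invLat m t θ.ker := by
  obtain ⟨x, -⟩ := point_exists m t
  have : Nonempty (Tor m t) := ⟨x⟩
  have hfree' : ∀ (γ : θ.ker) (x : Tor m t), γ • x = x → γ = 1 :=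
    fun γ x h => Subtype.ext (hfree γ x h)
  have hpull : ∀ g c, Bd Set.univ (m + 1) (pull (g • ·) (lin m c) - lin m (θ g⁻¹ c)) := by
    intro g c
    have h := hθ g⁻¹ c
    rwa [inv_inv] at h
  obtain ⟨f, hf, hs, hi⟩ := exists_invariant_coboundary (Γ := θ.ker) (fun γ => hc γ) hfree' c
    fun γ => by
      have h := hpull γ c
      rw [MonoidHom.mem_ker.1 (θ.ker.inv_mem γ.2)] at h
      exact h
  let π : θ.ker →* G ⧸ V := (QuotientGroup.mk' V).comp θ.ker.subtype
  have hπ : ∀ γ, π γ = (γ.1 : G ⧸ V) := fun _ => rfl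
  have hsq : ∀ x ∈ π.ker, x * x = 1 := fun x hx =>
    Subtype.ext (hV x ((QuotientGroup.eq_one_iff _).1 hx))
  obtain ⟨n, hn⟩ := exists_card_eq_two_pow (G := π.ker) fun x => Subtype.ext (hsq x x.2)
  obtain ⟨k, hk⟩ := exists_card_eq_two_pow (G := π.range) fun x => Subtype.ext (hW x)
  constructor
  · obtain ⟨y, hy, hyd⟩ := exists_half_primitive hn hk hsq hW hfree' hi hs (d_d f)
    exact mem_invLat_of_primitive hm hf hy hyd
  · intro g
    obtain ⟨y, hy, hyd⟩ := exists_translate_primitive hn hsq hfree' hi hs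
      (d_d f) (τ := (g⁻¹ • ·)) fun γ =>
        ⟨⟨g⁻¹ * γ * g, by simpa using θ.normal_ker.conj_mem γ γ.2 g⁻¹⟩, by
          rw [hπ, hπ, QuotientGroup.mk_mul, QuotientGroup.mk_mul, mul_comm_of_sq hW, ← mul_assoc,
            ← QuotientGroup.mk_mul]
          simp, fun x => by
          rw [Subgroup.mk_smul, Subgroup.smul_def]
          simp only [← mul_smul, mul_inv_cancel_right]⟩
    refine mem_invLat_of_primitive (f := pull (g⁻¹ • ·) f - f) hm ?_ hy (by rw [hyd, d_sub, d_pull])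
    have h := ((hf.pull (uc_of_cont (hc g⁻¹) _) (Set.mapsTo_univ _ _)).add (hθ g c)).sub hf
    have h1 : lin m (θ g c - c) = lin m (θ g c) - lin m c := by
      have h2 := lin_add (m := m) (θ g c - c) c
      rw [sub_add_cancel] at h2
      rw [h2, add_sub_cancel_right]
    rwa [pull_sub, sub_add_sub_cancel, sub_sub_sub_comm, ← h1] at h

end Representation

section Lattice

open Module

theorem ker_index_eq {G M : Type*} [Group G] [Monoid M] (θ : G →* M) :
    θ.ker.index = (Set.range θ).ncard := by
  have h : ∀ a b : G, a⁻¹ * b ∈ θ.ker ↔ θ a = θ b := by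
    intro a b
    rw [MonoidHom.mem_ker, map_mul]
    constructor
    · intro h
      rw [← mul_one (θ a), ← h, ← mul_assoc, ← map_mul, mul_inv_cancel, map_one, one_mul]
    · intro h
      rw [← h, ← map_mul, inv_mul_cancel, map_one]
  refine Nat.card_congr (Equiv.ofBijective (fun q => Quotient.liftOn' q
    (fun g => (⟨θ g, g, rfl⟩ : Set.range θ)) fun a b hab => ?_) ⟨fun a b => ?_, ?_⟩)
  · exact Subtype.ext ((h a b).1 (QuotientGroup.leftRel_apply.1 hab))
  · refine Quotient.inductionOn₂' a b fun a b hab => ?_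
    exact Quotient.sound' (QuotientGroup.leftRel_apply.2 ((h a b).2 (congrArg Subtype.val hab)))
  · rintro ⟨_, g, rfl⟩
    exact ⟨Quotient.mk'' g, rfl⟩

variable {G : Type} [Group G] {K : Type} [AddCommGroup K]

/-- The subgroup generated by `2 K` and by the differences `g x - x`. -/
def aug (θ : G →* End ℤ K) : AddSubgroup K :=
  AddSubgroup.closure (Set.range (fun x : K => 2 • x) ∪ {y | ∃ g x, θ g x - x = y})

variable (θ : G →* End ℤ K)

theorem two_smul_mem_aug (x : K) : 2 • x ∈ aug θ := AddSubgroup.subset_closure (Or.inl ⟨x, rfl⟩)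

theorem sub_mem_aug (g : G) (x : K) : θ g x - x ∈ aug θ :=
  AddSubgroup.subset_closure (Or.inr ⟨g, x, rfl⟩)

variable {θ} in
theorem aug_le {H : AddSubgroup K} (h : ∀ x : K, 2 • x ∈ H) (h' : ∀ g x, θ g x - x ∈ H) :
    aug θ ≤ H := by
  refine (AddSubgroup.closure_le _).2 ?_
  rintro _ (⟨x, rfl⟩ | ⟨g, x, rfl⟩)
  · exact h x
  · exact h' g x

theorem aug_index_dvd [Free ℤ K] [Module.Finite ℤ K] : (aug θ).index ∣ 2 ^ finrank ℤ K := by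
  rw [← AddSubgroup.index_range_nsmul]
  refine AddSubgroup.index_dvd_of_le ?_
  rintro _ ⟨x, rfl⟩
  exact two_smul_mem_aug θ x

theorem aug_index_ne_zero [Free ℤ K] [Module.Finite ℤ K] : (aug θ).index ≠ 0 :=
  ne_zero_of_dvd_ne_zero (by positivity) (aug_index_dvd θ)

/-- The restriction of a representation to an invariant submodule. -/
def subRep (K₁ : Submodule ℤ K) (h : ∀ g, ∀ x ∈ K₁, θ g x ∈ K₁) : G →* End ℤ K₁ where
  toFun g := (θ g).restrict (h g)
  map_one' := by
    ext x
    simp [LinearMap.restrict_apply]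
  map_mul' g g' := by
    ext x
    simp [LinearMap.restrict_apply]

/-- The representation on the quotient by an invariant submodule. -/
def quotRep (K₁ : Submodule ℤ K) (h : ∀ g, ∀ x ∈ K₁, θ g x ∈ K₁) : G →* End ℤ (K ⧸ K₁) where
  toFun g := K₁.mapQ K₁ (θ g) (h g)
  map_one' := by
    ext x
    simp
  map_mul' g g' := by
    ext x
    simp

variable {θ} {K₁ : Submodule ℤ K} (h : ∀ g, ∀ x ∈ K₁, θ g x ∈ K₁)

theorem quotRep_mk (g : G) (x : K) :
    quotRep θ K₁ h g (K₁.mkQ x) = K₁.mkQ (θ g x) := rfl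

theorem mem_ker_subRep {g : G} : g ∈ (subRep θ K₁ h).ker ↔ ∀ x ∈ K₁, θ g x = x := by
  rw [MonoidHom.mem_ker]
  refine ⟨fun hg x hx => congrArg Subtype.val (LinearMap.congr_fun hg ⟨x, hx⟩), fun hg => ?_⟩
  exact LinearMap.ext fun x => Subtype.ext (hg x x.2)

theorem aug_index_dvd_mul :
    (aug θ).index ∣ (aug (subRep θ K₁ h)).index * (aug (quotRep θ K₁ h)).index := by
  have h1 : (aug θ).index =
      (aug θ).relIndex K₁.toAddSubgroup * (aug θ ⊔ K₁.toAddSubgroup).index := by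
    rw [← AddSubgroup.relIndex_mul_index (le_sup_left : aug θ ≤ aug θ ⊔ K₁.toAddSubgroup),
      sup_comm, AddSubgroup.relIndex_sup_right]
  rw [h1]
  refine mul_dvd_mul ?_ ?_
  · refine AddSubgroup.index_dvd_of_le (aug_le (fun x => ?_) fun g x => ?_)
    · exact two_smul_mem_aug θ (x : K)
    · exact sub_mem_aug θ g (x : K)
  · have h2 : aug θ ⊔ K₁.toAddSubgroup =
        ((aug θ).map K₁.mkQ.toAddMonoidHom).comap K₁.mkQ.toAddMonoidHom := by
      rw [AddSubgroup.comap_map_eq]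
      congr 1
      ext x
      simp [AddMonoidHom.mem_ker]
    rw [h2, AddSubgroup.index_comap_of_surjective _ K₁.mkQ_surjective]
    refine AddSubgroup.index_dvd_of_le (aug_le (fun x => ?_) fun g x => ?_)
    · obtain ⟨x, rfl⟩ := K₁.mkQ_surjective x
      exact ⟨2 • x, two_smul_mem_aug θ x, map_nsmul _ _ _⟩
    · obtain ⟨x, rfl⟩ := K₁.mkQ_surjective x
      exact ⟨θ g x - x, sub_mem_aug θ g x, map_sub K₁.mkQ _ _⟩

theorem ker_inf_le [Finite G] [Free ℤ K] : (subRep θ K₁ h).ker ⊓ (quotRep θ K₁ h).ker ≤ θ.ker := by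
  rintro g ⟨h1, h2⟩
  have h1 := (mem_ker_subRep h).1 h1
  have h2 : ∀ x, θ g x - x ∈ K₁ := fun x => by
    have h3 := LinearMap.congr_fun (MonoidHom.mem_ker.1 h2) (K₁.mkQ x)
    rw [quotRep_mk] at h3
    rw [← Submodule.ker_mkQ K₁, LinearMap.mem_ker, map_sub]
    exact sub_eq_zero.2 h3
  refine MonoidHom.mem_ker.2 (LinearMap.ext fun x => ?_)
  have h3 : ∀ n : ℕ, θ (g ^ n) x = x + n • (θ g x - x) := by
    intro n
    induction n with
    | zero => simp
    | succ n ih =>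
      rw [pow_succ', map_mul, End.mul_apply, ih, map_add, map_nsmul, h1 _ (h2 x), succ_nsmul']
      abel
  have h4 := h3 (orderOf g)
  rw [pow_orderOf_eq_one, map_one, End.one_apply, left_eq_add, ← natCast_zsmul] at h4
  exact sub_eq_zero.1
    ((smul_eq_zero.1 h4).resolve_left (Int.natCast_ne_zero.2 (orderOf_pos g).ne'))

theorem ker_index_le_mul [Finite G] [Free ℤ K] :
    θ.ker.index ≤ (subRep θ K₁ h).ker.index * (quotRep θ K₁ h).ker.index :=
  (Nat.le_of_dvd (Nat.pos_of_ne_zero Subgroup.index_ne_zero_of_finite)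
    (Subgroup.index_dvd_of_le (ker_inf_le h))).trans Subgroup.index_inf_le

end Lattice

section Lattice

open Module

variable {G : Type} [Group G] {K : Type} [AddCommGroup K] [Free ℤ K] [Module.Finite ℤ K]
  {θ : G →* End ℤ K}

theorem eq_zero_of_finrank_eq_zero (h : finrank ℤ K = 0) (x : K) : x = 0 := by
  have := (finrank_zero_iff (R := ℤ) (M := K)).1 h
  exact Subsingleton.elim _ _

theorem free_quot_ker (f : End ℤ K) : Free ℤ (K ⧸ LinearMap.ker f) :=
  Free.of_equiv f.quotKerEquivRange.symm

theorem fixed_invariant {z : End ℤ K} (hc : ∀ g, Commute (θ g) z) (g : G) (x : K)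
    (hx : x ∈ LinearMap.ker (z - 1)) : θ g x ∈ LinearMap.ker (z - 1) := by
  rw [LinearMap.mem_ker, LinearMap.sub_apply, End.one_apply, sub_eq_zero] at hx ⊢
  rw [← End.mul_apply, ← (hc g).eq, End.mul_apply, hx]

theorem finrank_fixed_pos {z : End ℤ K} (hz : z * z = 1) (h : z ≠ -1) :
    0 < finrank ℤ (LinearMap.ker (z - 1)) := by
  refine Nat.pos_of_ne_zero fun h0 => h (LinearMap.ext fun x => ?_)
  have h1 : z x + x ∈ LinearMap.ker (z - 1) := by
    rw [LinearMap.mem_ker, LinearMap.sub_apply, End.one_apply, map_add, ← End.mul_apply, hz,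
      End.one_apply]
    abel
  have h2 := congrArg Subtype.val (eq_zero_of_finrank_eq_zero h0 ⟨_, h1⟩)
  exact eq_neg_of_add_eq_zero_left h2

theorem finrank_quot_fixed_pos {z : End ℤ K} (h : z ≠ 1) :
    0 < finrank ℤ (K ⧸ LinearMap.ker (z - 1)) := by
  have := free_quot_ker (z - 1)
  refine Nat.pos_of_ne_zero fun h0 => h (sub_eq_zero.1 (LinearMap.ext fun x => ?_))
  have h2 := eq_zero_of_finrank_eq_zero h0 (Submodule.Quotient.mk x)
  exact LinearMap.mem_ker.1 ((Submodule.Quotient.mk_eq_zero _).1 h2)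

/-- An elementary abelian 2-group acting on a lattice of rank `n` has image of order at most
`2 ^ n`. -/
theorem ker_index_le_of_sq [Finite G] {n : ℕ} (hn : finrank ℤ K = n)
    (hsq : ∀ g, θ g * θ g = 1) : θ.ker.index ≤ 2 ^ n := by
  induction n using Nat.strong_induction_on generalizing K with
  | _ n ih =>
    by_cases hz : ∃ z, θ z ≠ 1 ∧ θ z ≠ -1
    · obtain ⟨z, h1, h2⟩ := hz
      have hc : ∀ g, Commute (θ g) (θ z) := by
        intro g
        have h : θ g * θ z * (θ g * θ z) = 1 := by rw [← map_mul, hsq]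
        calc θ g * θ z = θ g * (θ g * θ z * (θ g * θ z)) * θ z := by rw [h, mul_one]
          _ = θ g * θ g * (θ z * θ g) * (θ z * θ z) := by simp only [mul_assoc]
          _ = θ z * θ g := by rw [hsq, hsq, one_mul, mul_one]
      have h3 := fixed_invariant hc
      have h4 := finrank_fixed_pos (hsq z) h2
      have h5 := finrank_quot_fixed_pos h1
      have h6 := Submodule.finrank_quotient_add_finrank (LinearMap.ker (θ z - 1))
      have := free_quot_ker (θ z - 1)
      have h7 := ih _ (by omega) (θ := subRep θ _ h3) rfl fun g => by
        rw [← map_mul]; exact (mem_ker_subRep h3).2 fun x _ => by rw [map_mul, hsq]; rfl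
      have h8 := ih _ (by omega) (θ := quotRep θ _ h3) rfl fun g => by
        rw [← map_mul]
        refine LinearMap.ext fun x => ?_
        obtain ⟨x, rfl⟩ := Submodule.mkQ_surjective _ x
        rw [quotRep_mk, map_mul, hsq]
        rfl
      refine (ker_index_le_mul h3).trans ((Nat.mul_le_mul h7 h8).trans_eq ?_)
      rw [← pow_add, add_comm, h6, hn]
    · have hpm : ∀ z, θ z = 1 ∨ θ z = -1 := fun z => by
        by_contra h
        exact hz ⟨z, not_or.1 h⟩
      rw [ker_index_eq]
      rcases Nat.eq_zero_or_pos n with h0 | h0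
      · have := (finrank_zero_iff (R := ℤ) (M := K)).1 (hn.trans h0)
        rw [h0, pow_zero]
        exact Set.ncard_le_one_of_subsingleton _
      · have h1 : Set.range θ ⊆ {1, -1} := by
          rintro _ ⟨g, rfl⟩
          exact hpm g
        calc (Set.range θ).ncard ≤ ({1, -1} : Set (End ℤ K)).ncard :=
              Set.ncard_le_ncard h1 (Set.toFinite _)
          _ ≤ 2 := (Set.ncard_insert_le _ _).trans_eq (by rw [Set.ncard_singleton])
          _ ≤ 2 ^ n := Nat.le_self_pow h0.ne' 2

/-- A finite 2-group acting on a nonzero lattice has nontrivial coinvariants modulo 2. -/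
theorem two_le_aug_index [Finite G] (hG : IsPGroup 2 G) (h0 : 0 < finrank ℤ K) :
    2 ≤ (aug θ).index := by
  have : Fact (Nat.Prime 2) := ⟨Nat.prime_two⟩
  let A := K →+ ZMod 2
  let B := finBasis ℤ K
  have hfin : Finite A := by
    refine Finite.of_injective (fun (f : A) i => f (B i)) fun f f' h => ?_
    have h1 : f.toIntLinearMap = f'.toIntLinearMap := B.ext fun i => congrFun h i
    exact AddMonoidHom.ext fun x => LinearMap.congr_fun h1 x
  let act : MulAction G A :=
    { smul := fun g f => f.comp (θ g⁻¹).toAddMonoidHom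
      one_smul := fun f => AddMonoidHom.ext fun x => by
        change f (θ 1⁻¹ x) = f x
        simp
      mul_smul := fun g g' f => AddMonoidHom.ext fun x => by
        change f (θ (g * g')⁻¹ x) = f (θ g'⁻¹ (θ g⁻¹ x))
        rw [mul_inv_rev, map_mul]
        rfl }
  have hsm : ∀ (g : G) (f : A) x, (g • f) x = f (θ g⁻¹ x) := fun _ _ _ => rfl
  have h2 : 2 ∣ Nat.card A := by
    let f : A := (Int.castAddHom (ZMod 2)).comp (B.coord ⟨0, h0⟩).toAddMonoidHom
    have hf : f ≠ 0 := fun h => by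
      have h1 := DFunLike.congr_fun h (B ⟨0, h0⟩)
      change ((B.coord ⟨0, h0⟩ (B ⟨0, h0⟩) : ℤ) : ZMod 2) = 0 at h1
      rw [Basis.coord_apply, Basis.repr_self, Finsupp.single_eq_same, Int.cast_one] at h1
      exact one_ne_zero h1
    have h3 : addOrderOf f = 2 := addOrderOf_eq_prime (AddMonoidHom.ext fun x => by
      change 2 • f x = 0
      rw [nsmul_eq_mul, show ((2 : ℕ) : ZMod 2) = 0 from rfl, zero_mul]) hf
    rw [← h3]
    exact addOrderOf_dvd_natCard f
  obtain ⟨f, hf, hf0⟩ := hG.exists_fixed_point_of_prime_dvd_card_of_fixed_point A h2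
    (a := 0) fun g => rfl
  have h3 : aug θ ≤ f.ker := by
    refine aug_le (fun x => ?_) fun g x => ?_
    · rw [AddMonoidHom.mem_ker, map_nsmul, nsmul_eq_mul, show ((2 : ℕ) : ZMod 2) = 0 from rfl,
        zero_mul]
    · have h4 := DFunLike.congr_fun (hf g⁻¹) x
      rw [hsm, inv_inv] at h4
      rw [AddMonoidHom.mem_ker, map_sub, h4, sub_self]
  have h4 : (aug θ).index ≠ 1 := fun h => by
    rw [AddSubgroup.index_eq_one] at h
    rw [h, top_le_iff] at h3
    exact hf0 (AddMonoidHom.ext fun x =>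
      (AddMonoidHom.mem_ker.1 (h3 ▸ AddSubgroup.mem_top x)).symm)
  have := aug_index_ne_zero θ
  omega

end Lattice

section Lattice

open Module

variable {G : Type} [Group G] {K : Type} [AddCommGroup K] [Free ℤ K] [Module.Finite ℤ K]
  {θ : G →* End ℤ K}

theorem rep_inv_apply (g : G) (x : K) : θ g⁻¹ (θ g x) = x := by
  rw [← End.mul_apply, ← map_mul, inv_mul_cancel, map_one, End.one_apply]

theorem rep_apply_inv (g : G) (x : K) : θ g (θ g⁻¹ x) = x := by
  rw [← End.mul_apply, ← map_mul, mul_inv_cancel, map_one, End.one_apply]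

theorem rep_injective (g : G) : Function.Injective (θ g) :=
  Function.LeftInverse.injective (g := θ g⁻¹) (rep_inv_apply g)

theorem rep_ne_neg [Nontrivial K] (g : G) : θ g ≠ -θ g := by
  intro h
  obtain ⟨x, hx⟩ := exists_ne (0 : K)
  have h1 := LinearMap.congr_fun h (θ g⁻¹ x)
  rw [LinearMap.neg_apply, rep_apply_inv] at h1
  have h2 : (2 : ℤ) • x = 0 := by
    rw [two_smul]
    nth_rewrite 1 [h1]
    exact neg_add_cancel x
  exact hx ((smul_eq_zero.1 h2).resolve_left two_ne_zero)

/-- The fixed sublattice of an endomorphism. -/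
abbrev fix (f : End ℤ K) : Submodule ℤ K := LinearMap.ker (f - 1)

/-- The sublattice on which an endomorphism acts by `-1`. -/
abbrev antifix (f : End ℤ K) : Submodule ℤ K := LinearMap.ker (f + 1)

theorem mem_fix {f : End ℤ K} {x : K} : x ∈ fix f ↔ f x = x := by
  rw [LinearMap.mem_ker, LinearMap.sub_apply, End.one_apply, sub_eq_zero]

theorem mem_antifix {f : End ℤ K} {x : K} : x ∈ antifix f ↔ f x = -x := by
  rw [LinearMap.mem_ker, LinearMap.add_apply, End.one_apply, add_eq_zero_iff_eq_neg]

section Swap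

variable {g : G} {z : End ℤ K} (hz : z * z = 1) (hg : θ g * z = -(z * θ g))

include hg in
theorem swap_fix {x : K} (hx : x ∈ fix z) : θ g x ∈ antifix z := by
  rw [mem_fix] at hx
  have h := LinearMap.congr_fun hg x
  rw [LinearMap.neg_apply, End.mul_apply, End.mul_apply, hx] at h
  rw [mem_antifix]
  exact (neg_eq_iff_eq_neg.2 h).symm

include hg in
theorem swap_antifix {x : K} (hx : x ∈ antifix z) : θ g x ∈ fix z := by
  rw [mem_antifix] at hx
  have h := LinearMap.congr_fun hg x
  rw [LinearMap.neg_apply, End.mul_apply, End.mul_apply, hx, map_neg, neg_inj] at h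
  rw [mem_fix, ← h]

include hz in
theorem range_add_one_le : LinearMap.range (z + 1) ≤ fix z := by
  rintro _ ⟨x, rfl⟩
  rw [mem_fix, LinearMap.add_apply, End.one_apply, map_add, ← End.mul_apply, hz, End.one_apply,
    add_comm]

theorem two_smul_mem_range {x : K} (hx : x ∈ fix z) : 2 • x ∈ LinearMap.range (z + 1) :=
  ⟨x, by rw [LinearMap.add_apply, mem_fix.1 hx, End.one_apply, two_nsmul]⟩

include hg in
theorem finrank_antifix : finrank ℤ (antifix z) = finrank ℤ (fix z) := by
  refine le_antisymm ?_ ?_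
  · refine LinearMap.finrank_le_finrank_of_injective
      (f := (θ g).restrict (p := antifix z) (q := fix z) fun x hx => swap_antifix hg hx) ?_
    exact fun x y h => Subtype.ext (rep_injective g (congrArg Subtype.val h))
  · refine LinearMap.finrank_le_finrank_of_injective
      (f := (θ g).restrict (p := fix z) (q := antifix z) fun x hx => swap_fix hg hx) ?_
    exact fun x y h => Subtype.ext (rep_injective g (congrArg Subtype.val h))

include hz hg in
theorem finrank_eq_two_mul : finrank ℤ K = 2 * finrank ℤ (fix z) := by
  have h1 : finrank ℤ (LinearMap.range (z + 1)) + finrank ℤ (antifix z) = finrank ℤ K := by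
    rw [← (z + 1 : End ℤ K).quotKerEquivRange.finrank_eq]
    exact Submodule.finrank_quotient_add_finrank _
  have h2 : finrank ℤ (LinearMap.range (z + 1)) = finrank ℤ (fix z) := by
    refine le_antisymm (Submodule.finrank_mono (range_add_one_le hz)) ?_
    refine LinearMap.finrank_le_finrank_of_injective
      (f := (2 • (1 : End ℤ K)).restrict (p := fix z) (q := LinearMap.range (z + 1))
        fun x hx => two_smul_mem_range hx) ?_
    intro x y h
    have h3 : (2 : ℕ) • (x : K) = 2 • (y : K) := congrArg Subtype.val h
    rw [← natCast_zsmul, ← natCast_zsmul] at h3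
    exact Subtype.ext (smul_right_injective K (r := ((2 : ℕ) : ℤ)) (by norm_num) h3)
  have h3 := finrank_antifix hg
  omega

include hz hg in
theorem aug_index_swap {k : G} (hk : θ k = z) : (aug θ).index ≤ 2 ^ finrank ℤ (fix z) := by
  let A := (fix z).toAddSubgroup
  let R := (LinearMap.range (z + 1)).toAddSubgroup
  let T := (nsmulAddMonoidHom (α := fix z) 2).range.map (fix z).subtype.toAddMonoidHom
  have hTR : T ≤ R := by
    rintro _ ⟨_, ⟨x, rfl⟩, rfl⟩
    exact two_smul_mem_range x.2
  have hRA : R ≤ A := range_add_one_le hz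
  have hTA : T.relIndex A = 2 ^ finrank ℤ (fix z) := by
    rw [← AddSubgroup.index_range_nsmul]
    exact congrArg AddSubgroup.index (AddSubgroup.comap_map_eq_self_of_injective
      (f := (fix z).subtype.toAddMonoidHom) Subtype.val_injective _)
  have hRJ : R ≤ aug θ := by
    rintro _ ⟨x, rfl⟩
    have h := add_mem (sub_mem_aug θ k x) (two_smul_mem_aug θ x)
    rw [hk, two_nsmul, sub_add_add_cancel] at h
    exact h
  have hcomap : T.comap (z + 1 : End ℤ K).toAddMonoidHom ≤ aug θ ⊔ A := by
    rintro x ⟨_, ⟨y, rfl⟩, hy⟩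
    have hy : 2 • (y : K) = z x + x := hy
    have h1 : x - y ∈ antifix z := by
      rw [mem_antifix, map_sub, mem_fix.1 y.2, eq_neg_iff_add_eq_zero, sub_add_sub_comm, ← hy,
        two_nsmul, sub_self]
    have h2 := AddSubgroup.mem_sup.2 ⟨_, neg_mem (sub_mem_aug θ g (x - y)), _,
      A.add_mem (swap_antifix hg h1) y.2, rfl⟩
    convert h2 using 1
    abel
  have h1 : (aug θ).index = (aug θ).relIndex A * (aug θ ⊔ A).index := by
    rw [← AddSubgroup.relIndex_mul_index (le_sup_left : aug θ ≤ aug θ ⊔ A),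
      sup_comm, AddSubgroup.relIndex_sup_right]
  have h2 : (aug θ ⊔ A).index ∣ T.relIndex R := by
    refine (AddSubgroup.index_dvd_of_le hcomap).trans ?_
    rw [AddSubgroup.index_comap]
    rfl
  refine Nat.le_of_dvd (by positivity) ?_
  rw [h1, ← hTA, ← AddSubgroup.relIndex_mul_relIndex _ _ _ hTR hRA, mul_comm]
  exact mul_dvd_mul h2 (AddSubgroup.relIndex_dvd_of_le_left _ hRJ)

end Swap

end Lattice

section Lattice

open Module

/-- A nontrivial normal subgroup of a finite `p`-group meets the center nontrivially. -/
theorem exists_mem_center {Q : Type*} [Group Q] [Finite Q] {p : ℕ} [Fact p.Prime]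
    (hQ : IsPGroup p Q) (P : Subgroup Q) [P.Normal] (hP : ∃ x ∈ P, x ≠ 1) :
    ∃ x ∈ P, x ≠ 1 ∧ ∀ g, g * x * g⁻¹ = x := by
  have hdvd : p ∣ Nat.card P := by
    obtain ⟨x, hx, hx1⟩ := hP
    refine ((hQ.to_subgroup P).card_eq_or_dvd).resolve_left fun h => hx1 ?_
    exact Subgroup.mem_bot.1 (Subgroup.card_eq_one.1 h ▸ hx)
  have hC : IsPGroup p (ConjAct Q) := hQ.of_equiv ConjAct.toConjAct
  obtain ⟨x, hx, hx1⟩ := hC.exists_fixed_point_of_prime_dvd_card_of_fixed_point P hdvd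
    (a := 1) fun g => smul_one g
  refine ⟨x, x.2, fun h => hx1 (Subtype.ext h.symm), fun g => ?_⟩
  exact congrArg Subtype.val (hx (ConjAct.toConjAct g))

variable {G : Type} [Group G] {K : Type} [AddCommGroup K] [Free ℤ K] [Module.Finite ℤ K]
  {θ : G →* End ℤ K} (V : Subgroup G) [V.Normal]

theorem isPGroup_of_sq (hV : ∀ v ∈ V, v * v = 1) (hG : ∀ g, g * g ∈ V) : IsPGroup 2 G :=
  fun g => ⟨2, by
    rw [show 2 ^ 2 = 2 * 2 from rfl, pow_mul, pow_two, pow_two, hV _ (hG g)]⟩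

theorem comm_mem (hG : ∀ g, g * g ∈ V) (g h : G) : g * h * g⁻¹ * h⁻¹ ∈ V := by
  rw [← QuotientGroup.eq_one_iff]
  have hsq : ∀ x : G ⧸ V, x * x = 1 := fun x => by
    obtain ⟨x, rfl⟩ := QuotientGroup.mk_surjective x
    exact (QuotientGroup.eq_one_iff _).2 (hG x)
  rw [QuotientGroup.mk_mul, QuotientGroup.mk_mul, QuotientGroup.mk_mul, mul_comm_of_sq hsq g h,
    QuotientGroup.mk_inv, QuotientGroup.mk_inv, mul_inv_cancel_right, mul_inv_cancel]

theorem conj_eq_or_neg {a b : G} (h : θ (a * b⁻¹) = 1 ∨ θ (a * b⁻¹) = -1) :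
    θ a = θ b ∨ θ a = -θ b := by
  have h1 : θ a = θ (a * b⁻¹) * θ b := by rw [← map_mul, inv_mul_cancel_right]
  rcases h with h | h
  · left
    rw [h1, h, one_mul]
  · right
    rw [h1, h, neg_one_mul]

/-- If some involution does not act by a sign, then some such involution has all its conjugates
equal to it up to sign. -/
theorem exists_conj_eq_or_neg [Finite G] (hV : ∀ v ∈ V, v * v = 1) (hG : ∀ g, g * g ∈ V)
    (h : ∃ z, θ z * θ z = 1 ∧ θ z ≠ 1 ∧ θ z ≠ -1) :
    ∃ z, θ z * θ z = 1 ∧ θ z ≠ 1 ∧ θ z ≠ -1 ∧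
      ∀ g, θ (g * z * g⁻¹) = θ z ∨ θ (g * z * g⁻¹) = -θ z := by
  by_cases hs : ∀ v ∈ V, θ v = 1 ∨ θ v = -1
  · obtain ⟨z, h1, h2, h3⟩ := h
    exact ⟨z, h1, h2, h3, fun g => conj_eq_or_neg (hs _ (comm_mem V hG g z))⟩
  · push Not at hs
    obtain ⟨v, hv, hv1, hv2⟩ := hs
    let N : Subgroup G :=
      { carrier := {g | θ g = 1 ∨ θ g = -1}
        one_mem' := Or.inl (map_one θ)
        mul_mem' := by
          rintro a b (ha | ha) (hb | hb) <;> simp [ha, hb]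
        inv_mem' := by
          rintro a (ha | ha)
          · left
            rw [← one_mul (θ a⁻¹)]
            nth_rewrite 1 [← ha]
            rw [← map_mul, mul_inv_cancel, map_one]
          · right
            have h1 : -1 * θ a⁻¹ = 1 := by rw [← ha, ← map_mul, mul_inv_cancel, map_one]
            rw [neg_one_mul] at h1
            rw [← h1, neg_neg] }
    have hN : ∀ {g}, g ∈ N ↔ θ g = 1 ∨ θ g = -1 := Iff.rfl
    have hNn : N.Normal := ⟨fun n hn g => by
      rw [hN, map_mul, map_mul]
      have h1 : θ g * θ g⁻¹ = 1 := by rw [← map_mul, mul_inv_cancel, map_one]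
      rcases hn with hn | hn <;> rw [hn]
      · left
        rw [mul_one, h1]
      · right
        rw [mul_neg_one, neg_mul, h1]⟩
    have : Fact (Nat.Prime 2) := ⟨Nat.prime_two⟩
    have hP : (V.map (QuotientGroup.mk' N)).Normal :=
      Subgroup.Normal.map inferInstance _ (QuotientGroup.mk'_surjective N)
    obtain ⟨_, ⟨z, hz, rfl⟩, hz1, hzc⟩ := exists_mem_center
      ((isPGroup_of_sq V hV hG).to_quotient N) (V.map (QuotientGroup.mk' N))
      ⟨_, ⟨v, hv, rfl⟩, fun h => by
        rcases hN.1 ((QuotientGroup.eq_one_iff v).1 h) with h | h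
        exacts [hv1 h, hv2 h]⟩
    have hz2 : z ∉ N := fun h => hz1 ((QuotientGroup.eq_one_iff z).2 h)
    refine ⟨z, by rw [← map_mul, hV z hz, map_one], fun h => hz2 (Or.inl h),
      fun h => hz2 (Or.inr h), fun g => conj_eq_or_neg (hN.1 ?_)⟩
    rw [← QuotientGroup.eq_one_iff, QuotientGroup.mk_mul, QuotientGroup.mk_inv]
    exact mul_inv_eq_one.2 (hzc g)

/-- The inequality `|θ(G)| * |K / aug| ≤ 4 ^ n` for all two-step groups acting on lattices of
rank `n`. -/
def AugBound (n : ℕ) : Prop :=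
  ∀ (G : Type) [Group G] [Finite G] (V : Subgroup G) [V.Normal] (K : Type) [AddCommGroup K]
    [Free ℤ K] [Module.Finite ℤ K] (θ : G →* End ℤ K), (∀ v : G, v ∈ V → v * v = 1) →
    (∀ g : G, g * g ∈ V) → finrank ℤ K = n → θ.ker.index * (aug θ).index ≤ 4 ^ n

theorem augBound_of_commute [Finite G] (hV : ∀ v ∈ V, v * v = 1) (hG : ∀ g, g * g ∈ V)
    (ih : ∀ k < finrank ℤ K, AugBound k) {z : End ℤ K} (hz : z * z = 1) (h1 : z ≠ 1)
    (h2 : z ≠ -1) (hc : ∀ g, Commute (θ g) z) :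
    θ.ker.index * (aug θ).index ≤ 4 ^ finrank ℤ K := by
  have h3 := fixed_invariant hc
  have h4 := finrank_fixed_pos hz h2
  have h5 := finrank_quot_fixed_pos h1
  have h6 := Submodule.finrank_quotient_add_finrank (LinearMap.ker (z - 1))
  have := free_quot_ker (z - 1)
  have h7 := ih (finrank ℤ (LinearMap.ker (z - 1))) (by omega) G V _ (subRep θ _ h3) hV hG rfl
  have h8 := ih (finrank ℤ (K ⧸ LinearMap.ker (z - 1))) (by omega) G V _ (quotRep θ _ h3) hV hG rfl
  have h9 := ker_index_le_mul h3
  have h10 := Nat.le_of_dvd (Nat.pos_of_ne_zero (mul_ne_zero (aug_index_ne_zero _)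
    (aug_index_ne_zero _))) (aug_index_dvd_mul h3)
  calc _ ≤ _ := Nat.mul_le_mul h9 h10
    _ = _ := Nat.mul_mul_mul_comm _ _ _ _
    _ ≤ _ := Nat.mul_le_mul h7 h8
    _ = _ := by rw [← pow_add, add_comm, h6]

end Lattice

section Lattice

open Module

variable {G : Type} [Group G] {K : Type} [AddCommGroup K] [Free ℤ K] [Module.Finite ℤ K]
  {θ : G →* End ℤ K} (V : Subgroup G) [V.Normal]

theorem augBound_of_swap [Finite G] (hV : ∀ v ∈ V, v * v = 1) (hG : ∀ g, g * g ∈ V)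
    (ih : ∀ k < finrank ℤ K, AugBound k) {k : G} (hz : θ k * θ k = 1) (hz1 : θ k ≠ 1)
    (hz2 : θ k ≠ -1)
    (hconj : ∀ h, Commute (θ h) (θ k) ∨ θ h * θ k = -(θ k * θ h)) {g : G}
    (hg : θ g * θ k = -(θ k * θ g)) :
    θ.ker.index * (aug θ).index ≤ 4 ^ finrank ℤ K := by
  have : Nontrivial K := by
    by_contra h
    rw [not_nontrivial_iff_subsingleton] at h
    exact hz1 (Subsingleton.elim _ _)
  have hnot : ∀ {h}, θ h * θ k = -(θ k * θ h) → ¬ Commute (θ h) (θ k) := by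
    intro h h1 h2
    rw [← h2.eq, ← map_mul] at h1
    exact rep_ne_neg _ h1
  let H : Subgroup G :=
    { carrier := {h | Commute (θ h) (θ k)}
      one_mem' := by
        change Commute (θ 1) _
        rw [map_one]
        exact Commute.one_left _
      mul_mem' := fun {a b} ha hb => by
        change Commute (θ (a * b)) _
        rw [map_mul]
        exact Commute.mul_left ha hb
      inv_mem' := fun {a} ha => by
        change Commute (θ a⁻¹) _
        have ha : Commute (θ a) (θ k) := ha
        have h1 : θ a * θ a⁻¹ = 1 := by rw [← map_mul, mul_inv_cancel, map_one]
        have h2 : θ a⁻¹ * θ a = 1 := by rw [← map_mul, inv_mul_cancel, map_one]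
        calc θ a⁻¹ * θ k = θ a⁻¹ * (θ k * θ a) * θ a⁻¹ := by
              rw [mul_assoc, mul_assoc, h1, mul_one]
          _ = θ k * θ a⁻¹ := by rw [← ha.eq, ← mul_assoc, h2, one_mul] }
  have hH : ∀ {h}, h ∈ H ↔ Commute (θ h) (θ k) := Iff.rfl
  have hindex : H.index = 2 := by
    rw [Subgroup.index_eq_two_iff]
    refine ⟨g, fun b => ?_⟩
    rw [hH, hH]
    rcases hconj b with hb | hb
    · refine Or.inr ⟨hb, hnot ?_⟩
      rw [map_mul, mul_assoc, hg, mul_neg, ← mul_assoc, hb.eq, mul_assoc]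
    · refine Or.inl ⟨?_, hnot hb⟩
      change θ (b * g) * θ k = θ k * θ (b * g)
      rw [map_mul, mul_assoc, hg, mul_neg, ← mul_assoc, hb, neg_mul, neg_neg, mul_assoc]
  have hHn : H.Normal := Subgroup.normal_of_index_eq_two hindex
  let θH := θ.comp H.subtype
  have hcomm : ∀ h, Commute (θH h) (θ k) := fun h => h.2
  have i1 : ∀ h, ∀ x ∈ fix (θ k), θH h x ∈ fix (θ k) := fixed_invariant hcomm
  have i2 : ∀ h, ∀ x ∈ antifix (θ k), θH h x ∈ antifix (θ k) := fun h x hx => by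
    rw [mem_antifix] at hx ⊢
    rw [← End.mul_apply, ← (hcomm h).eq, End.mul_apply, hx, map_neg]
  let θ₁ := subRep θH _ i1
  let θ₂ := subRep θH _ i2
  have hfix : ∀ x, θ k x + x ∈ fix (θ k) := fun x => range_add_one_le hz ⟨x, rfl⟩
  have hanti : ∀ x, x - θ k x ∈ antifix (θ k) := fun x => by
    rw [mem_antifix, map_sub, ← End.mul_apply, hz, End.one_apply, neg_sub]
  have hle : θ₁.ker ⊓ θ₂.ker ≤ θH.ker := by
    rintro h ⟨h1, h2⟩
    refine MonoidHom.mem_ker.2 (LinearMap.ext fun x => ?_)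
    have h3 := (mem_ker_subRep i1).1 h1 _ (hfix x)
    have h4 := (mem_ker_subRep i2).1 h2 _ (hanti x)
    have h5 := congrArg₂ (· + ·) h3 h4
    have h6 : θ k x + x + (x - θ k x) = (2 : ℤ) • x := by rw [two_smul]; abel
    simp only [← map_add] at h5
    rw [h6, map_smul] at h5
    exact smul_right_injective K (r := (2 : ℤ)) two_ne_zero h5
  have hker : θ.ker.index = θH.ker.index * 2 := by
    have h1 : θ.ker ≤ H := fun h hh => by
      rw [hH, MonoidHom.mem_ker.1 hh]
      exact Commute.one_left _
    rw [← Subgroup.relIndex_mul_index h1, hindex]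
    rfl
  have hN : θ₂.ker.relIndex θ₁.ker ≤ 2 ^ finrank ℤ (fix (θ k)) := by
    have h1 : (θ₂.comp (V.subgroupOf H).subtype).ker.index ≤ 2 ^ finrank ℤ (fix (θ k)) := by
      refine ker_index_le_of_sq (finrank_antifix hg) fun v => ?_
      rw [← map_mul, show v * v = 1 from Subtype.ext (Subtype.ext (hV _ v.2)), map_one]
    refine le_trans ?_ h1
    rw [show θ₂.ker.relIndex θ₁.ker = (θ₂.comp θ₁.ker.subtype).ker.index from rfl, ker_index_eq,
      ker_index_eq]
    refine Set.ncard_le_ncard ?_ (Set.finite_range _)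
    rintro _ ⟨⟨h, hh⟩, rfl⟩
    have hhV : g⁻¹ * (h : G)⁻¹ * g * h ∈ V := by
      simpa using comm_mem V hG g⁻¹ (h : G)⁻¹
    have hhH : g⁻¹ * (h : G)⁻¹ * g * h ∈ H := by
      refine H.mul_mem ?_ h.2
      simpa using hHn.conj_mem _ (H.inv_mem h.2) g⁻¹
    refine ⟨⟨⟨_, hhH⟩, hhV⟩, LinearMap.ext fun y => Subtype.ext ?_⟩
    change θ (g⁻¹ * (h : G)⁻¹ * g * h) y = θ h y
    rw [map_mul, map_mul, map_mul, End.mul_apply, End.mul_apply, End.mul_apply]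
    have h2 : θ (h : G)⁻¹ (θ g (θ h y)) = θ g (θ h y) :=
      (mem_ker_subRep i1).1 (inv_mem hh) _ (swap_antifix hg (i2 h y y.2))
    rw [h2, rep_inv_apply]
  have hn := finrank_eq_two_mul hz hg
  have hpos : 0 < finrank ℤ (fix (θ k)) := finrank_fixed_pos hz hz2
  have h1 : θ₁.ker.index * (aug θ₁).index ≤ 4 ^ finrank ℤ (fix (θ k)) :=
    ih (finrank ℤ (fix (θ k))) (by omega) H (V.subgroupOf H) _ θ₁
      (fun v hv => Subtype.ext (hV _ hv)) (fun h => hG h) rfl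
  have h2 : 2 ≤ (aug θ₁).index :=
    two_le_aug_index ((isPGroup_of_sq V hV hG).to_subgroup H) hpos
  have h3 : θH.ker.index ≤ θ₂.ker.relIndex θ₁.ker * θ₁.ker.index := by
    refine (Nat.le_of_dvd (Nat.pos_of_ne_zero Subgroup.index_ne_zero_of_finite)
      (Subgroup.index_dvd_of_le hle)).trans_eq ?_
    rw [← Subgroup.relIndex_mul_index (inf_le_left : θ₁.ker ⊓ θ₂.ker ≤ θ₁.ker), inf_comm,
      Subgroup.inf_relIndex_right]
  have h4 := aug_index_swap hz hg (θ := θ) rfl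
  calc θ.ker.index * (aug θ).index
      ≤ (2 ^ finrank ℤ (fix (θ k)) * θ₁.ker.index * 2) * 2 ^ finrank ℤ (fix (θ k)) := by
        rw [hker]
        exact Nat.mul_le_mul (Nat.mul_le_mul_right _ (h3.trans (Nat.mul_le_mul_right _ hN))) h4
    _ = (θ₁.ker.index * 2) * (2 * 2) ^ finrank ℤ (fix (θ k)) := by rw [mul_pow]; ring
    _ ≤ 4 ^ finrank ℤ (fix (θ k)) * 4 ^ finrank ℤ (fix (θ k)) :=
        Nat.mul_le_mul_right _ ((Nat.mul_le_mul_left _ h2).trans h1)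
    _ = 4 ^ finrank ℤ K := by rw [← pow_add, hn, two_mul]

theorem aug_index_ne_of_sq_neg (h0 : 0 < finrank ℤ K) {g : G} (hg : θ g * θ g = -1) :
    (aug θ).index ≠ 2 ^ finrank ℤ K := by
  intro h
  let T := (nsmulAddMonoidHom (α := K) 2).range
  have hT : T.index = 2 ^ finrank ℤ K := AddSubgroup.index_range_nsmul _ _
  have hle : T ≤ aug θ := by
    rintro _ ⟨x, rfl⟩
    exact two_smul_mem_aug θ x
  have hle' : aug θ ≤ T := by
    have h1 := AddSubgroup.relIndex_mul_index hle
    rw [h, hT] at h1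
    exact AddSubgroup.relIndex_eq_one.1 (Nat.eq_of_mul_eq_mul_right (by positivity)
      (h1.trans (one_mul _).symm))
  have h1 : ∀ x, ∃ y : K, θ g x = x + 2 • y := fun x => by
    obtain ⟨y, hy⟩ := hle' (sub_mem_aug θ g x)
    exact ⟨y, eq_add_of_sub_eq' hy.symm⟩
  have h2 : T = ⊤ := by
    refine eq_top_iff.2 fun x _ => ?_
    obtain ⟨y, hy⟩ := h1 x
    obtain ⟨w, hw⟩ := h1 y
    have h3 := LinearMap.congr_fun hg x
    rw [End.mul_apply, hy, map_add, map_nsmul, hy, hw, LinearMap.neg_apply, End.one_apply] at h3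
    refine ⟨-(y + w), smul_right_injective K (r := (2 : ℤ)) two_ne_zero ?_⟩
    change (2 : ℤ) • (2 • (-(y + w))) = (2 : ℤ) • x
    have h4 : x + 2 • y + 2 • (y + 2 • w) + x = 0 := by rw [h3, neg_add_cancel]
    rw [← sub_eq_zero, ← neg_eq_zero, ← h4]
    abel
  rw [h2, AddSubgroup.index_top] at hT
  exact (Nat.one_lt_two_pow h0.ne').ne hT

theorem finrank_ne_one_of_sq_neg {f : End ℤ K} (hf : f * f = -1) : finrank ℤ K ≠ 1 := by
  intro h
  have h1 : LinearMap.det f * LinearMap.det f = -1 := by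
    have h2 : (-1 : End ℤ K) = (-1 : ℤ) • 1 := by rw [neg_one_smul]
    rw [← map_mul, hf, h2, LinearMap.det_smul, h, map_one, pow_one, mul_one]
  nlinarith [mul_self_nonneg (LinearMap.det f)]

theorem anticomm_of_sq_neg (h : ∀ g, (θ g = 1 ∨ θ g = -1) ∨ θ g * θ g = -1) {a b : G}
    (ha : θ a * θ a = -1) (hb : θ b * θ b = -1) (h1 : θ b ≠ θ a) (h2 : θ b ≠ -θ a) :
    θ b * θ a = -(θ a * θ b) := by
  have h3 : θ b = -(θ a * (θ (a * b))) := by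
    rw [map_mul, ← mul_assoc, ha, neg_one_mul, neg_neg]
  rcases h (a * b) with (h4 | h4) | h4
  · rw [h4, mul_one] at h3
    exact absurd h3 h2
  · rw [h4, mul_neg_one, neg_neg] at h3
    exact absurd h3 h1
  · rw [map_mul] at h4
    calc θ b * θ a = (θ a * θ a) * (θ b * θ a) * (θ b * θ b) := by
          rw [ha, hb, neg_one_mul, mul_neg_one, neg_neg]
      _ = θ a * (θ a * θ b * (θ a * θ b)) * θ b := by simp only [mul_assoc]
      _ = _ := by rw [h4, mul_neg_one, neg_mul]

theorem ncard_le_length {α : Type*} {s : Set α} (l : List α) (h : ∀ x ∈ s, x ∈ l) :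
    s.ncard ≤ l.length := by
  classical
  have h1 : s ⊆ l.toFinset := fun x hx => by simpa using h x hx
  refine (Set.ncard_le_ncard h1 (Finset.finite_toSet _)).trans ?_
  rw [Set.ncard_coe_finset]
  exact List.toFinset_card_le l

theorem range_ncard_le_eight (h : ∀ g, (θ g = 1 ∨ θ g = -1) ∨ θ g * θ g = -1) :
    (Set.range θ).ncard ≤ 8 := by
  by_cases ha : ∃ a, θ a ≠ 1 ∧ θ a ≠ -1
  swap
  · push Not at ha
    refine (ncard_le_length [1, -1] ?_).trans (by simp)
    rintro _ ⟨g, rfl⟩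
    by_cases h1 : θ g = 1
    · simp [h1]
    · simp [ha g h1]
  obtain ⟨a, ha1, ha2⟩ := ha
  have : Nontrivial K := by
    by_contra h
    rw [not_nontrivial_iff_subsingleton] at h
    exact ha1 (Subsingleton.elim _ _)
  have hsq : ∀ {g}, θ g ≠ 1 → θ g ≠ -1 → θ g * θ g = -1 := fun h1 h2 =>
    (h _).resolve_left (not_or.2 ⟨h1, h2⟩)
  by_cases hb : ∃ b, θ b ≠ 1 ∧ θ b ≠ -1 ∧ θ b ≠ θ a ∧ θ b ≠ -θ a
  swap
  · push Not at hb
    refine (ncard_le_length [1, -1, θ a, -θ a] ?_).trans (by simp)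
    rintro _ ⟨g, rfl⟩
    by_cases h1 : θ g = 1
    · simp [h1]
    by_cases h2 : θ g = -1
    · simp [h2]
    by_cases h3 : θ g = θ a
    · simp [h3]
    simp [hb g h1 h2 h3]
  obtain ⟨b, hb1, hb2, hb3, hb4⟩ := hb
  have ha := hsq ha1 ha2
  have hb := hsq hb1 hb2
  have hba := anticomm_of_sq_neg h ha hb hb3 hb4
  have hab : θ (a * b) * θ (a * b) = -1 := by
    calc θ (a * b) * θ (a * b) = θ a * (θ b * θ a) * θ b := by simp only [map_mul, mul_assoc]
      _ = -((θ a * θ a) * (θ b * θ b)) := by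
        rw [hba, mul_neg, neg_mul]
        simp only [mul_assoc]
      _ = -1 := by rw [ha, hb, neg_one_mul, neg_neg]
  refine (ncard_le_length [1, -1, θ a, -θ a, θ b, -θ b, θ (a * b), -θ (a * b)] ?_).trans (by simp)
  rintro _ ⟨g, rfl⟩
  by_contra hmem
  simp only [List.mem_cons, List.not_mem_nil, or_false, not_or] at hmem
  obtain ⟨h1, h2, h3, h4, h5, h6, h7, h8⟩ := hmem
  have hg := hsq h1 h2
  have hga := anticomm_of_sq_neg h ha hg h3 h4
  have hgb := anticomm_of_sq_neg h hb hg h5 h6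
  have hgab := anticomm_of_sq_neg h hab hg h7 h8
  refine rep_ne_neg (θ := θ) (a * b * g) ?_
  rw [map_mul, ← hgab, map_mul, ← mul_assoc, hga, neg_mul, mul_assoc, mul_assoc,
    hgb, mul_neg, neg_neg]

theorem augBound_of_sq_neg (h : ∀ g, (θ g = 1 ∨ θ g = -1) ∨ θ g * θ g = -1) :
    θ.ker.index * (aug θ).index ≤ 4 ^ finrank ℤ K := by
  have h1 := Nat.le_of_dvd (by positivity) (aug_index_dvd θ)
  rcases Nat.eq_zero_or_pos (finrank ℤ K) with h0 | h0
  · have := (finrank_zero_iff (R := ℤ) (M := K)).1 h0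
    rw [h0] at h1 ⊢
    rw [ker_index_eq]
    exact Nat.mul_le_mul (Set.ncard_le_one_of_subsingleton _) h1
  have hfour : 4 ^ finrank ℤ K = 2 ^ finrank ℤ K * 2 ^ finrank ℤ K := by
    rw [← mul_pow]; rfl
  by_cases hg : ∃ g, θ g * θ g = -1
  · obtain ⟨g, hg⟩ := hg
    have h2 := range_ncard_le_eight h
    rw [← ker_index_eq] at h2
    have h3 := finrank_ne_one_of_sq_neg hg
    by_cases h4 : finrank ℤ K = 2
    · have h5 := aug_index_ne_of_sq_neg h0 hg
      obtain ⟨k, hk, hk'⟩ := (Nat.dvd_prime_pow Nat.prime_two).1 (aug_index_dvd θ)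
      rw [hk'] at h5 ⊢
      have h6 : k ≤ 1 := by
        refine Nat.lt_succ_iff.1 (lt_of_le_of_ne (hk.trans_eq h4) fun h7 => h5 ?_)
        rw [h7, h4]
      rw [h4]
      exact (Nat.mul_le_mul h2 (Nat.pow_le_pow_right two_pos h6)).trans (by norm_num)
    · rw [hfour]
      refine Nat.mul_le_mul (h2.trans ?_) h1
      exact Nat.pow_le_pow_right two_pos (show 3 ≤ finrank ℤ K by omega)
  · push Not at hg
    rw [hfour]
    refine Nat.mul_le_mul ?_ h1
    rw [ker_index_eq]
    refine (ncard_le_length [1, -1] ?_).trans (Nat.le_self_pow h0.ne' 2)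
    rintro _ ⟨g, rfl⟩
    simpa using (h g).resolve_right (hg g)

theorem augBound (n : ℕ) : AugBound n := by
  induction n using Nat.strong_induction_on with
  | _ n ih =>
    intro G _ _ V _ K _ _ _ θ hV hG hn
    subst hn
    by_cases hz : ∃ z, θ z * θ z = 1 ∧ θ z ≠ 1 ∧ θ z ≠ -1
    · obtain ⟨z, hz, hz1, hz2, hconj⟩ := exists_conj_eq_or_neg V hV hG hz
      have hc : ∀ g, Commute (θ g) (θ z) ∨ θ g * θ z = -(θ z * θ g) := fun g => by
        have h1 : θ g * θ z = θ (g * z * g⁻¹) * θ g := by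
          rw [← map_mul, ← map_mul, inv_mul_cancel_right]
        rcases hconj g with h2 | h2
        · exact Or.inl (by rw [commute_iff_eq, h1, h2])
        · exact Or.inr (by rw [h1, h2, neg_mul])
      by_cases hall : ∀ g, Commute (θ g) (θ z)
      · exact augBound_of_commute V hV hG ih hz hz1 hz2 hall
      · obtain ⟨g, hg⟩ := not_forall.1 hall
        exact augBound_of_swap V hV hG ih hz hz1 hz2 hc ((hc g).resolve_left hg)
    · push Not at hz
      refine augBound_of_sq_neg fun g => ?_
      have h4 : θ (g * g) * θ (g * g) = 1 := by rw [← map_mul, hV _ (hG g), map_one]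
      have h5 := hz (g * g) h4
      rw [map_mul] at h5
      by_cases h6 : θ g * θ g = 1
      · exact Or.inl (or_iff_not_imp_left.2 (hz g h6))
      · exact Or.inr (h5 h6)

end Lattice

section Final

variable {m t : ℕ} {G : Type} [Group G] [MulAction G (Tor m t)] [Finite G] (V : Subgroup G)
  [V.Normal]

theorem card_le_of_free_action (hm : 0 < m) (hV : ∀ x ∈ V, x * x = 1)
    (hW : ∀ w : G ⧸ V, w * w = 1) (hc : ∀ g : G, Continuous fun x : Tor m t => g • x)
    (hfree : ∀ (g : G) (x : Tor m t), g • x = x → g = 1) {s : ℕ} (hs : Nat.card G = 2 ^ s) :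
    s ≤ m * t + 2 * t := by
  obtain ⟨θ, hθ⟩ := exists_rep (m := m) (t := t) hm hc
  have hI := smul_mem_invLat V hm hV hW hc hfree hθ
  have hG : ∀ g, g * g ∈ V := fun g => (QuotientGroup.eq_one_iff _).1 (hW g)
  let S := (nsmulAddMonoidHom (α := Fin t → ℤ) (2 ^ m))
  have hSinj : Function.Injective S := fun x y h => by
    refine smul_right_injective (Fin t → ℤ) (r := (2 : ℤ) ^ m) (by positivity) ?_
    simpa [S, ← natCast_zsmul] using h
  have hle : (aug θ).map S ≤ invLat m t θ.ker := by
    refine AddSubgroup.map_le_iff_le_comap.2 (aug_le (fun x => ?_) fun g x => ?_)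
    · have h1 := (hI x).1
      have h2 : S (2 • x) = (2 : ℤ) ^ (m + 1) • x := by
        change 2 ^ m • 2 • x = _
        rw [smul_smul, ← pow_succ, ← natCast_zsmul]
        norm_cast
      rwa [AddSubgroup.mem_comap, h2]
    · have h1 := (hI x).2 g
      have h2 : S (θ g x - x) = (2 : ℤ) ^ m • (θ g x - x) := by
        change 2 ^ m • (θ g x - x) = _
        rw [← natCast_zsmul]
        norm_cast
      rwa [AddSubgroup.mem_comap, h2]
  have hmap : ((aug θ).map S).index = (aug θ).index * (2 ^ m) ^ t := by
    rw [AddSubgroup.index_map_of_injective _ hSinj, AddSubgroup.index_range_nsmul,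
      Module.finrank_fin_fun]
  have hne : ((aug θ).map S).index ≠ 0 := by
    rw [hmap]
    exact mul_ne_zero (aug_index_ne_zero θ) (by positivity)
  have hdvd := AddSubgroup.index_dvd_of_le hle
  obtain ⟨k, -, hk⟩ := (Nat.dvd_prime_pow Nat.prime_two).1
    ((Subgroup.card_subgroup_dvd_card θ.ker).trans hs.dvd)
  have := Fintype.ofFinite θ.ker
  have hcard : Nat.card θ.ker ∣ (invLat m t θ.ker).index := by
    refine card_dvd_index hm (fun γ => hc γ) (fun γ x h => Subtype.ext (hfree γ x h))
      (fun γ i => ?_) hk (ne_zero_of_dvd_ne_zero hne hdvd)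
    have h1 := hθ (γ : G)⁻¹ (Pi.single i 1)
    rw [inv_inv, MonoidHom.mem_ker.1 (inv_mem γ.2), Module.End.one_apply, lin_single] at h1
    exact h1
  have h1 : Nat.card θ.ker ≤ (aug θ).index * (2 ^ m) ^ t := by
    rw [← hmap]
    exact Nat.le_of_dvd (Nat.pos_of_ne_zero hne) (hcard.trans hdvd)
  have h2 := augBound t G V _ θ hV hG (Module.finrank_fin_fun ℤ)
  have h3 : 2 ^ s ≤ 2 ^ (m * t + 2 * t) := by
    calc 2 ^ s = Nat.card θ.ker * θ.ker.index := by rw [Subgroup.card_mul_index, hs]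
      _ ≤ (aug θ).index * (2 ^ m) ^ t * θ.ker.index := Nat.mul_le_mul_right _ h1
      _ = (2 ^ m) ^ t * (θ.ker.index * (aug θ).index) := by ring
      _ ≤ (2 ^ m) ^ t * 4 ^ t := Nat.mul_le_mul_left _ h2
      _ = 2 ^ (m * t + 2 * t) := by
        rw [pow_add, pow_mul, pow_mul 2 2 t]
        norm_num
  exact (Nat.pow_le_pow_iff_right (by norm_num)).1 h3

end Final

end Coch

theorem stmt16 (m t : ℕ) (hm7 : 7 < m)
    (G : Type) [Group G] [Finite G] (V : Subgroup G) [V.Normal]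
    (hV : IsElemAbelian2 V) (hmax : IsMaximalRank2 V)
    (htV : Nat.card V = 2 ^ t)
    (hW : ∀ w : G ⧸ V, w * w = 1)
    (rW : ℕ)
    (hrW : Nat.card (G ⧸ V) = 2 ^ rW)
    -- a free continuous action of G on X = (S^m)^t
    (ρ : G → (Fin t → Sph m) → (Fin t → Sph m))
    (hρ1 : ∀ x, ρ 1 x = x)
    (hρmul : ∀ g h x, ρ (g * h) x = ρ g (ρ h x))
    (hcont : ∀ g, Continuous (ρ g))
    (hfree : ∀ g x, ρ g x = x → g = 1) :
    rW ≤ (m + 1) * t := by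
  let act : MulAction G (Coch.Tor m t) :=
    { smul := ρ
      one_smul := hρ1
      mul_smul := hρmul }
  have hcard : Nat.card G = 2 ^ (rW + t) := by
    rw [Subgroup.card_eq_card_quotient_mul_card_subgroup V, hrW, htV, pow_add]
  have h := Coch.card_le_of_free_action (m := m) (t := t) V (by omega) hV.1 hW hcont hfree hcard
  rw [add_mul, one_mul]
  omega
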